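/- arXiv:2312.11904 — 3 statements merged into one kernel-verified Lean document; each statement's English description precedes it below -/
import Mathlib

section
/- Let P, A, 𝔄 be as in the standing conventions (P a finite poset with linear extension p_1,...,p_m, A_i ⊆ [n] nonempty, 𝔄 a poset ideal of Hom(P,A)). For t ≥ 0, the minimal generating set of the t-th homological shift ideal HS_t(L(𝔄)) consists exactly of the monomials X_{p_1,K_1}⋯X_{p_m,K_m} where (1) ∅ ≠ K_i ⊆ A_i for all i; (2) max(K_i) ≤ min(K_j) whenever p_i < p_j; (3) |K_1| + ⋯ + |K_m| = m + t; and (4) the map sending p_i to max(K_i) belongs to 𝔄. -/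
open MvPolynomial

/-- A minimal multigraded free resolution of an ideal `I` in a multivariate
polynomial ring: free modules `B t →₀ R` with multidegree-labelled bases,
differentials `d t`, augmentation `ε` with image `I`, exact, with the entry of
the differential in position `(b,c)` a scalar multiple of the monomial of
multidegree `deg b - deg c` (multigradedness) which is a non-unit (minimality:
`deg t c ≠ deg (t+1) b` whenever the entry is nonzero). -/
structure MinMGFreeRes (K : Type) [Field K] (σ : Type)
    (I : Ideal (MvPolynomial σ K)) where
  B : ℕ → Type
  finB : ∀ t, Finite (B t)
  deg : (t : ℕ) → B t → (σ →₀ ℕ)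
  d : (t : ℕ) →
    ((B (t + 1)) →₀ MvPolynomial σ K) →ₗ[MvPolynomial σ K]
      ((B t) →₀ MvPolynomial σ K)
  ε : ((B 0) →₀ MvPolynomial σ K) →ₗ[MvPolynomial σ K] MvPolynomial σ K
  bounded : ∃ N, ∀ t, N ≤ t → IsEmpty (B t)
  epi : LinearMap.range ε = I
  exact0 : LinearMap.ker ε = LinearMap.range (d 0)
  exact : ∀ t, LinearMap.ker (d t) = LinearMap.range (d (t + 1))
  graded_eps : ∀ b, ε (Finsupp.single b 1) = monomial (deg 0 b) 1
  graded_d : ∀ (t : ℕ) (b : B (t + 1)) (c : B t), ∃ k : K,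
    (d t (Finsupp.single b 1)) c = monomial (deg (t + 1) b - deg t c) k ∧
      (k ≠ 0 → deg t c ≤ deg (t + 1) b ∧ deg t c ≠ deg (t + 1) b)

/-- `d` is (the exponent vector of) a minimal monomial generator of `I`. -/
def IsMinGen {K : Type} [Field K] {σ : Type} (I : Ideal (MvPolynomial σ K))
    (d : σ →₀ ℕ) : Prop :=
  (monomial d (1 : K)) ∈ I ∧
    ∀ d' : σ →₀ ℕ, d' ≤ d → (monomial d' (1 : K)) ∈ I → d' = d

/-- The exponent vectors `X_{p₁,K₁}⋯X_{pₘ,Kₘ}` described in STATEMENT 4: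
(1) `∅ ≠ Kᵢ ⊆ Aᵢ`; (2) `max Kᵢ ≤ min Kⱼ` whenever `pᵢ < pⱼ`;
(3) `|K₁|+⋯+|Kₘ| = m + t`; (4) `(max K₁, …, max Kₘ) ∈ 𝔄`. -/
def DescribedExp (m n : ℕ) (r : Fin m → Fin m → Prop)
    (A : Fin m → Finset (Fin n)) (𝔄 : Set (Fin m → Fin n)) (t : ℕ)
    (dd : Fin m × Fin n →₀ ℕ) : Prop :=
  ∃ Kf : Fin m → Finset (Fin n),
    (∀ i, Kf i ⊆ A i) ∧ (∀ i, (Kf i).Nonempty) ∧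
    (∑ i, (Kf i).card) = m + t ∧
    (∀ i j, r i j → i ≠ j → ∀ a ∈ Kf i, ∀ b ∈ Kf j, a ≤ b) ∧
    (∃ g ∈ 𝔄, ∀ i, g i ∈ Kf i ∧ ∀ a ∈ Kf i, a ≤ g i) ∧
    dd = ∑ i : Fin m, ∑ a ∈ Kf i, Finsupp.single ((i, a) : Fin m × Fin n) 1

/-! ### Part 1: filtered complexes over the field and comparison of resolutions -/

section Part1

lemma supp_map {K : Type} [Field K] {β γ : Type} {s : Set β} {u : Set γ}
    (f : (β →₀ K) →ₗ[K] (γ →₀ K))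
    (h : ∀ b ∈ s, f (Finsupp.single b 1) ∈ Finsupp.supported K K u) :
    ∀ v ∈ Finsupp.supported K K s, f v ∈ Finsupp.supported K K u := by
  intro v hv
  rw [Finsupp.supported_eq_span_single] at hv
  have : Submodule.span K ((fun i => Finsupp.single i (1 : K)) '' s) ≤
      (Finsupp.supported K K u).comap f := by
    rw [Submodule.span_le]
    rintro _ ⟨b, hb, rfl⟩
    exact h b hb
  exact this hv

lemma supp_mem {K : Type} [Field K] {β M : Type} [AddCommGroup M] [Module K M] {s : Set β}
    (f : (β →₀ K) →ₗ[K] M) (W : Submodule K M)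
    (h : ∀ b ∈ s, f (Finsupp.single b 1) ∈ W) :
    ∀ v ∈ Finsupp.supported K K s, f v ∈ W := by
  intro v hv
  rw [Finsupp.supported_eq_span_single] at hv
  have : Submodule.span K ((fun i => Finsupp.single i (1 : K)) '' s) ≤ W.comap f := by
    rw [Submodule.span_le]
    rintro _ ⟨b, hb, rfl⟩
    exact h b hb
  exact this hv

lemma supp_ext {K : Type} [Field K] {β M : Type} [AddCommGroup M] [Module K M] {s : Set β}
    (f g : (β →₀ K) →ₗ[K] M)
    (h : ∀ b ∈ s, f (Finsupp.single b 1) = g (Finsupp.single b 1)) :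
    ∀ v ∈ Finsupp.supported K K s, f v = g v := by
  intro v hv
  have := supp_mem (f - g) ⊥ (s := s) (by
    intro b hb
    simp [h b hb]) v hv
  simpa [sub_eq_zero] using this

lemma build_map {K : Type} [Field K] {β M : Type} [AddCommGroup M] [Module K M] {s : Set β}
    (Q : β → M → Prop) (h : ∀ b ∈ s, ∃ y, Q b y) :
    ∃ f : (β →₀ K) →ₗ[K] M, ∀ b ∈ s, Q b (f (Finsupp.single b 1)) := by
  classical
  refine ⟨Finsupp.linearCombination K (fun b => if hb : b ∈ s then (h b hb).choose else 0), ?_⟩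
  intro b hb
  simp only [Finsupp.linearCombination_single, one_smul, dif_pos hb]
  exact (h b hb).choose_spec

/-- the sum of the coefficients -/
noncomputable def sumc (K : Type) [Field K] (β : Type) : (β →₀ K) →ₗ[K] K :=
  Finsupp.linearCombination K (fun _ => (1 : K))

lemma sumc_single {K : Type} [Field K] {β : Type} (b : β) (k : K) :
    sumc K β (Finsupp.single b k) = k := by
  simp [sumc]

/-- A frame: the dehomogenization of a complex of multigraded free modules. -/
structure Fr (K : Type) [Field K] (σ : Type) where
  B : ℕ → Type
  ok : ∀ t, Set (B t)
  deg : ∀ t, B t → (σ →₀ ℕ)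
  D : ∀ t, (B (t + 1) →₀ K) →ₗ[K] (B t →₀ K)

variable {K : Type} [Field K] {σ : Type}

/-- the part in degree `α` -/
def Fr.V (F : Fr K σ) (t : ℕ) (α : σ →₀ ℕ) : Submodule K (F.B t →₀ K) :=
  Finsupp.supported K K {b | b ∈ F.ok t ∧ F.deg t b ≤ α}

/-- cycles -/
noncomputable def Fr.Z (F : Fr K σ) : (t : ℕ) → Submodule K (F.B t →₀ K)
  | 0 => LinearMap.ker (sumc K (F.B 0))
  | t + 1 => LinearMap.ker (F.D t)

/-- the frame is a resolution -/
structure Fr.IsRes (F : Fr K σ) : Prop where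
  filt : ∀ t, ∀ b ∈ F.ok (t + 1), F.D t (Finsupp.single b 1) ∈ F.V t (F.deg (t + 1) b)
  cyc : ∀ t, ∀ b ∈ F.ok (t + 1), F.D t (Finsupp.single b 1) ∈ F.Z t
  ex : ∀ t α, ∀ v ∈ F.V t α, v ∈ F.Z t → ∃ w ∈ F.V (t + 1) α, F.D t w = v

/-- minimality -/
def Fr.IsMin (F : Fr K σ) : Prop :=
  ∀ t, ∀ b ∈ F.ok (t + 1), ∀ c, F.D t (Finsupp.single b 1) c ≠ 0 → F.deg t c ≠ F.deg (t + 1) b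

lemma Fr.V_mono (F : Fr K σ) (t : ℕ) {α β : σ →₀ ℕ} (h : α ≤ β) : F.V t α ≤ F.V t β :=
  Finsupp.supported_mono fun _ hb => ⟨hb.1, hb.2.trans h⟩

lemma Fr.V_ok (F : Fr K σ) (t : ℕ) (α : σ →₀ ℕ) :
    F.V t α ≤ Finsupp.supported K K (F.ok t) :=
  Finsupp.supported_mono fun _ hb => hb.1

lemma Fr.single_V (F : Fr K σ) (t : ℕ) {b : F.B t} (hb : b ∈ F.ok t) :
    Finsupp.single b (1 : K) ∈ F.V t (F.deg t b) :=
  Finsupp.single_mem_supported K 1 ⟨hb, le_rfl⟩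

lemma Fr.single_ok (F : Fr K σ) (t : ℕ) {b : F.B t} (hb : b ∈ F.ok t) :
    Finsupp.single b (1 : K) ∈ Finsupp.supported K K (F.ok t) :=
  Finsupp.single_mem_supported K 1 hb

lemma Fr.map_V (F G : Fr K σ) (t t' : ℕ) (f : (F.B t →₀ K) →ₗ[K] (G.B t' →₀ K))
    (hf : ∀ b ∈ F.ok t, f (Finsupp.single b 1) ∈ G.V t' (F.deg t b)) (α : σ →₀ ℕ) :
    ∀ v ∈ F.V t α, f v ∈ G.V t' α :=
  supp_map f fun b hb => G.V_mono t' hb.2 (hf b hb.1)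

/-- a filtered map applied to something in degrees strictly below has no coefficient -/
lemma Fr.coef_zero (F G : Fr K σ) (t t' : ℕ) (f : (F.B t →₀ K) →ₗ[K] (G.B t' →₀ K))
    (hf : ∀ b ∈ F.ok t, f (Finsupp.single b 1) ∈ G.V t' (F.deg t b)) (c : G.B t')
    (v : F.B t →₀ K) (hv : v ∈ F.V t (G.deg t' c))
    (hv' : ∀ b, v b ≠ 0 → F.deg t b ≠ G.deg t' c) : (f v) c = 0 := by
  have h1 : v ∈ Finsupp.supported K K
      {b | b ∈ F.ok t ∧ F.deg t b ≤ G.deg t' c ∧ F.deg t b ≠ G.deg t' c} := by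
    rw [Finsupp.mem_supported]
    intro b hb
    have h2 := (Finsupp.mem_supported K v).1 hv hb
    exact ⟨h2.1, h2.2, hv' b (by simpa using hb)⟩
  have h3 := supp_mem (Finsupp.lapply c ∘ₗ f) (⊥ : Submodule K K) (by
    rintro b ⟨hb1, hb2, hb3⟩
    simp only [LinearMap.comp_apply, Finsupp.lapply_apply, Submodule.mem_bot]
    by_contra hne
    have h4 := (Finsupp.mem_supported K _).1 (hf b hb1) (by simpa using hne : c ∈ _)
    exact hb3 (le_antisymm hb2 h4.2)) v h1
  simpa using h3

lemma Fr.coef_D (F : Fr K σ) (hF : F.IsRes) (hm : F.IsMin) (t : ℕ) (b : F.B t)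
    (w : F.B (t + 1) →₀ K) (hw : w ∈ F.V (t + 1) (F.deg t b)) : (F.D t w) b = 0 := by
  have h3 := supp_mem (Finsupp.lapply b ∘ₗ F.D t) (⊥ : Submodule K K) (by
    rintro c ⟨hc1, hc2⟩
    simp only [LinearMap.comp_apply, Finsupp.lapply_apply, Submodule.mem_bot]
    by_contra hne
    have h4 := (Finsupp.mem_supported K _).1 (hF.filt t c hc1) (by simpa using hne : b ∈ _)
    exact hm t c hc1 b hne (le_antisymm h4.2 hc2)) w hw
  simpa using h3

/-- lifting one step -/
lemma Fr.lift_step (F G : Fr K σ) (hF : F.IsRes) (hG : G.IsRes) (t : ℕ)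
    (φ : (F.B t →₀ K) →ₗ[K] (G.B t →₀ K))
    (h1 : ∀ b ∈ F.ok t, φ (Finsupp.single b 1) ∈ G.V t (F.deg t b))
    (h2 : ∀ v ∈ Finsupp.supported K K (F.ok t), v ∈ F.Z t → φ v ∈ G.Z t) :
    ∃ φ' : (F.B (t + 1) →₀ K) →ₗ[K] (G.B (t + 1) →₀ K),
      (∀ b ∈ F.ok (t + 1), φ' (Finsupp.single b 1) ∈ G.V (t + 1) (F.deg (t + 1) b)) ∧
      (∀ v ∈ Finsupp.supported K K (F.ok (t + 1)), G.D t (φ' v) = φ (F.D t v)) ∧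
      (∀ v ∈ Finsupp.supported K K (F.ok (t + 1)), v ∈ F.Z (t + 1) → φ' v ∈ G.Z (t + 1)) := by
  obtain ⟨φ', hφ'⟩ := build_map (K := K) (s := F.ok (t + 1))
    (fun b y => y ∈ G.V (t + 1) (F.deg (t + 1) b) ∧ G.D t y = φ (F.D t (Finsupp.single b 1)))
    (by
      intro b hb
      exact hG.ex t _ _ (F.map_V G t t φ h1 _ _ (hF.filt t b hb))
        (h2 _ (F.V_ok _ _ (hF.filt t b hb)) (hF.cyc t b hb)))
  have h3 : ∀ v ∈ Finsupp.supported K K (F.ok (t + 1)), G.D t (φ' v) = φ (F.D t v) :=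
    supp_ext (G.D t ∘ₗ φ') (φ ∘ₗ F.D t) fun b hb => (hφ' b hb).2
  refine ⟨φ', fun b hb => (hφ' b hb).1, h3, ?_⟩
  intro v hv hz
  have hz' : F.D t v = 0 := hz
  change G.D t (φ' v) = 0
  rw [h3 v hv, hz', map_zero]

lemma Fr.lift_zero (F G : Fr K σ)
    (h : ∀ b ∈ F.ok 0, ∃ c ∈ G.ok 0, G.deg 0 c ≤ F.deg 0 b) :
    ∃ φ : (F.B 0 →₀ K) →ₗ[K] (G.B 0 →₀ K),
      (∀ b ∈ F.ok 0, φ (Finsupp.single b 1) ∈ G.V 0 (F.deg 0 b)) ∧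
      (∀ v ∈ Finsupp.supported K K (F.ok 0), sumc K _ (φ v) = sumc K _ v) := by
  obtain ⟨φ, hφ⟩ := build_map (K := K) (s := F.ok 0)
    (fun b y => y ∈ G.V 0 (F.deg 0 b) ∧ sumc K _ y = 1)
    (by
      intro b hb
      obtain ⟨c, hc, hle⟩ := h b hb
      exact ⟨Finsupp.single c 1, G.V_mono 0 hle (G.single_V 0 hc), sumc_single _ _⟩)
  refine ⟨φ, fun b hb => (hφ b hb).1, ?_⟩
  exact supp_ext (sumc K _ ∘ₗ φ) (sumc K _) fun b hb => by
    rw [sumc_single]; exact (hφ b hb).2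

lemma Fr.compare_aux (F G : Fr K σ) (hF : F.IsRes) (hG : G.IsRes) (hm : F.IsMin)
    (h1 : ∀ b ∈ F.ok 0, ∃ c ∈ G.ok 0, G.deg 0 c ≤ F.deg 0 b)
    (h2 : ∀ b ∈ G.ok 0, ∃ c ∈ F.ok 0, F.deg 0 c ≤ G.deg 0 b) (t : ℕ) :
    ∃ (φ : (F.B t →₀ K) →ₗ[K] (G.B t →₀ K)) (ψ : (G.B t →₀ K) →ₗ[K] (F.B t →₀ K))
      (s : (F.B t →₀ K) →ₗ[K] (F.B (t + 1) →₀ K)),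
      (∀ b ∈ F.ok t, φ (Finsupp.single b 1) ∈ G.V t (F.deg t b)) ∧
      (∀ v ∈ Finsupp.supported K K (F.ok t), v ∈ F.Z t → φ v ∈ G.Z t) ∧
      (∀ b ∈ G.ok t, ψ (Finsupp.single b 1) ∈ F.V t (G.deg t b)) ∧
      (∀ v ∈ Finsupp.supported K K (G.ok t), v ∈ G.Z t → ψ v ∈ F.Z t) ∧
      (∀ b ∈ F.ok t, s (Finsupp.single b 1) ∈ F.V (t + 1) (F.deg t b)) ∧
      (∀ v ∈ Finsupp.supported K K (F.ok t), v ∈ F.Z t → F.D t (s v) = ψ (φ v) - v) ∧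
      (∀ b ∈ F.ok t, (ψ (φ (Finsupp.single b 1))) b = 1) := by
  induction t with
  | zero =>
    obtain ⟨φ, a1, a2⟩ := F.lift_zero G h1
    obtain ⟨ψ, b1, b2⟩ := G.lift_zero F h2
    have c0 : ∀ b ∈ F.ok 0, ψ (φ (Finsupp.single b 1)) - Finsupp.single b 1 ∈ F.V 0 (F.deg 0 b) :=
      fun b hb => Submodule.sub_mem _ (G.map_V F 0 0 ψ b1 _ _ (a1 b hb)) (F.single_V 0 hb)
    obtain ⟨s, hs⟩ := build_map (K := K) (s := F.ok 0)
      (fun b y => y ∈ F.V 1 (F.deg 0 b) ∧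
        F.D 0 y = ψ (φ (Finsupp.single b 1)) - Finsupp.single b 1)
      (by
        intro b hb
        refine hF.ex 0 _ _ (c0 b hb) ?_
        change sumc K _ _ = 0
        rw [map_sub, b2 _ (G.V_ok _ _ (a1 b hb)), a2 _ (F.single_ok 0 hb), sub_self])
    have c1 : ∀ v ∈ Finsupp.supported K K (F.ok 0), F.D 0 (s v) = ψ (φ v) - v :=
      supp_ext (F.D 0 ∘ₗ s) (ψ ∘ₗ φ - LinearMap.id) fun b hb => (hs b hb).2
    refine ⟨φ, ψ, s, a1, ?_, b1, ?_, fun b hb => (hs b hb).1, fun v hv _ => c1 v hv, ?_⟩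
    · intro v hv hz
      have hz' : sumc K _ v = 0 := hz
      change sumc K _ _ = 0
      rw [a2 v hv, hz']
    · intro v hv hz
      have hz' : sumc K _ v = 0 := hz
      change sumc K _ _ = 0
      rw [b2 v hv, hz']
    · intro b hb
      have h5 := F.coef_D hF hm 0 b _ (hs b hb).1
      rw [(hs b hb).2] at h5
      simpa [sub_eq_zero] using h5
  | succ t ih =>
    obtain ⟨φ, ψ, s, a1, a2, b1, b2, c1, c2, -⟩ := ih
    obtain ⟨φ', a1', a3, a2'⟩ := F.lift_step G hF hG t φ a1 a2
    obtain ⟨ψ', b1', b3, b2'⟩ := G.lift_step F hG hF t ψ b1 b2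
    have ph : ∀ v ∈ Finsupp.supported K K (F.ok (t + 1)),
        φ' v ∈ Finsupp.supported K K (G.ok (t + 1)) :=
      supp_map φ' fun b hb => G.V_ok _ _ (a1' b hb)
    have sD : ∀ b ∈ F.ok (t + 1), s (F.D t (Finsupp.single b 1)) ∈ F.V (t + 1) (F.deg (t + 1) b) :=
      fun b hb => F.map_V F t (t + 1) s c1 _ _ (hF.filt t b hb)
    obtain ⟨s', hs'⟩ := build_map (K := K) (s := F.ok (t + 1))
      (fun b y => y ∈ F.V (t + 1 + 1) (F.deg (t + 1) b) ∧
        F.D (t + 1) y = ψ' (φ' (Finsupp.single b 1)) - Finsupp.single b 1 -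
          s (F.D t (Finsupp.single b 1)))
      (by
        intro b hb
        refine hF.ex (t + 1) _ _ ?_ ?_
        · exact Submodule.sub_mem _ (Submodule.sub_mem _
            (G.map_V F _ _ ψ' b1' _ _ (a1' b hb)) (F.single_V _ hb)) (sD b hb)
        · change F.D t _ = 0
          rw [map_sub, map_sub, b3 _ (G.V_ok _ _ (a1' b hb)), a3 _ (F.single_ok _ hb),
            c2 _ (F.V_ok _ _ (hF.filt t b hb)) (hF.cyc t b hb), sub_self])
    have c3 : ∀ v ∈ Finsupp.supported K K (F.ok (t + 1)),
        F.D (t + 1) (s' v) = ψ' (φ' v) - v - s (F.D t v) :=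
      supp_ext (F.D (t + 1) ∘ₗ s') (ψ' ∘ₗ φ' - LinearMap.id - s ∘ₗ F.D t)
        fun b hb => (hs' b hb).2
    refine ⟨φ', ψ', s', a1', a2', b1', b2', fun b hb => (hs' b hb).1, ?_, ?_⟩
    · intro v hv hz
      have hz' : F.D t v = 0 := hz
      rw [c3 v hv, hz', map_zero, sub_zero]
    · intro b hb
      have h5 := F.coef_D hF hm (t + 1) b _ (hs' b hb).1
      have h6 := F.coef_zero F t (t + 1) s c1 b (F.D t (Finsupp.single b 1)) (hF.filt t b hb)
        (hm t b hb)
      rw [(hs' b hb).2] at h5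
      simpa [sub_eq_zero, h6] using h5

theorem Fr.compare (F G : Fr K σ) (hF : F.IsRes) (hG : G.IsRes) (hm : F.IsMin)
    (h1 : ∀ b ∈ F.ok 0, ∃ c ∈ G.ok 0, G.deg 0 c ≤ F.deg 0 b)
    (h2 : ∀ b ∈ G.ok 0, ∃ c ∈ F.ok 0, F.deg 0 c ≤ G.deg 0 b) (t : ℕ)
    (b : F.B t) (hb : b ∈ F.ok t) : ∃ c ∈ G.ok t, G.deg t c = F.deg t b := by
  obtain ⟨φ, ψ, s, a1, a2, b1, b2, c1, c2, c3⟩ := F.compare_aux G hF hG hm h1 h2 t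
  by_contra hne
  push Not at hne
  have h := c3 b hb
  rw [G.coef_zero F t t ψ b1 b (φ (Finsupp.single b 1)) (a1 b hb)] at h
  · exact zero_ne_one h
  · intro c hc
    exact hne c ((Finsupp.mem_supported K _).1 (a1 b hb) (by simpa using hc : c ∈ _)).1

end Part1

/-! ### Part 2: the frame of a minimal multigraded free resolution -/

section Part2

variable {K : Type} [Field K] {σ : Type} {I : Ideal (MvPolynomial σ K)}

/-- dehomogenization -/
noncomputable def dehom (K : Type) [Field K] (σ β : Type) :
    (β →₀ MvPolynomial σ K) →+ (β →₀ K) :=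
  Finsupp.mapRange.addMonoidHom (MvPolynomial.eval (fun _ : σ => (1 : K))).toAddMonoidHom

lemma dehom_apply {β : Type} (x : β →₀ MvPolynomial σ K) (b : β) :
    dehom K σ β x b = MvPolynomial.eval (fun _ : σ => (1 : K)) (x b) := by
  simp [dehom]

lemma eval_one_monomial (a : σ →₀ ℕ) (k : K) :
    MvPolynomial.eval (fun _ : σ => (1 : K)) (monomial a k) = k := by
  simp [MvPolynomial.eval_monomial]

/-- the dehomogenized differential -/
noncomputable def resD (R : MinMGFreeRes K σ I) (t : ℕ) :
    (R.B (t + 1) →₀ K) →ₗ[K] (R.B t →₀ K) :=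
  Finsupp.linearCombination K (fun b => dehom K σ (R.B t) (R.d t (Finsupp.single b 1)))

/-- the frame -/
noncomputable abbrev MinMGFreeRes.toFr (R : MinMGFreeRes K σ I) : Fr K σ where
  B := R.B
  ok := fun _ => Set.univ
  deg := R.deg
  D := resD R

lemma toFr_D_single (R : MinMGFreeRes K σ I) (t : ℕ) (b : R.B (t + 1)) (k : K) :
    resD R t (Finsupp.single b k) = k • dehom K σ (R.B t) (R.d t (Finsupp.single b 1)) := by
  exact Finsupp.linearCombination_single K k b

lemma toFr_entry (R : MinMGFreeRes K σ I) (t : ℕ) (b : R.B (t + 1)) (c : R.B t) :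
    (R.d t (Finsupp.single b 1)) c =
        monomial (R.deg (t + 1) b - R.deg t c) (resD R t (Finsupp.single b 1) c) ∧
      (resD R t (Finsupp.single b 1) c ≠ 0 →
        R.deg t c ≤ R.deg (t + 1) b ∧ R.deg t c ≠ R.deg (t + 1) b) := by
  obtain ⟨k, hk, hk'⟩ := R.graded_d t b c
  have : resD R t (Finsupp.single b 1) c = k := by
    rw [toFr_D_single, one_smul]
    refine (dehom_apply _ _).trans ?_
    rw [hk, eval_one_monomial]
  rw [this]
  exact ⟨hk, hk'⟩

lemma dehom_d (R : MinMGFreeRes K σ I) (t : ℕ) (x : R.B (t + 1) →₀ MvPolynomial σ K) :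
    dehom K σ (R.B t) (R.d t x) = resD R t (dehom K σ (R.B (t + 1)) x) := by
  induction x using Finsupp.induction_linear with
  | zero => simp only [map_zero]
  | add x y hx hy =>
    simp only [map_add, hx, hy]
  | single b p =>
    have h1 : Finsupp.single b p = p • Finsupp.single b (1 : MvPolynomial σ K) := by simp
    have h2 : dehom K σ (R.B (t + 1)) (Finsupp.single b p) =
        Finsupp.single b (MvPolynomial.eval (fun _ : σ => (1 : K)) p) := by
      simp [dehom]
    rw [h2]
    refine Eq.trans ?_ (toFr_D_single R t b _).symm
    rw [h1, map_smul]
    ext c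
    simp [dehom_apply]

lemma sumc_dehom (R : MinMGFreeRes K σ I) (x : R.B 0 →₀ MvPolynomial σ K) :
    MvPolynomial.eval (fun _ : σ => (1 : K)) (R.ε x) = sumc K _ (dehom K σ (R.B 0) x) := by
  induction x using Finsupp.induction_linear with
  | zero => simp
  | add x y hx hy => simp [hx, hy]
  | single b p =>
    have h1 : Finsupp.single b p = p • Finsupp.single b (1 : MvPolynomial σ K) := by simp
    have h2 : dehom K σ (R.B 0) (Finsupp.single b p) =
        Finsupp.single b (MvPolynomial.eval (fun _ : σ => (1 : K)) p) := by
      simp [dehom]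
    rw [h2, sumc_single, h1, map_smul, R.graded_eps, smul_eq_mul, map_mul, eval_one_monomial,
      mul_one]

open Classical in
/-- homogeneous component of degree `α` -/
noncomputable def hcomp (K : Type) [Field K] {σ β : Type} (deg : β → (σ →₀ ℕ)) (α : σ →₀ ℕ) :
    (β →₀ MvPolynomial σ K) →+ (β →₀ K) :=
  Finsupp.liftAddHom (fun b => if deg b ≤ α then
    (Finsupp.singleAddHom b).comp (MvPolynomial.coeffAddMonoidHom (α - deg b)) else 0)

open Classical in
lemma hcomp_apply {β : Type} (deg : β → (σ →₀ ℕ)) (α : σ →₀ ℕ) (x : β →₀ MvPolynomial σ K)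
    (c : β) : hcomp K deg α x c = if deg c ≤ α then MvPolynomial.coeff (α - deg c) (x c) else 0 := by
  induction x using Finsupp.induction_linear with
  | zero => simp
  | add x y hx hy => simp only [map_add, Finsupp.add_apply, hx, hy]; split_ifs <;> simp
  | single b p =>
    simp only [hcomp, Finsupp.liftAddHom_apply_single]
    by_cases hb : b = c
    · subst hb
      split_ifs <;> simp
    · split_ifs <;> simp [hb]

lemma hcomp_d (R : MinMGFreeRes K σ I) (t : ℕ) (α : σ →₀ ℕ)
    (x : R.B (t + 1) →₀ MvPolynomial σ K) :
    hcomp K (R.deg t) α (R.d t x) = resD R t (hcomp K (R.deg (t + 1)) α x) := by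
  induction x using Finsupp.induction_linear with
  | zero => simp only [map_zero]
  | add x y hx hy =>
    simp only [map_add, hx, hy]
  | single b p =>
    induction p using MvPolynomial.induction_on' with
    | add p q hp hq =>
      rw [Finsupp.single_add]
      simp only [map_add, hp, hq]
    | monomial β k =>
      have h1 : Finsupp.single b (monomial β k) =
        (monomial β k) • Finsupp.single b (1 : MvPolynomial σ K) := by simp
      classical
      have h2 : hcomp K (R.deg (t + 1)) α (Finsupp.single b (monomial β k)) =
          Finsupp.single b (if β + R.deg (t + 1) b = α then k else 0) := by
        ext c
        rw [hcomp_apply]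
        by_cases hb : b = c
        · subst hb
          simp only [Finsupp.single_eq_same, MvPolynomial.coeff_monomial]
          by_cases h3 : β + R.deg (t + 1) b = α
          · subst h3
            simp
          · rw [if_neg h3]
            split_ifs with h4 h5
            · exact absurd (by rw [h5, tsub_add_cancel_of_le h4]) h3
            · rfl
            · rfl
        · simp [hb]
      rw [h2]
      refine Eq.trans ?_ (toFr_D_single R t b _).symm
      have h3 : dehom K σ (R.B t) (R.d t (Finsupp.single b 1)) =
          resD R t (Finsupp.single b 1) := by
        refine Eq.trans ?_ (toFr_D_single R t b _).symm
        rw [one_smul]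
      rw [h3, h1, map_smul]
      ext c
      obtain ⟨e1, e2⟩ := toFr_entry R t b c
      rw [hcomp_apply, Finsupp.smul_apply, e1, smul_eq_mul, MvPolynomial.monomial_mul,
        MvPolynomial.coeff_monomial]
      refine Eq.trans ?_ (Finsupp.smul_apply _ _ _).symm
      by_cases hz : resD R t (Finsupp.single b 1) c = 0
      · rw [hz]; simp
      · have hle := (e2 hz).1
        by_cases h3 : β + R.deg (t + 1) b = α
        · subst h3
          rw [if_pos (hle.trans le_add_self), if_pos, if_pos rfl, smul_eq_mul]
          rw [add_tsub_assoc_of_le hle]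
        · rw [if_neg h3, zero_smul]
          split_ifs with h4 h5
          · exfalso
            apply h3
            rw [← add_tsub_assoc_of_le hle] at h5
            have := congrArg (· + R.deg t c) h5
            beta_reduce at this
            rwa [tsub_add_cancel_of_le h4, tsub_add_cancel_of_le (hle.trans le_add_self)] at this
          · rfl
          · rfl

/-- homogenization -/
noncomputable def homog (K : Type) [Field K] {σ β : Type} (deg : β → (σ →₀ ℕ)) (α : σ →₀ ℕ) :
    (β →₀ K) →ₗ[K] (β →₀ MvPolynomial σ K) :=
  Finsupp.linearCombination K (fun b => Finsupp.single b (monomial (α - deg b) (1 : K)))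

lemma homog_single {β : Type} (deg : β → (σ →₀ ℕ)) (α : σ →₀ ℕ) (b : β) (k : K) :
    homog K deg α (Finsupp.single b k) = Finsupp.single b (monomial (α - deg b) k) := by
  simp [homog, MvPolynomial.smul_monomial]

lemma homog_apply {β : Type} (deg : β → (σ →₀ ℕ)) (α : σ →₀ ℕ) (v : β →₀ K) (b : β) :
    homog K deg α v b = monomial (α - deg b) (v b) := by
  induction v using Finsupp.induction_linear with
  | zero => simp
  | add x y hx hy => simp [hx, hy]
  | single c k =>
    rw [homog_single]
    by_cases hb : c = b
    · subst hb; simp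
    · simp [hb]

lemma hcomp_homog {β : Type} (deg : β → (σ →₀ ℕ)) (α : σ →₀ ℕ) (v : β →₀ K)
    (hv : ∀ b, v b ≠ 0 → deg b ≤ α) : hcomp K deg α (homog K deg α v) = v := by
  classical
  ext b
  rw [hcomp_apply, homog_apply]
  by_cases h : v b = 0
  · simp [h]
  · simp [hv b h]

lemma toFr_mem_V (R : MinMGFreeRes K σ I) (t : ℕ) (α : σ →₀ ℕ) (v : R.B t →₀ K) :
    v ∈ R.toFr.V t α ↔ ∀ b, v b ≠ 0 → R.deg t b ≤ α := by
  change v ∈ Finsupp.supported K K {b : R.B t | b ∈ Set.univ ∧ R.deg t b ≤ α} ↔ _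
  rw [Finsupp.mem_supported]
  constructor
  · intro h b hb
    exact (h (by simpa using hb)).2
  · intro h b hb
    exact ⟨trivial, h b (by simpa using hb)⟩

lemma d_homog (R : MinMGFreeRes K σ I) (t : ℕ) (α : σ →₀ ℕ) (v : R.B (t + 1) →₀ K)
    (hv : v ∈ R.toFr.V (t + 1) α) :
    R.d t (homog K (R.deg (t + 1)) α v) = homog K (R.deg t) α (resD R t v) := by
  refine supp_ext ((R.d t).restrictScalars K ∘ₗ homog K (R.deg (t + 1)) α)
    (homog K (R.deg t) α ∘ₗ resD R t) ?_ v hv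
  rintro b ⟨-, hb⟩
  have hb' : R.deg (t + 1) b ≤ α := hb
  simp only [LinearMap.comp_apply, LinearMap.restrictScalars_apply]
  ext1 c
  refine Eq.trans ?_ (homog_apply _ _ _ _).symm
  have h1 : homog K (R.deg (t + 1)) α (Finsupp.single b (1 : K)) =
      (monomial (α - R.deg (t + 1) b) (1 : K)) • Finsupp.single b (1 : MvPolynomial σ K) := by
    rw [homog_single]; simp
  obtain ⟨e1, e2⟩ := toFr_entry R t b c
  refine (congrArg (fun z => R.d t z c) h1).trans ?_
  simp only [map_smul, Finsupp.smul_apply, e1, smul_eq_mul, MvPolynomial.monomial_mul, one_mul]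
  by_cases hz : resD R t (Finsupp.single b 1) c = 0
  · simp [hz]
  · rw [tsub_add_tsub_cancel hb' (e2 hz).1]

lemma eps_homog (R : MinMGFreeRes K σ I) (α : σ →₀ ℕ) (v : R.B 0 →₀ K)
    (hv : v ∈ R.toFr.V 0 α) :
    R.ε (homog K (R.deg 0) α v) = monomial α (sumc K _ v) := by
  refine supp_ext (R.ε.restrictScalars K ∘ₗ homog K (R.deg 0) α)
    ((monomial α) ∘ₗ sumc K _) ?_ v hv
  rintro b ⟨-, hb⟩
  have hb' : R.deg 0 b ≤ α := hb
  have h1 : homog K (R.deg 0) α (Finsupp.single b (1 : K)) =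
      (monomial (α - R.deg 0 b) (1 : K)) • Finsupp.single b (1 : MvPolynomial σ K) := by
    rw [homog_single]; simp
  simp only [LinearMap.comp_apply, LinearMap.restrictScalars_apply]
  refine (congrArg (fun z => R.ε z) h1).trans ?_
  rw [sumc_single]
  simp only [map_smul, R.graded_eps, smul_eq_mul, MvPolynomial.monomial_mul, one_mul]
  rw [tsub_add_cancel_of_le hb']

lemma toFr_isMin (R : MinMGFreeRes K σ I) : R.toFr.IsMin := by
  intro t b _ c hc
  exact ((toFr_entry R t b c).2 hc).2

lemma toFr_isRes (R : MinMGFreeRes K σ I) : R.toFr.IsRes where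
  filt := by
    intro t b _
    refine (toFr_mem_V R t _ _).2 ?_
    intro c hc
    exact ((toFr_entry R t b c).2 hc).1
  cyc := by
    intro t b _
    have h3 : resD R t (Finsupp.single b 1) =
        dehom K σ (R.B t) (R.d t (Finsupp.single b 1)) := by
      refine (toFr_D_single R t b _).trans ?_
      rw [one_smul]
    rw [h3]
    cases t with
    | zero =>
      change sumc K _ _ = 0
      refine (sumc_dehom R _).symm.trans ?_
      have : R.d 0 (Finsupp.single b 1) ∈ LinearMap.ker R.ε := by
        rw [R.exact0]; exact ⟨_, rfl⟩
      rw [LinearMap.mem_ker.1 this, map_zero]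
    | succ t =>
      change resD R t _ = 0
      refine (dehom_d R t _).symm.trans ?_
      have : R.d (t + 1) (Finsupp.single b 1) ∈ LinearMap.ker (R.d t) := by
        rw [R.exact]; exact ⟨_, rfl⟩
      rw [LinearMap.mem_ker.1 this, map_zero]
  ex := by
    intro t α v hv hz
    have hv' := (toFr_mem_V R t α v).1 hv
    have key : ∃ y, R.d t y = homog K (R.deg t) α v := by
      cases t with
      | zero =>
        have hz' : sumc K _ v = 0 := hz
        have : homog K (R.deg 0) α v ∈ LinearMap.ker R.ε := by
          rw [LinearMap.mem_ker, eps_homog R α v hv]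
          refine (congrArg (monomial α) hz').trans (map_zero _)
        rw [R.exact0] at this
        exact this
      | succ t =>
        have hz' : resD R t v = 0 := hz
        have : homog K (R.deg (t + 1)) α v ∈ LinearMap.ker (R.d t) := by
          rw [LinearMap.mem_ker, d_homog R t α v hv, hz']
          exact map_zero _
        rw [R.exact] at this
        exact this
    obtain ⟨y, hy⟩ := key
    refine ⟨hcomp K (R.deg (t + 1)) α y, (toFr_mem_V R _ _ _).2 ?_, ?_⟩
    · intro b hb
      classical
      rw [hcomp_apply] at hb
      by_contra h
      rw [if_neg h] at hb
      exact hb rfl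
    · rw [← hcomp_d, hy]
      exact hcomp_homog _ _ _ hv'

end Part2

/-! ### Part 3: relative Koszul-type complexes -/

section Part3

variable {K : Type} [Field K] {σ : Type} [DecidableEq σ]

/-- Koszul sign -/
def sg (K : Type) [Field K] (key : σ → ℕ) (x : σ) (S : Finset σ) : K :=
  (-1) ^ (S.filter (fun y => key y < key x)).card

lemma sg_mul_self (key : σ → ℕ) (x : σ) (S : Finset σ) : sg K key x S * sg K key x S = 1 := by
  unfold sg
  rw [← pow_add, ← two_mul, pow_mul]
  simp

lemma sg_erase (key : σ → ℕ) (x y : σ) (S : Finset σ) (hx : x ∈ S) :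
    sg K key y (S.erase x) = if key x < key y then - sg K key y S else sg K key y S := by
  unfold sg
  rw [Finset.filter_erase]
  split_ifs with h
  · have hm : x ∈ S.filter (fun z => key z < key y) := by simp [hx, h]
    rw [← Finset.card_erase_add_one hm, pow_succ]
    ring
  · rw [Finset.erase_eq_of_notMem]
    simp [h]

lemma sg_erase_self (key : σ → ℕ) (x : σ) (S : Finset σ) (hx : x ∈ S) :
    sg K key x (S.erase x) = sg K key x S := by
  rw [sg_erase key x x S hx, if_neg (lt_irrefl _)]

lemma sg_insert_self (key : σ → ℕ) (x : σ) (S : Finset σ) (hx : x ∉ S) :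
    sg K key x (insert x S) = sg K key x S := by
  rw [← sg_erase_self key x (insert x S) (Finset.mem_insert_self _ _), Finset.erase_insert hx]

lemma sg_swap (key : σ → ℕ) (hkey : Function.Injective key) (x y : σ) (S : Finset σ)
    (hx : x ∈ S) (hy : y ∈ S) (hne : x ≠ y) :
    sg K key x S * sg K key y (S.erase x) = - (sg K key y S * sg K key x (S.erase y)) := by
  rw [sg_erase key x y S hx, sg_erase key y x S hy]
  have : key x ≠ key y := fun h => hne (hkey h)
  rcases lt_or_gt_of_ne this with h | h
  · rw [if_pos h, if_neg (not_lt.2 h.le)]; ring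
  · rw [if_neg (not_lt.2 h.le), if_pos h]; ring

/-- simplicial boundary -/
noncomputable def bd (K : Type) [Field K] (key : σ → ℕ) :
    (Finset σ →₀ K) →ₗ[K] (Finset σ →₀ K) :=
  Finsupp.linearCombination K (fun S => ∑ x ∈ S, Finsupp.single (S.erase x) (sg K key x S))

/-- cone operator -/
noncomputable def cn (K : Type) [Field K] (key : σ → ℕ) (p : σ) :
    (Finset σ →₀ K) →ₗ[K] (Finset σ →₀ K) :=
  Finsupp.linearCombination K
    (fun S => if p ∈ S then 0 else Finsupp.single (insert p S) (sg K key p S))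

lemma bd_single (key : σ → ℕ) (S : Finset σ) (k : K) :
    bd K key (Finsupp.single S k) =
      ∑ x ∈ S, Finsupp.single (S.erase x) (k * sg K key x S) := by
  simp [bd, Finset.smul_sum]

lemma cn_single (key : σ → ℕ) (p : σ) (S : Finset σ) (k : K) :
    cn K key p (Finsupp.single S k) =
      if p ∈ S then 0 else Finsupp.single (insert p S) (k * sg K key p S) := by
  simp [cn]

lemma bd_bd (key : σ → ℕ) (hkey : Function.Injective key) (S : Finset σ) :
    bd K key (bd K key (Finsupp.single S 1)) = 0 := by
  rw [bd_single, map_sum]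
  simp only [bd_single, one_mul]
  rw [Finset.sum_sigma']
  refine Finset.sum_involution (fun z _ => ⟨z.2, z.1⟩) ?_ ?_ ?_ ?_
  · rintro ⟨x, y⟩ hxy
    simp only [Finset.mem_sigma, Finset.mem_erase] at hxy
    simp only
    rw [sg_swap key hkey x y S hxy.1 hxy.2.2 (Ne.symm hxy.2.1), Finset.erase_right_comm,
      ← Finsupp.single_add]
    simp
  · rintro ⟨x, y⟩ hxy _ h
    simp only [Finset.mem_sigma, Finset.mem_erase] at hxy
    simp only [Sigma.mk.injEq] at h
    exact hxy.2.1 h.1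
  · rintro ⟨x, y⟩ hxy
    simp only [Finset.mem_sigma, Finset.mem_erase] at hxy ⊢
    exact ⟨hxy.2.2, Ne.symm hxy.2.1, hxy.1⟩
  · rintro ⟨x, y⟩ _
    rfl

lemma bd_cn (key : σ → ℕ) (hkey : Function.Injective key) (p : σ) (v : Finset σ →₀ K) :
    bd K key (cn K key p v) + cn K key p (bd K key v) = v := by
  induction v using Finsupp.induction_linear with
  | zero => simp
  | add x y hx hy =>
    simp only [map_add]
    conv_rhs => rw [← hx, ← hy]
    abel
  | single S k =>
    rw [cn_single, bd_single, map_sum]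
    simp only [cn_single]
    by_cases hp : p ∈ S
    · rw [if_pos hp, map_zero, zero_add, Finset.sum_eq_single p]
      · rw [if_neg (Finset.notMem_erase _ _), Finset.insert_erase hp, sg_erase_self key p S hp,
          mul_assoc, sg_mul_self, mul_one]
      · intro x _ hx
        rw [if_pos (Finset.mem_erase.2 ⟨Ne.symm hx, hp⟩)]
      · intro h; exact absurd hp h
    · rw [if_neg hp, bd_single, Finset.sum_insert hp, Finset.erase_insert hp,
        sg_insert_self key p S hp, mul_assoc, sg_mul_self, mul_one, add_assoc,
        ← Finset.sum_add_distrib, Finset.sum_eq_zero, add_zero]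
      intro x hx
      have hxp : x ≠ p := fun h => hp (h ▸ hx)
      have hpe : p ∉ S.erase x := fun h => hp (Finset.mem_of_mem_erase h)
      rw [if_neg hpe, Finset.erase_insert_of_ne (Ne.symm hxp), ← Finsupp.single_add]
      have h1 := sg_swap (K := K) key hkey p x (insert p S) (Finset.mem_insert_self _ _)
        (Finset.mem_insert_of_mem hx) (Ne.symm hxp)
      rw [Finset.erase_insert hp, Finset.erase_insert_of_ne (Ne.symm hxp),
        sg_insert_self key p _ hpe, sg_insert_self key p S hp] at h1
      have e1 := sg_mul_self (K := K) key p S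
      have e2 := sg_mul_self (K := K) key p (S.erase x)
      have : k * sg K key p S * sg K key x (insert p S) +
          k * sg K key x S * sg K key p (S.erase x) = 0 := by
        linear_combination (k * sg K key p S * sg K key p (S.erase x)) * h1
          - k * sg K key x S * sg K key p (S.erase x) * e1
          - k * sg K key p S * sg K key x (insert p S) * e2
      rw [this, Finsupp.single_zero]

open Classical in
/-- projection to a family of sets -/
noncomputable def prj (K : Type) [Field K] {β : Type} (s : Set β) : (β →₀ K) →ₗ[K] (β →₀ K) :=
  (Finsupp.supported K K s).subtype ∘ₗ Finsupp.restrictDom K K s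

open Classical in
lemma prj_apply {β : Type} (s : Set β) (v : β →₀ K) (b : β) :
    prj K s v b = if b ∈ s then v b else 0 := by
  simp [prj, Finsupp.filter_apply]

lemma prj_of_mem {β : Type} (s : Set β) (v : β →₀ K) (hv : v ∈ Finsupp.supported K K s) :
    prj K s v = v := by
  classical
  ext b
  rw [prj_apply]
  split_ifs with h
  · rfl
  · exact ((Finsupp.mem_supported' K v).1 hv b h).symm

lemma prj_mem {β : Type} (s u : Set β) (v : β →₀ K) (hv : v ∈ Finsupp.supported K K u) :
    prj K s v ∈ Finsupp.supported K K (s ∩ u) := by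
  classical
  rw [Finsupp.mem_supported']
  intro b hb
  rw [prj_apply]
  split_ifs with h
  · exact (Finsupp.mem_supported' K v).1 hv b fun h' => hb ⟨h, h'⟩
  · rfl

lemma sub_prj_mem {β : Type} (s u : Set β) (v : β →₀ K) (hv : v ∈ Finsupp.supported K K u) :
    v - prj K s v ∈ Finsupp.supported K K (sᶜ ∩ u) := by
  classical
  rw [Finsupp.mem_supported']
  intro b hb
  rw [Finsupp.sub_apply, prj_apply]
  split_ifs with h
  · simp
  · rw [sub_zero]
    exact (Finsupp.mem_supported' K v).1 hv b fun h' => hb ⟨h, h'⟩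

/-- relative differential -/
noncomputable def rd (K : Type) [Field K] (key : σ → ℕ) (s : Set (Finset σ)) :
    (Finset σ →₀ K) →ₗ[K] (Finset σ →₀ K) :=
  prj K s ∘ₗ bd K key

lemma bd_mem (key : σ → ℕ) (u : Set (Finset σ)) (v : Finset σ →₀ K)
    (hv : v ∈ Finsupp.supported K K u) :
    bd K key v ∈ Finsupp.supported K K {S | ∃ T ∈ u, ∃ x ∈ T, S = T.erase x} := by
  refine supp_map (bd K key) ?_ v hv
  intro T hT
  rw [bd_single]
  refine Submodule.sum_mem _ fun x hx => ?_
  exact Finsupp.single_mem_supported K _ ⟨T, hT, x, hx, rfl⟩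

lemma cn_mem (key : σ → ℕ) (p : σ) (u : Set (Finset σ)) (v : Finset σ →₀ K)
    (hv : v ∈ Finsupp.supported K K u) :
    cn K key p v ∈ Finsupp.supported K K {S | ∃ T ∈ u, p ∉ T ∧ S = insert p T} := by
  refine supp_map (cn K key p) ?_ v hv
  intro T hT
  rw [cn_single]
  split_ifs with h
  · exact Submodule.zero_mem _
  · exact Finsupp.single_mem_supported K _ ⟨T, hT, h, rfl⟩

lemma rd_mem (key : σ → ℕ) (s u : Set (Finset σ)) (v : Finset σ →₀ K)
    (hv : v ∈ Finsupp.supported K K u) :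
    rd K key s v ∈ Finsupp.supported K K (s ∩ {S | ∃ T ∈ u, ∃ x ∈ T, S = T.erase x}) :=
  prj_mem s _ _ (bd_mem key u v hv)

lemma rd_rd (key : σ → ℕ) (hkey : Function.Injective key) (s : Set (Finset σ))
    (hconv : ∀ S ∈ s, ∀ T ∈ s, ∀ S', S ⊆ S' → S' ⊆ T → S' ∈ s) (T : Finset σ) (hT : T ∈ s) :
    rd K key s (rd K key s (Finsupp.single T 1)) = 0 := by
  have h0 : Finsupp.single T (1 : K) ∈ Finsupp.supported K K {T} :=
    Finsupp.single_mem_supported K _ rfl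
  have h1 := sub_prj_mem s _ _ (bd_mem key _ _ h0)
  have h2 := rd_mem key s _ _ h1
  have h3 : rd K key s (bd K key (Finsupp.single T 1) - prj K s (bd K key (Finsupp.single T 1)))
      = 0 := by
    have hempty : s ∩ {S | ∃ U ∈ sᶜ ∩ {S | ∃ T_1 ∈ ({T} : Set (Finset σ)), ∃ x ∈ T_1,
        S = T_1.erase x}, ∃ x ∈ U, S = U.erase x} = ∅ := by
      rw [Set.eq_empty_iff_forall_notMem]
      rintro S ⟨hS, U, ⟨hU, T', hT', y, hy, rfl⟩, x, hx, rfl⟩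
      have : T' = T := hT'
      subst this
      exact hU (hconv _ hS _ hT _ (Finset.erase_subset _ _) (Finset.erase_subset _ _))
    rw [hempty, Finsupp.supported_empty] at h2
    simpa using h2
  rw [map_sub, sub_eq_zero] at h3
  change rd K key s (prj K s (bd K key (Finsupp.single T 1))) = 0
  rw [← h3]
  change prj K s (bd K key (bd K key (Finsupp.single T 1))) = 0
  rw [bd_bd key hkey, map_zero]

/-- one contraction step -/
lemma rd_step (key : σ → ℕ) (hkey : Function.Injective key) (s u : Set (Finset σ)) (hu : u ⊆ s)
    (p : σ) (v : Finset σ →₀ K) (hv : v ∈ Finsupp.supported K K u) (hz : rd K key s v = 0) :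
    v - rd K key s (cn K key p v) ∈ Finsupp.supported K K
      {S | S ∈ s ∧ ∃ U, U ∉ s ∧ (∃ T ∈ u, ∃ x ∈ T, U = T.erase x) ∧ p ∉ U ∧ S = insert p U} := by
  have h1 : v - rd K key s (cn K key p v) = prj K s (cn K key p (bd K key v)) := by
    have h2 : bd K key (cn K key p v) = v - cn K key p (bd K key v) :=
      eq_sub_of_add_eq (bd_cn key hkey p v)
    change v - prj K s (bd K key (cn K key p v)) = _
    rw [h2, map_sub, prj_of_mem s v (Finsupp.supported_mono hu hv)]
    abel
  have h3 := sub_prj_mem s _ _ (bd_mem key _ _ hv)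
  have hz' : prj K s (bd K key v) = 0 := hz
  rw [hz', sub_zero] at h3
  rw [h1]
  refine Finsupp.supported_mono ?_ (prj_mem s _ _ (cn_mem key p _ _ h3))
  rintro S ⟨hS, U, ⟨hU, hU'⟩, hp, rfl⟩
  exact ⟨hS, U, hU, hU', hp, rfl⟩

end Part3

/-! ### Part 4: the explicit resolution -/

section Part4

/-- the standing conventions, bundled -/
structure Cfg (m n : ℕ) where
  r : Fin m → Fin m → Prop
  A : Fin m → Finset (Fin n)
  𝔄 : Set (Fin m → Fin n)
  hcompat : ∀ i j, r i j → i ≤ j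
  hsub : ∀ f ∈ 𝔄, (∀ i, f i ∈ A i) ∧ (∀ i j, r i j → f i ≤ f j)
  hdown : ∀ f ∈ 𝔄, ∀ g : Fin m → Fin n, (∀ i, g i ∈ A i) →
      (∀ i j, r i j → g i ≤ g j) → (∀ i, g i ≤ f i) → g ∈ 𝔄

variable {m n : ℕ}

/-- every row is nonempty -/
def Full (S : Finset (Fin m × Fin n)) : Prop := ∀ i, ∃ a, (i, a) ∈ S

/-- the cells -/
def Cfg.Good (C : Cfg m n) (S : Finset (Fin m × Fin n)) : Prop :=
  (∀ x ∈ S, x.2 ∈ C.A x.1) ∧ Full S ∧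
  (∀ x ∈ S, ∀ y ∈ S, C.r x.1 y.1 → x.1 ≠ y.1 → x.2 ≤ y.2) ∧
  ∃ g ∈ C.𝔄, ∀ i, (i, g i) ∈ S ∧ ∀ a, (i, a) ∈ S → a ≤ g i

lemma exists_maxsel (S : Finset (Fin m × Fin n)) (h : Full S) :
    ∃ g : Fin m → Fin n, ∀ i, (i, g i) ∈ S ∧ ∀ a, (i, a) ∈ S → a ≤ g i := by
  have : ∀ i, ∃ b, (i, b) ∈ S ∧ ∀ a, (i, a) ∈ S → a ≤ b := by
    intro i
    obtain ⟨a, ha⟩ := h i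
    obtain ⟨x, hx, hx'⟩ := Finset.exists_max_image (S.filter (fun x => x.1 = i)) Prod.snd
      ⟨(i, a), by simp [ha]⟩
    simp only [Finset.mem_filter] at hx hx'
    refine ⟨x.2, ?_, fun b hb => hx' (i, b) ⟨hb, rfl⟩⟩
    rw [← hx.2]; exact hx.1
  choose g hg using this
  exact ⟨g, hg⟩

lemma exists_minsel (S : Finset (Fin m × Fin n)) (h : Full S) :
    ∃ g : Fin m → Fin n, ∀ i, (i, g i) ∈ S ∧ ∀ a, (i, a) ∈ S → g i ≤ a := by
  have : ∀ i, ∃ b, (i, b) ∈ S ∧ ∀ a, (i, a) ∈ S → b ≤ a := by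
    intro i
    obtain ⟨a, ha⟩ := h i
    obtain ⟨x, hx, hx'⟩ := Finset.exists_min_image (S.filter (fun x => x.1 = i)) Prod.snd
      ⟨(i, a), by simp [ha]⟩
    simp only [Finset.mem_filter] at hx hx'
    refine ⟨x.2, ?_, fun b hb => hx' (i, b) ⟨hb, rfl⟩⟩
    rw [← hx.2]; exact hx.1
  choose g hg using this
  exact ⟨g, hg⟩

/-- any selection from a good set is in the ideal -/
lemma Cfg.sel_mem (C : Cfg m n) {T : Finset (Fin m × Fin n)} (hT : C.Good T)
    (g : Fin m → Fin n) (hg : ∀ i, (i, g i) ∈ T) : g ∈ C.𝔄 := by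
  obtain ⟨h1, h2, h3, f, hf, hf'⟩ := hT
  refine C.hdown f hf g (fun i => h1 _ (hg i)) ?_ fun i => (hf' i).2 _ (hg i)
  intro i j hij
  by_cases h : i = j
  · rw [h]
  · exact h3 _ (hg i) _ (hg j) hij h

lemma Cfg.good_sub (C : Cfg m n) {S T : Finset (Fin m × Fin n)} (hT : C.Good T) (hST : S ⊆ T)
    (hS : Full S) : C.Good S := by
  obtain ⟨g, hg⟩ := exists_maxsel S hS
  exact ⟨fun x hx => hT.1 x (hST hx), hS,
    fun x hx y hy => hT.2.2.1 x (hST hx) y (hST hy),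
    g, C.sel_mem hT g fun i => hST (hg i).1, hg⟩

lemma full_card (S : Finset (Fin m × Fin n)) (h : Full S) : m ≤ S.card := by
  choose g hg using h
  have := Finset.card_le_card_of_injOn (s := (Finset.univ : Finset (Fin m))) (t := S)
    (fun i => (i, g i)) (fun i _ => hg i) (fun i _ j _ hij => (Prod.ext_iff.1 hij).1)
  simpa using this

lemma full_card_inj (S : Finset (Fin m × Fin n)) (h : Full S) (hc : S.card = m)
    (x y : Fin m × Fin n) (hx : x ∈ S) (hy : y ∈ S) (hxy : x.1 = y.1) : x = y := by
  have h1 : S.image Prod.fst = Finset.univ := by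
    ext i
    obtain ⟨a, ha⟩ := h i
    simpa using ⟨a, ha⟩
  have h2 : (S.image Prod.fst).card = S.card := by rw [h1, hc]; simp
  exact Finset.card_image_iff.1 h2 hx hy hxy

/-- lexicographic key -/
def ky (x : Fin m × Fin n) : ℕ := x.1 * n + x.2

lemma ky_lt (x y : Fin m × Fin n) (h : x.1 < y.1) : ky x < ky y := by
  have h1 : (x.1 : ℕ) + 1 ≤ y.1 := h
  have h2 := Nat.mul_le_mul_right n h1
  have h3 := x.2.2
  unfold ky
  nlinarith

lemma ky_inj : Function.Injective (ky : Fin m × Fin n → ℕ) := by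
  intro x y h
  rcases lt_trichotomy x.1 y.1 with h1 | h1 | h1
  · exact absurd h (ky_lt x y h1).ne
  · unfold ky at h
    rw [h1] at h
    exact Prod.ext h1 (Fin.ext (by omega))
  · exact absurd h (ky_lt y x h1).ne'

lemma ky_lt_iff (x y : Fin m × Fin n) (h : x.1 ≠ y.1) : ky x < ky y ↔ x.1 < y.1 := by
  refine ⟨fun h1 => ?_, ky_lt x y⟩
  rcases lt_or_gt_of_ne h with h2 | h2
  · exact h2
  · exact absurd h1 (ky_lt y x h2).not_gt

lemma Cfg.cyc_zero (K : Type) [Field K] (C : Cfg m n) (S : Finset (Fin m × Fin n))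
    (hS : C.Good S) (hc : S.card = m + 1) :
    sumc K _ (rd K ky {S | C.Good S} (Finsupp.single S 1)) = 0 := by
  classical
  have h0 : ∃ x ∈ S, ∃ y ∈ S, x.1 = y.1 ∧ x.2 < y.2 := by
    obtain ⟨x, hx, y, hy, hne, he⟩ := Finset.exists_ne_map_eq_of_card_lt_of_maps_to
      (s := S) (t := (Finset.univ : Finset (Fin m))) (f := Prod.fst) (by simp [hc])
      (fun _ _ => Finset.mem_coe.2 (Finset.mem_univ _))
    have hne2 : x.2 ≠ y.2 := fun h => hne (Prod.ext he h)
    rcases lt_or_gt_of_ne hne2 with h | h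
    · exact ⟨x, hx, y, hy, he, h⟩
    · exact ⟨y, hy, x, hx, he.symm, h⟩
  obtain ⟨x, hx, y, hy, he, hlt⟩ := h0
  have hxy : x ≠ y := fun h => by rw [h] at hlt; exact lt_irrefl _ hlt
  have fx : Full (S.erase x) := by
    intro i
    by_cases hi : i = x.1
    · refine ⟨y.2, Finset.mem_erase.2 ⟨?_, ?_⟩⟩
      · rw [hi, he]; exact hxy.symm
      · rw [hi, he]; exact hy
    · obtain ⟨a, ha⟩ := hS.2.1 i
      exact ⟨a, Finset.mem_erase.2 ⟨fun h => hi (by rw [← h]), ha⟩⟩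
  have fy : Full (S.erase y) := by
    intro i
    by_cases hi : i = x.1
    · refine ⟨x.2, Finset.mem_erase.2 ⟨?_, ?_⟩⟩
      · rw [hi]; exact hxy
      · rw [hi]; exact hx
    · obtain ⟨a, ha⟩ := hS.2.1 i
      exact ⟨a, Finset.mem_erase.2 ⟨fun h => hi (by rw [he, ← h]), ha⟩⟩
  have hcx : (S.erase x).card = m := by rw [Finset.card_erase_of_mem hx, hc]; simp
  have inj := full_card_inj _ fx hcx
  have hyx : y ∈ S.erase x := Finset.mem_erase.2 ⟨hxy.symm, hy⟩
  have gx : C.Good (S.erase x) := C.good_sub hS (Finset.erase_subset _ _) fx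
  have gy : C.Good (S.erase y) := C.good_sub hS (Finset.erase_subset _ _) fy
  have gz : ∀ z ∈ S, z ≠ x ∧ z ≠ y → ¬ C.Good (S.erase z) := by
    rintro z hz ⟨hzx, hzy⟩ hg
    have hzm : z ∈ S.erase x := Finset.mem_erase.2 ⟨hzx, hz⟩
    obtain ⟨a, ha⟩ := hg.2.1 z.1
    obtain ⟨ha1, ha2⟩ := Finset.mem_erase.1 ha
    by_cases hw : (z.1, a) = x
    · exact hzy (inj z y hzm hyx (by rw [← he, ← hw]))
    · exact ha1 (inj _ _ (Finset.mem_erase.2 ⟨hw, ha2⟩) hzm rfl)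
  have hsum : sumc K _ (rd K ky {S | C.Good S} (Finsupp.single S 1)) =
      ∑ z ∈ S, if C.Good (S.erase z) then sg K ky z S else 0 := by
    unfold rd
    rw [LinearMap.comp_apply, bd_single, map_sum, map_sum]
    refine Finset.sum_congr rfl fun z _ => ?_
    split_ifs with hg
    · have hg' : S.erase z ∈ {S | C.Good S} := hg
      rw [prj_of_mem _ _ (Finsupp.single_mem_supported K _ hg'), sumc_single, one_mul]
    · have : prj K {S | C.Good S} (Finsupp.single (S.erase z) (1 * sg K ky z S)) = 0 := by
        ext U
        rw [prj_apply]
        split_ifs with hU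
        · have : S.erase z ≠ U := fun h => hg (h ▸ hU)
          simp [this]
        · rfl
      rw [this, map_zero]
  rw [hsum, Finset.sum_eq_add_of_mem x y hx hy hxy (fun z hz hzn => if_neg (gz z hz hzn)), if_pos gx, if_pos gy]
  have hf : S.filter (fun z => ky z < ky y) = insert x (S.filter (fun z => ky z < ky x)) := by
    ext z
    simp only [Finset.mem_filter, Finset.mem_insert]
    have hxy' : ky x < ky y := by
      unfold ky; rw [he]; exact Nat.add_lt_add_left hlt _
    constructor
    · rintro ⟨hz, hz'⟩
      by_cases hzx : z = x
      · exact Or.inl hzx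
      · have hzy : z ≠ y := fun h => by rw [h] at hz'; exact lt_irrefl _ hz'
        have h1 : z.1 ≠ y.1 := fun h =>
          hzy (inj z y (Finset.mem_erase.2 ⟨hzx, hz⟩) hyx h)
        right
        refine ⟨hz, (ky_lt_iff z x (he ▸ h1)).2 ?_⟩
        rw [he]
        exact (ky_lt_iff z y h1).1 hz'
    · rintro (rfl | ⟨hz, hz'⟩)
      · exact ⟨hx, hxy'⟩
      · exact ⟨hz, hz'.trans hxy'⟩
  unfold sg
  rw [hf, Finset.card_insert_of_notMem (by simp), pow_succ]
  ring

/-- squarefree degree -/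
noncomputable def sdeg (S : Finset (Fin m × Fin n)) : Fin m × Fin n →₀ ℕ :=
  ∑ x ∈ S, Finsupp.single x 1

lemma sdeg_apply (S : Finset (Fin m × Fin n)) (x : Fin m × Fin n) :
    sdeg S x = if x ∈ S then 1 else 0 := by
  simp [sdeg, Finsupp.finsetSum_apply, Finsupp.single_apply]

lemma sdeg_le (S : Finset (Fin m × Fin n)) (α : Fin m × Fin n →₀ ℕ) :
    sdeg S ≤ α ↔ ∀ x ∈ S, α x ≠ 0 := by
  constructor
  · intro h x hx
    have := h x
    rw [sdeg_apply, if_pos hx] at this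
    omega
  · intro h x
    rw [sdeg_apply]
    split_ifs with hx
    · have := h x hx; omega
    · exact Nat.zero_le _

lemma sdeg_inj {S T : Finset (Fin m × Fin n)} (h : sdeg S = sdeg T) : S = T := by
  ext x
  have := DFunLike.congr_fun h x
  rw [sdeg_apply, sdeg_apply] at this
  by_cases h1 : x ∈ S <;> by_cases h2 : x ∈ T <;> simp_all

/-- the explicit frame -/
noncomputable abbrev Cfg.fr (K : Type) [Field K] (C : Cfg m n) : Fr K (Fin m × Fin n) where
  B := fun _ => Finset (Fin m × Fin n)
  ok := fun t => {S | C.Good S ∧ S.card = m + t}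
  deg := fun _ => sdeg
  D := fun _ => rd K ky {S | C.Good S}

lemma Cfg.exists_f0 (C : Cfg m n) (α : Fin m × Fin n →₀ ℕ) (g0 : Fin m → Fin n) (hg0 : g0 ∈ C.𝔄)
    (hα0 : ∀ i, α (i, g0 i) ≠ 0) :
    ∃ f ∈ C.𝔄, (∀ i, α (i, f i) ≠ 0) ∧ ∀ g ∈ C.𝔄, (∀ i, α (i, g i) ≠ 0) → ∀ i, f i ≤ g i := by
  have : ∀ i : Fin m, ∃ g, (g ∈ C.𝔄 ∧ ∀ i, α (i, g i) ≠ 0) ∧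
      ∀ g', (g' ∈ C.𝔄 ∧ ∀ i, α (i, g' i) ≠ 0) → g i ≤ g' i := by
    intro i
    exact Set.exists_min_image {g | g ∈ C.𝔄 ∧ ∀ i, α (i, g i) ≠ 0} (fun g => g i)
      (Set.toFinite _) ⟨g0, hg0, hα0⟩
  choose G hG hG' using this
  refine ⟨fun i => G i i, ?_, fun i => (hG i).2 i, fun g hg hg' i => hG' i g ⟨hg, hg'⟩⟩
  refine C.hdown g0 hg0 _ (fun i => (C.hsub _ (hG i).1).1 i) ?_ fun i => hG' i g0 ⟨hg0, hα0⟩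
  intro i j hij
  exact (hG' i (G j) (hG j)).trans ((C.hsub _ (hG j).1).2 i j hij)

lemma Cfg.fr_isMin (K : Type) [Field K] (C : Cfg m n) : (C.fr K).IsMin := by
  intro t S hS U hU
  have h1 := rd_mem (K := K) ky {S | C.Good S} {S} (Finsupp.single S 1)
    (Finsupp.single_mem_supported K _ rfl)
  obtain ⟨-, T, rfl, x, hx, hx'⟩ := (Finsupp.mem_supported K _).1 h1 (Finsupp.mem_support_iff.2 hU)
  intro h
  have := sdeg_inj h
  rw [hx'] at this
  rw [← this] at hx
  exact Finset.notMem_erase _ _ hx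

lemma Cfg.rd_zero (K : Type) [Field K] (C : Cfg m n) (t : ℕ) (v : Finset (Fin m × Fin n) →₀ K)
    (hv : v ∈ Finsupp.supported K K ((C.fr K).ok t)) (hz : v ∈ (C.fr K).Z t) :
    rd K ky {S | C.Good S} v = 0 := by
  cases t with
  | succ t => exact hz
  | zero =>
    have h1 := rd_mem (K := K) ky {S | C.Good S} _ v hv
    have : {S | C.Good S} ∩ {S | ∃ T ∈ (C.fr K).ok 0, ∃ x ∈ T, S = T.erase x} = ∅ := by
      rw [Set.eq_empty_iff_forall_notMem]
      rintro S ⟨hS, T, ⟨hT, hc⟩, x, hx, rfl⟩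
      have h2 := full_card _ hS.2.1
      have h3 := Finset.card_erase_lt_of_mem hx
      omega
    rw [this, Finsupp.supported_empty] at h1
    simpa using h1

lemma Cfg.fr_filt (K : Type) [Field K] (C : Cfg m n) (t : ℕ) (S : Finset (Fin m × Fin n))
    (hS : S ∈ (C.fr K).ok (t + 1)) :
    rd K ky {S | C.Good S} (Finsupp.single S 1) ∈ (C.fr K).V t (sdeg S) := by
  have h1 := rd_mem (K := K) ky {S | C.Good S} {S} (Finsupp.single S 1)
    (Finsupp.single_mem_supported K _ rfl)
  refine Finsupp.supported_mono ?_ h1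
  rintro U ⟨hU, T, rfl, x, hx, rfl⟩
  refine ⟨⟨hU, ?_⟩, ?_⟩
  · have := hS.2
    rw [Finset.card_erase_of_mem hx]
    omega
  · refine (sdeg_le _ _).2 fun z hz => ?_
    rw [sdeg_apply, if_pos (Finset.mem_of_mem_erase hz)]
    exact one_ne_zero

lemma Cfg.fr_cyc (K : Type) [Field K] (C : Cfg m n) (t : ℕ) (S : Finset (Fin m × Fin n))
    (hS : S ∈ (C.fr K).ok (t + 1)) :
    rd K ky {S | C.Good S} (Finsupp.single S 1) ∈ (C.fr K).Z t := by
  cases t with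
  | zero => exact C.cyc_zero K S hS.1 hS.2
  | succ t =>
    change rd K ky {S | C.Good S} _ = 0
    refine rd_rd ky ky_inj _ ?_ S hS.1
    intro S hS T hT S' h1 h2
    refine C.good_sub hT h2 fun i => ?_
    obtain ⟨a, ha⟩ := hS.2.1 i
    exact ⟨a, h1 ha⟩

/-- the sets at stage `k` of the contraction -/
def Cfg.stage (C : Cfg m n) (t : ℕ) (α : Fin m × Fin n →₀ ℕ) (f : Fin m → Fin n) (k : ℕ) :
    Set (Finset (Fin m × Fin n)) :=
  {T | (C.Good T ∧ T.card = m + t) ∧ sdeg T ≤ α ∧ ∀ x ∈ T, (x.1 : ℕ) < k → x.2 = f x.1}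

lemma Cfg.fr_ex_stage (K : Type) [Field K] (C : Cfg m n) (t : ℕ) (α : Fin m × Fin n →₀ ℕ)
    (v : Finset (Fin m × Fin n) →₀ K) (hv : v ∈ (C.fr K).V t α) (hz : v ∈ (C.fr K).Z t)
    (f : Fin m → Fin n) (hf : f ∈ C.𝔄) (hfα : ∀ i, α (i, f i) ≠ 0)
    (hmin : ∀ g ∈ C.𝔄, (∀ i, α (i, g i) ≠ 0) → ∀ i, f i ≤ g i) (k : ℕ) (hk : k ≤ m) :
    ∃ w ∈ (C.fr K).V (t + 1) α,
      v - rd K ky {S | C.Good S} w ∈ Finsupp.supported K K (C.stage t α f k) ∧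
      v - rd K ky {S | C.Good S} w ∈ (C.fr K).Z t := by
  induction k with
  | zero =>
    refine ⟨0, Submodule.zero_mem _, ?_, ?_⟩
    · rw [map_zero, sub_zero]
      refine Finsupp.supported_mono ?_ hv
      rintro T ⟨h1, h2⟩
      exact ⟨h1, h2, fun x _ h => absurd h (Nat.not_lt_zero _)⟩
    · rw [map_zero, sub_zero]; exact hz
  | succ k ih =>
    obtain ⟨w, hw, h1, h2⟩ := ih (by omega)
    set v1 := v - rd K ky {S | C.Good S} w with hv1
    have hst : C.stage t α f k ⊆ (C.fr K).ok t := fun T hT => hT.1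
    have hrd := C.rd_zero K t v1 (Finsupp.supported_mono hst h1) h2
    let i : Fin m := ⟨k, hk⟩
    -- elements of cells lie above `f`
    have hlow : ∀ T ∈ C.stage t α f k, ∀ j a, (j, a) ∈ T → f j ≤ a := by
      intro T hT j a hja
      obtain ⟨g, hg⟩ := exists_minsel T hT.1.1.2.1
      refine (hmin g (C.sel_mem hT.1.1 g fun i => (hg i).1) (fun i => ?_) j).trans ((hg j).2 a hja)
      exact (sdeg_le _ _).1 hT.2.1 _ (hg i).1
    have hcn : cn K ky (i, f i) v1 ∈ (C.fr K).V (t + 1) α := by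
      refine Finsupp.supported_mono ?_ (cn_mem ky (i, f i) _ _ h1)
      rintro S ⟨T, hT, hp, rfl⟩
      have hTs := hT
      obtain ⟨⟨⟨g1, g2, g3, g, hg, hg'⟩, hc⟩, hd, hs⟩ := hT
      refine ⟨⟨⟨?_, ?_, ?_, g, hg, ?_⟩, ?_⟩, ?_⟩
      · intro x hx
        rcases Finset.mem_insert.1 hx with rfl | hx
        · exact (C.hsub f hf).1 i
        · exact g1 x hx
      · intro j
        obtain ⟨a, ha⟩ := g2 j
        exact ⟨a, Finset.mem_insert_of_mem ha⟩
      · intro x hx y hy hr hne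
        rcases Finset.mem_insert.1 hx with rfl | hx <;> rcases Finset.mem_insert.1 hy with rfl | hy
        · exact le_rfl
        · obtain ⟨a, ha⟩ := g2 i
          exact (hlow T hTs i a ha).trans (g3 _ ha y hy hr hne)
        · have hlt : x.1 < i := lt_of_le_of_ne (C.hcompat _ _ hr) hne
          rw [hs x hx hlt]
          exact (C.hsub f hf).2 _ _ hr
        · exact g3 x hx y hy hr hne
      · intro j
        refine ⟨Finset.mem_insert_of_mem (hg' j).1, ?_⟩
        intro a ha
        rcases Finset.mem_insert.1 ha with h | ha
        · obtain ⟨rfl, rfl⟩ := Prod.ext_iff.1 h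
          exact hlow T hTs _ _ (hg' _).1
        · exact (hg' j).2 a ha
      · rw [Finset.card_insert_of_notMem hp, hc]; rfl
      · refine (sdeg_le _ _).2 fun x hx => ?_
        rcases Finset.mem_insert.1 hx with rfl | hx
        · exact hfα i
        · exact (sdeg_le _ _).1 hd x hx
    have heq : v - rd K ky {S | C.Good S} (w + cn K ky (i, f i) v1) =
        v1 - rd K ky {S | C.Good S} (cn K ky (i, f i) v1) := by
      rw [map_add, hv1]; abel
    refine ⟨w + cn K ky (i, f i) v1, Submodule.add_mem _ hw hcn, ?_, ?_⟩
    · rw [heq]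
      refine Finsupp.supported_mono ?_
        (rd_step ky ky_inj {S | C.Good S} _ (fun T hT => hT.1.1) (i, f i) v1 h1 hrd)
      rintro S ⟨hS, U, hU, ⟨T, hT, x, hx, rfl⟩, hp, rfl⟩
      refine ⟨⟨hS, ?_⟩, ?_, ?_⟩
      · rw [Finset.card_insert_of_notMem hp, Finset.card_erase_add_one hx, hT.1.2]
      · refine (sdeg_le _ _).2 fun z hz => ?_
        rcases Finset.mem_insert.1 hz with rfl | hz
        · exact hfα i
        · exact (sdeg_le _ _).1 hT.2.1 z (Finset.mem_of_mem_erase hz)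
      · intro z hz hzk
        rcases Finset.mem_insert.1 hz with rfl | hz
        · rfl
        · rcases Nat.lt_succ_iff_lt_or_eq.1 hzk with h | h
          · exact hT.2.2 z (Finset.mem_of_mem_erase hz) h
          · exfalso
            apply hU
            refine C.good_sub hT.1.1 (Finset.erase_subset _ _) ?_
            intro j
            by_cases hj : j = i
            · refine ⟨z.2, ?_⟩
              have : j = z.1 := by rw [hj]; exact Fin.ext h.symm
              rw [this]; exact hz
            · obtain ⟨a, ha⟩ := hS.2.1 j
              rcases Finset.mem_insert.1 ha with h' | h'
              · exact absurd (Prod.ext_iff.1 h').1 hj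
              · exact ⟨a, h'⟩
    · rw [heq]
      refine Submodule.sub_mem _ h2 ?_
      exact supp_mem (rd K ky {S | C.Good S}) ((C.fr K).Z t)
        (fun b hb => C.fr_cyc K t b hb) _ ((C.fr K).V_ok _ _ hcn)

lemma Cfg.fr_isRes (K : Type) [Field K] (C : Cfg m n) : (C.fr K).IsRes where
  filt := C.fr_filt K
  cyc := C.fr_cyc K
  ex := by
    intro t α v hv hz
    by_cases hv0 : v = 0
    · exact ⟨0, Submodule.zero_mem _, by rw [map_zero, hv0]⟩
    obtain ⟨S, hS⟩ := Finsupp.support_nonempty_iff.2 hv0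
    obtain ⟨⟨hSg, hSc⟩, hSα⟩ := (Finsupp.mem_supported K _).1 hv hS
    obtain ⟨g, hg, hg'⟩ := hSg.2.2.2
    obtain ⟨f, hf, hfα, hmin⟩ := C.exists_f0 α g hg
      fun i => (sdeg_le _ _).1 hSα _ (hg' i).1
    obtain ⟨w, hw, h1, h2⟩ := C.fr_ex_stage K t α v hv hz f hf hfα hmin m le_rfl
    refine ⟨w, hw, ?_⟩
    change rd K ky {S | C.Good S} w = v
    set u := v - rd K ky {S | C.Good S} w with hu
    suffices hu0 : u = 0 by
      rw [hu, sub_eq_zero] at hu0; exact hu0.symm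
    let T0 : Finset (Fin m × Fin n) := Finset.univ.image fun i => (i, f i)
    have hT0 : T0.card = m := by
      rw [Finset.card_image_of_injective _ (fun i j h => (Prod.ext_iff.1 h).1)]
      simp
    have hst : ∀ T ∈ C.stage t α f m, T = T0 := by
      intro T hT
      have hsub : T ⊆ T0 := by
        intro x hx
        refine Finset.mem_image.2 ⟨x.1, Finset.mem_univ _, ?_⟩
        rw [← hT.2.2 x hx x.1.2]
      exact Finset.eq_of_subset_of_card_le hsub (by rw [hT0, hT.1.2]; omega)
    have hsupp : u.support ⊆ {T0} := by
      intro T hT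
      rw [Finset.mem_singleton]
      exact hst T ((Finsupp.mem_supported K _).1 h1 hT)
    have hus := Finsupp.support_subset_singleton.1 hsupp
    by_contra hne
    obtain ⟨T, hT⟩ := Finsupp.support_nonempty_iff.2 hne
    have hT1 := (Finsupp.mem_supported K _).1 h1 hT
    have hT2 := hst T hT1
    have ht : t = 0 := by
      have := hT1.1.2
      rw [hT2, hT0] at this
      omega
    subst ht
    have h3 : sumc K _ u = 0 := h2
    rw [hus, sumc_single] at h3
    rw [h3] at hus
    exact hne (by rw [hus, Finsupp.single_zero])

end Part4

/-! ### Part 5: conclusion -/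

section Part5

variable {m n : ℕ}

lemma sum_rows {M : Type} [AddCommMonoid M] (Kf : Fin m → Finset (Fin n))
    (f : Fin m × Fin n → M) :
    ∑ x ∈ Finset.univ.filter (fun x : Fin m × Fin n => x.2 ∈ Kf x.1), f x =
      ∑ i, ∑ a ∈ Kf i, f (i, a) := by
  rw [Finset.sum_filter, Fintype.sum_prod_type]
  refine Finset.sum_congr rfl fun i _ => ?_
  simp

lemma sum_rows' {M : Type} [AddCommMonoid M] (S : Finset (Fin m × Fin n))
    (Kf : Fin m → Finset (Fin n)) (h : ∀ x, x ∈ S ↔ x.2 ∈ Kf x.1) (f : Fin m × Fin n → M) :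
    ∑ x ∈ S, f x = ∑ i, ∑ a ∈ Kf i, f (i, a) := by
  rw [← sum_rows]
  refine Finset.sum_congr ?_ fun _ _ => rfl
  ext x
  simp [h]

lemma Cfg.described_iff (C : Cfg m n) (t : ℕ) (dd : Fin m × Fin n →₀ ℕ) :
    DescribedExp m n C.r C.A C.𝔄 t dd ↔ ∃ S, (C.Good S ∧ S.card = m + t) ∧ sdeg S = dd := by
  constructor
  · rintro ⟨Kf, h1, h2, h3, h4, ⟨g, hg, hg'⟩, rfl⟩
    refine ⟨Finset.univ.filter (fun x : Fin m × Fin n => x.2 ∈ Kf x.1),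
      ⟨⟨?_, ?_, ?_, g, hg, ?_⟩, ?_⟩, ?_⟩
    · intro x hx
      exact h1 _ (by simpa using hx)
    · intro i
      obtain ⟨a, ha⟩ := h2 i
      exact ⟨a, by simpa using ha⟩
    · intro x hx y hy hr hne
      exact h4 _ _ hr hne _ (by simpa using hx) _ (by simpa using hy)
    · intro i
      simpa using hg' i
    · rw [Finset.card_eq_sum_ones, sum_rows, ← h3]
      simp
    · exact sum_rows Kf _
  · rintro ⟨S, ⟨⟨h1, h2, h3, g, hg, hg'⟩, hc⟩, rfl⟩
    have hS : ∀ x : Fin m × Fin n,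
        x ∈ S ↔ x.2 ∈ (fun i => Finset.univ.filter (fun a => (i, a) ∈ S)) x.1 := by
      intro x; simp
    refine ⟨fun i => Finset.univ.filter (fun a => (i, a) ∈ S), ?_, ?_, ?_, ?_, ⟨g, hg, ?_⟩, ?_⟩
    · intro i a ha
      exact h1 (i, a) (by simpa using ha)
    · intro i
      obtain ⟨a, ha⟩ := h2 i
      exact ⟨a, by simpa using ha⟩
    · rw [← hc, Finset.card_eq_sum_ones, sum_rows' S (fun i => Finset.univ.filter (fun a => (i, a) ∈ S)) hS]
      simp
    · intro i j hr hne a ha b hb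
      exact h3 (i, a) (by simpa using ha) (j, b) (by simpa using hb) hr hne
    · intro i
      simpa using hg' i
    · exact sum_rows' S (fun i => Finset.univ.filter (fun a => (i, a) ∈ S)) hS _

lemma mem_gen_iff {K : Type} [Field K] {σ ι : Type} (s : Set ι) (e : ι → (σ →₀ ℕ))
    (α : σ →₀ ℕ) :
    monomial α (1 : K) ∈ Ideal.span ((fun i => (monomial (e i) (1 : K))) '' s) ↔
      ∃ i ∈ s, e i ≤ α := by
  have : (fun i => (monomial (e i) (1 : K))) '' s =
      (fun a => monomial a (1 : K)) '' (e '' s) := by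
    rw [Set.image_image]
  rw [this, mem_ideal_span_monomial_image]
  classical
  rw [MvPolynomial.support_monomial, if_neg one_ne_zero]
  simp

lemma graph_sdeg (f : Fin m → Fin n) (K : Type) [Field K] :
    ∏ i : Fin m, (X (i, f i) : MvPolynomial (Fin m × Fin n) K) =
      monomial (sdeg (Finset.univ.image fun i => (i, f i))) 1 := by
  unfold sdeg
  rw [Finset.sum_image (fun i _ j _ h => (Prod.ext_iff.1 h).1), MvPolynomial.monomial_sum_one]
  rfl

lemma Cfg.ok_zero (C : Cfg m n) (S : Finset (Fin m × Fin n)) :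
    (C.Good S ∧ S.card = m + 0) ↔ ∃ f ∈ C.𝔄, S = Finset.univ.image fun i => (i, f i) := by
  constructor
  · rintro ⟨⟨h1, h2, h3, g, hg, hg'⟩, hc⟩
    refine ⟨g, hg, (Finset.eq_of_subset_of_card_le ?_ ?_).symm⟩
    · intro x hx
      obtain ⟨i, -, rfl⟩ := Finset.mem_image.1 hx
      exact (hg' i).1
    · rw [Finset.card_image_of_injective _ (fun i j h => (Prod.ext_iff.1 h).1), hc]
      simp
  · rintro ⟨f, hf, rfl⟩
    refine ⟨⟨?_, ?_, ?_, f, hf, ?_⟩, ?_⟩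
    · intro x hx
      obtain ⟨i, -, rfl⟩ := Finset.mem_image.1 hx
      exact (C.hsub f hf).1 i
    · intro i
      exact ⟨f i, by simp⟩
    · intro x hx y hy hr _
      obtain ⟨i, -, rfl⟩ := Finset.mem_image.1 hx
      obtain ⟨j, -, rfl⟩ := Finset.mem_image.1 hy
      exact (C.hsub f hf).2 i j hr
    · intro i
      simp
    · rw [Finset.card_image_of_injective _ (fun i j h => (Prod.ext_iff.1 h).1)]
      simp

/-- multidegrees of the minimal resolution are exactly the described exponents -/
lemma Cfg.degs (K : Type) [Field K] (C : Cfg m n)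
    (Res : MinMGFreeRes K (Fin m × Fin n)
      (Ideal.span ((fun f : Fin m → Fin n =>
        ∏ i : Fin m, (X (i, f i) : MvPolynomial (Fin m × Fin n) K)) '' C.𝔄)))
    (t : ℕ) (dd : Fin m × Fin n →₀ ℕ) :
    (∃ b, Res.deg t b = dd) ↔ ∃ S, (C.Good S ∧ S.card = m + t) ∧ sdeg S = dd := by
  have hI : ∀ α : Fin m × Fin n →₀ ℕ, monomial α (1 : K) ∈
      (Ideal.span ((fun f : Fin m → Fin n =>
        ∏ i : Fin m, (X (i, f i) : MvPolynomial (Fin m × Fin n) K)) '' C.𝔄)) ↔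
      ∃ f ∈ C.𝔄, sdeg (Finset.univ.image fun i => (i, f i)) ≤ α := by
    intro α
    simp only [graph_sdeg]
    exact mem_gen_iff C.𝔄 (fun f => sdeg (Finset.univ.image fun i => (i, f i))) α
  have h1 : ∀ b ∈ Res.toFr.ok 0, ∃ c ∈ (C.fr K).ok 0, (C.fr K).deg 0 c ≤ Res.toFr.deg 0 b := by
    intro b _
    have : monomial (Res.deg 0 b) (1 : K) ∈ LinearMap.range Res.ε :=
      ⟨_, Res.graded_eps b⟩
    rw [Res.epi] at this
    obtain ⟨f, hf, hle⟩ := (hI _).1 this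
    exact ⟨_, (C.ok_zero _).2 ⟨f, hf, rfl⟩, hle⟩
  have hr : LinearMap.range Res.ε ≤
      Ideal.span ((fun b => (monomial (Res.deg 0 b) (1 : K))) '' Set.univ) := by
    rintro _ ⟨x, rfl⟩
    induction x using Finsupp.induction_linear with
    | zero => rw [map_zero]; exact Submodule.zero_mem _
    | add x y hx hy => rw [map_add]; exact Submodule.add_mem _ hx hy
    | single b p =>
      have : Finsupp.single b p = p • Finsupp.single b (1 : MvPolynomial (Fin m × Fin n) K) := by
        simp
      rw [this, map_smul, Res.graded_eps]
      exact Submodule.smul_mem _ _ (Ideal.subset_span ⟨b, trivial, rfl⟩)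
  have h2 : ∀ b ∈ (C.fr K).ok 0, ∃ c ∈ Res.toFr.ok 0, Res.toFr.deg 0 c ≤ (C.fr K).deg 0 b := by
    intro S hS
    obtain ⟨f, hf, rfl⟩ := (C.ok_zero S).1 hS
    have h3 := (hI (sdeg (Finset.univ.image fun i => (i, f i)))).2 ⟨f, hf, le_rfl⟩
    rw [← Res.epi] at h3
    obtain ⟨b, -, hb⟩ := (mem_gen_iff _ _ _).1 (hr h3)
    exact ⟨b, trivial, hb⟩
  constructor
  · rintro ⟨b, rfl⟩
    obtain ⟨S, hS, hd⟩ := Res.toFr.compare (C.fr K) (toFr_isRes Res) (C.fr_isRes K)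
      (toFr_isMin Res) h1 h2 t b trivial
    exact ⟨S, hS, hd⟩
  · rintro ⟨S, hS, rfl⟩
    obtain ⟨b, -, hb⟩ := (C.fr K).compare Res.toFr (C.fr_isRes K) (toFr_isRes Res)
      (C.fr_isMin K) h2 h1 t S hS
    exact ⟨b, hb⟩

end Part5

/-- for the generalized co-letterplace ideal `L(𝔄)` and any
minimal multigraded free resolution of it, the minimal generating set of the
`t`-th homological shift ideal `HS_t(L(𝔄))` (generated by the monomials whose
exponents are the `t`-th multigraded shifts) consists exactly of the
described monomials. -/
theorem stmt4 (K : Type) [Field K] (m n : ℕ) (r : Fin m → Fin m → Prop)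
    (hrefl : ∀ i, r i i) (htrans : ∀ i j k, r i j → r j k → r i k)
    (hcompat : ∀ i j, r i j → i ≤ j)
    (A : Fin m → Finset (Fin n)) (hA : ∀ i, (A i).Nonempty)
    (𝔄 : Set (Fin m → Fin n)) (h𝔄ne : 𝔄.Nonempty)
    (hsub : ∀ f ∈ 𝔄, (∀ i, f i ∈ A i) ∧ (∀ i j, r i j → f i ≤ f j))
    (hdown : ∀ f ∈ 𝔄, ∀ g : Fin m → Fin n, (∀ i, g i ∈ A i) →
      (∀ i j, r i j → g i ≤ g j) → (∀ i, g i ≤ f i) → g ∈ 𝔄)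
    (Res : MinMGFreeRes K (Fin m × Fin n)
      (Ideal.span ((fun f : Fin m → Fin n =>
        ∏ i : Fin m, (X (i, f i) : MvPolynomial (Fin m × Fin n) K)) '' 𝔄)))
    (t : ℕ) (dd : Fin m × Fin n →₀ ℕ) :
    IsMinGen (Ideal.span {p : MvPolynomial (Fin m × Fin n) K |
        ∃ b : Res.B t, p = monomial (Res.deg t b) (1 : K)}) dd ↔
      DescribedExp m n r A 𝔄 t dd := by
  let C : Cfg m n := ⟨r, A, 𝔄, hcompat, hsub, hdown⟩
  have hdeg := C.degs K Res t
  rw [C.described_iff t dd]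
  have hset : {p : MvPolynomial (Fin m × Fin n) K |
      ∃ b : Res.B t, p = monomial (Res.deg t b) (1 : K)} =
      (fun b => (monomial (Res.deg t b) (1 : K))) '' Set.univ := by
    ext p
    simp [eq_comm]
  have hmem : ∀ α : Fin m × Fin n →₀ ℕ, monomial α (1 : K) ∈
      Ideal.span {p : MvPolynomial (Fin m × Fin n) K |
        ∃ b : Res.B t, p = monomial (Res.deg t b) (1 : K)} ↔ ∃ b, Res.deg t b ≤ α := by
    intro α
    rw [hset, mem_gen_iff]
    simp
  unfold IsMinGen
  simp only [hmem]
  constructor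
  · rintro ⟨⟨b, hb⟩, h⟩
    exact (hdeg dd).1 ⟨b, h _ hb ⟨b, le_rfl⟩⟩
  · intro h
    obtain ⟨b, hb⟩ := (hdeg dd).2 h
    obtain ⟨S, hS, rfl⟩ := h
    refine ⟨⟨b, hb.le⟩, ?_⟩
    rintro d' hd' ⟨b', hb'⟩
    obtain ⟨T, hT, hTd⟩ := (hdeg _).1 ⟨b', rfl⟩
    have hTS : T ⊆ S := by
      intro x hx
      have h1 := (sdeg_le _ _).1 (hTd.le.trans (hb'.trans hd')) x hx
      rw [sdeg_apply] at h1
      by_contra h2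
      rw [if_neg h2] at h1
      exact h1 rfl
    have hEq : T = S := Finset.eq_of_subset_of_card_le hTS (by rw [hS.2, hT.2])
    subst hEq
    exact le_antisymm hd' (hTd.le.trans hb')
end

section
/- Let m ≥ 3, n ≥ 3, and let P = [m] be a chain. Then the second homological shift ideal HS_2(L(P,n)) of the co-letterplace ideal L(P,n) is not quasi-linear; in particular it does not have a linear resolution. -/
open MvPolynomial

/-- `I` is quasi-linear: for every minimal generator `u`, the colon ideal
(ideal generated by the other minimal generators) : `u` is generated by
variables. -/
def QuasiLinear {K : Type} [Field K] {σ : Type}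
    (I : Ideal (MvPolynomial σ K)) : Prop :=
  ∀ d : σ →₀ ℕ, IsMinGen I d → ∃ S : Set σ,
    (Ideal.span {p | ∃ e : σ →₀ ℕ, IsMinGen I e ∧ e ≠ d ∧
        p = monomial e (1 : K)}).colon (Ideal.span {monomial d (1 : K)}) =
      Ideal.span ((fun s : σ => (X s : MvPolynomial σ K)) '' S)

/-- The scalar "frame" of a minimal multigraded resolution. -/
structure MGFrame (K : Type) [Field K] (σ : Type) (I : Ideal (MvPolynomial σ K)) where
  B : ℕ → Type
  fin : ∀ t, Fintype (B t)
  deg : (t : ℕ) → B t → (σ →₀ ℕ)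
  k : (t : ℕ) → B (t + 1) → B t → K
  kdeg : ∀ t b c, k t b c ≠ 0 → deg t c < deg (t + 1) b
  sum0 : ∀ b, ∑ c, k 0 b c = 0
  sq : ∀ t b c, ∑ b', k (t + 1) b b' * k t b' c = 0
  ex0 : ∀ (a : σ →₀ ℕ) (f : B 0 → K), (∀ c, f c ≠ 0 → deg 0 c ≤ a) → ∑ c, f c = 0 →
    ∃ g : B 1 → K, (∀ b, g b ≠ 0 → deg 1 b ≤ a) ∧ ∀ c, ∑ b, g b * k 0 b c = f c
  ex : ∀ (t : ℕ) (a : σ →₀ ℕ) (f : B (t + 1) → K), (∀ c, f c ≠ 0 → deg (t + 1) c ≤ a) →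
    (∀ c, ∑ b, f b * k t b c = 0) →
    ∃ g : B (t + 2) → K, (∀ b, g b ≠ 0 → deg (t + 2) b ≤ a) ∧
      ∀ c, ∑ b, g b * k (t + 1) b c = f c
  mem : ∀ a : σ →₀ ℕ, monomial a (1 : K) ∈ I ↔ ∃ c, deg 0 c ≤ a

attribute [instance] MGFrame.fin

section lift

variable {K : Type} [Field K] {σ : Type} {B : Type} [Fintype B]

/-- homogeneous lift of a scalar chain. -/
noncomputable def homLift (deg : B → (σ →₀ ℕ)) (a : σ →₀ ℕ) (f : B → K) :
    B →₀ MvPolynomial σ K :=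
  Finsupp.equivFunOnFinite.symm fun b => monomial (a - deg b) (f b)

open Classical in
/-- homogeneous part of degree `a` of a chain. -/
noncomputable def homPart (deg : B → (σ →₀ ℕ)) (a : σ →₀ ℕ) (G : B →₀ MvPolynomial σ K) :
    B → K :=
  fun b => if deg b ≤ a then coeff (a - deg b) (G b) else 0

lemma homPart_supp {B : Type} (deg : B → (σ →₀ ℕ)) (a : σ →₀ ℕ) (G : B →₀ MvPolynomial σ K) (b : B)
    (h : homPart deg a G b ≠ 0) : deg b ≤ a := by
  by_contra h'
  exact h (by simp [homPart, h'])

lemma homPart_homLift (deg : B → (σ →₀ ℕ)) (a : σ →₀ ℕ) (f : B → K)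
    (hf : ∀ b, f b ≠ 0 → deg b ≤ a) : homPart deg a (homLift deg a f) = f := by
  classical
  funext b
  by_cases h : deg b ≤ a
  · simp [homPart, homLift, h, coeff_monomial]
  · have : f b = 0 := by
      by_contra h'
      exact h (hf b h')
    simp [homPart, h, this]

lemma functional_apply (φ : (B →₀ MvPolynomial σ K) →ₗ[MvPolynomial σ K] MvPolynomial σ K)
    (G : B →₀ MvPolynomial σ K) : φ G = ∑ b, G b * φ (Finsupp.single b 1) := by
  classical
  conv_lhs => rw [← Finsupp.univ_sum_single G]
  rw [map_sum]
  refine Finset.sum_congr rfl fun b _ => ?_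
  rw [← smul_eq_mul, ← map_smul]
  simp

lemma functional_homLift (φ : (B →₀ MvPolynomial σ K) →ₗ[MvPolynomial σ K] MvPolynomial σ K)
    (deg : B → (σ →₀ ℕ)) (δ : σ →₀ ℕ) (k : B → K)
    (hφ : ∀ b, φ (Finsupp.single b 1) = monomial (deg b - δ) (k b))
    (hk : ∀ b, k b ≠ 0 → δ ≤ deg b) (a : σ →₀ ℕ) (f : B → K)
    (hf : ∀ b, f b ≠ 0 → deg b ≤ a) :
    φ (homLift deg a f) = monomial (a - δ) (∑ b, f b * k b) := by
  rw [functional_apply, map_sum]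
  refine Finset.sum_congr rfl fun b _ => ?_
  rw [hφ]
  simp only [homLift, Finsupp.equivFunOnFinite_symm_apply_apply, monomial_mul]
  by_cases h : f b * k b = 0
  · simp [h]
  · have h1 := hf b (left_ne_zero_of_mul h)
    have h2 := hk b (right_ne_zero_of_mul h)
    congr 2
    ext x
    have := h1 x
    have := h2 x
    simp only [Finsupp.coe_add, Finsupp.coe_tsub, Pi.add_apply, Pi.sub_apply]
    omega

lemma functional_homPart (φ : (B →₀ MvPolynomial σ K) →ₗ[MvPolynomial σ K] MvPolynomial σ K)
    (deg : B → (σ →₀ ℕ)) (δ : σ →₀ ℕ) (k : B → K)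
    (hφ : ∀ b, φ (Finsupp.single b 1) = monomial (deg b - δ) (k b))
    (hk : ∀ b, k b ≠ 0 → δ ≤ deg b) (a : σ →₀ ℕ) (ha : δ ≤ a) (G : B →₀ MvPolynomial σ K) :
    ∑ b, homPart deg a G b * k b = coeff (a - δ) (φ G) := by
  classical
  rw [functional_apply, coeff_sum]
  refine Finset.sum_congr rfl fun b _ => ?_
  rw [hφ, coeff_mul_monomial']
  by_cases h : k b = 0
  · simp [h]
  have h2 := hk b h
  have h3 : deg b - δ ≤ a - δ ↔ deg b ≤ a := by
    constructor
    · intro h x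
      have := h x
      have := h2 x
      have := ha x
      simp only [Finsupp.coe_tsub, Pi.sub_apply] at *
      omega
    · intro h x
      have := h x
      simp only [Finsupp.coe_tsub, Pi.sub_apply] at *
      omega
  by_cases h4 : deg b ≤ a
  · rw [if_pos (h3.2 h4)]
    simp only [homPart, if_pos h4]
    congr 2
    ext x
    have := h4 x
    have := h2 x
    simp only [Finsupp.coe_tsub, Pi.sub_apply]
    omega
  · rw [if_neg (fun h => h4 (h3.1 h))]
    simp [homPart, h4]

end lift

theorem exists_frame {K : Type} [Field K] {σ : Type} {I : Ideal (MvPolynomial σ K)}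
    (R : MinMGFreeRes K σ I) : ∃ F : MGFrame K σ I,
    ∀ t a, (∃ b, F.deg t b = a) ↔ ∃ b, R.deg t b = a := by
  classical
  let _ : ∀ t, Fintype (R.B t) := fun t => @Fintype.ofFinite _ (R.finB t)
  choose k hk hk' using R.graded_d
  let φ : (t : ℕ) → (c : R.B t) →
      ((R.B (t + 1)) →₀ MvPolynomial σ K) →ₗ[MvPolynomial σ K] MvPolynomial σ K :=
    fun t c => Finsupp.lapply c ∘ₗ R.d t
  have hφ : ∀ t c b, φ t c (Finsupp.single b 1) =
      monomial (R.deg (t + 1) b - R.deg t c) (k t b c) := fun t c b => hk t b c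
  have hk1 : ∀ t c b, k t b c ≠ 0 → R.deg t c ≤ R.deg (t + 1) b := fun t c b h => (hk' t b c h).1
  have hε : ∀ b, R.ε (Finsupp.single b 1) = monomial (R.deg 0 b - 0) ((fun _ => 1) b) := by
    intro b
    simpa using R.graded_eps b
  have hε1 : ∀ b : R.B 0, (fun _ => (1 : K)) b ≠ 0 → 0 ≤ R.deg 0 b := fun b _ => zero_le
  have hd : ∀ t b, homPart (R.deg t) (R.deg (t + 1) b) (R.d t (Finsupp.single b 1)) = k t b := by
    intro t b
    have : R.d t (Finsupp.single b 1) = homLift (R.deg t) (R.deg (t + 1) b) (k t b) := by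
      ext1 c
      simp [homLift, hk]
    rw [this, homPart_homLift]
    exact fun c h => hk1 t c b h
  refine ⟨⟨R.B, inferInstance, R.deg, k, ?_, ?_, ?_, ?_, ?_, ?_⟩, fun _ _ => Iff.rfl⟩
  · intro t b c h
    exact lt_of_le_of_ne (hk' t b c h).1 (hk' t b c h).2
  · intro b
    have h := functional_homPart R.ε (R.deg 0) 0 (fun _ => 1) hε hε1 (R.deg 1 b) zero_le
      (R.d 0 (Finsupp.single b 1))
    have h0 : R.d 0 (Finsupp.single b 1) ∈ LinearMap.ker R.ε := by
      rw [R.exact0]; exact ⟨_, rfl⟩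
    rw [LinearMap.mem_ker.1 h0, hd] at h
    simpa using h
  · intro t b c
    by_cases hc : R.deg t c ≤ R.deg (t + 2) b
    · have h := functional_homPart (φ t c) (R.deg (t + 1)) (R.deg t c) (fun b => k t b c)
        (hφ t c) (hk1 t c) (R.deg (t + 2) b) hc (R.d (t + 1) (Finsupp.single b 1))
      have h0 : R.d (t + 1) (Finsupp.single b 1) ∈ LinearMap.ker (R.d t) := by
        rw [R.exact]; exact ⟨_, rfl⟩
      have h1 : φ t c (R.d (t + 1) (Finsupp.single b 1)) = 0 := by
        simp [φ, LinearMap.mem_ker.1 h0]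
      rw [h1, hd] at h
      simpa using h
    · refine Finset.sum_eq_zero fun b' _ => ?_
      by_contra h
      exact hc ((hk1 _ _ _ (right_ne_zero_of_mul h)).trans (hk1 _ _ _ (left_ne_zero_of_mul h)))
  · intro a f hf hs
    have h := functional_homLift R.ε (R.deg 0) 0 (fun _ => 1) hε hε1 a f hf
    have h0 : homLift (R.deg 0) a f ∈ LinearMap.ker R.ε := by
      rw [LinearMap.mem_ker, h]; simp [hs]
    rw [R.exact0] at h0
    obtain ⟨G, hG⟩ := h0
    refine ⟨homPart (R.deg 1) a G, homPart_supp _ _ _, fun c => ?_⟩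
    by_cases hc : R.deg 0 c ≤ a
    · rw [functional_homPart (φ 0 c) (R.deg 1) (R.deg 0 c) (fun b => k 0 b c)
        (hφ 0 c) (hk1 0 c) a hc G]
      simp [φ, hG, homLift]
    · have : f c = 0 := by
        by_contra h; exact hc (hf c h)
      rw [this]
      refine Finset.sum_eq_zero fun b' _ => ?_
      by_contra h
      exact hc ((hk1 _ _ _ (right_ne_zero_of_mul h)).trans
        (homPart_supp _ _ _ _ (left_ne_zero_of_mul h)))
  · intro t a f hf hs
    have h0 : homLift (R.deg (t + 1)) a f ∈ LinearMap.ker (R.d t) := by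
      rw [LinearMap.mem_ker]
      ext1 c
      have h := functional_homLift (φ t c) (R.deg (t + 1)) (R.deg t c) (fun b => k t b c)
        (hφ t c) (hk1 t c) a f hf
      rw [hs c] at h
      simpa [φ] using h
    rw [R.exact] at h0
    obtain ⟨G, hG⟩ := h0
    refine ⟨homPart (R.deg (t + 2)) a G, homPart_supp _ _ _, fun c => ?_⟩
    by_cases hc : R.deg (t + 1) c ≤ a
    · rw [functional_homPart (φ (t + 1) c) (R.deg (t + 2)) (R.deg (t + 1) c)
        (fun b => k (t + 1) b c) (hφ (t + 1) c) (hk1 (t + 1) c) a hc G]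
      simp [φ, hG, homLift]
    · have : f c = 0 := by
        by_contra h; exact hc (hf c h)
      rw [this]
      refine Finset.sum_eq_zero fun b' _ => ?_
      by_contra h
      exact hc ((hk1 _ _ _ (right_ne_zero_of_mul h)).trans
        (homPart_supp _ _ _ _ (left_ne_zero_of_mul h)))
  · intro a
    have hI : ∀ p, p ∈ I ↔ p ∈ LinearMap.range R.ε := fun p => by rw [R.epi]
    rw [hI]
    constructor
    · rintro ⟨G, hG⟩
      have h := functional_homPart R.ε (R.deg 0) 0 (fun _ => 1) hε hε1 a zero_le G
      rw [hG] at h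
      simp only [tsub_zero, coeff_monomial, if_true, mul_one] at h
      have h1 : ∑ b, homPart (R.deg 0) a G b ≠ 0 := by rw [h]; exact one_ne_zero
      obtain ⟨c, _, hc⟩ := Finset.exists_ne_zero_of_sum_ne_zero h1
      exact ⟨c, homPart_supp _ _ _ _ hc⟩
    · rintro ⟨c, hc⟩
      refine ⟨monomial (a - R.deg 0 c) (1 : K) • Finsupp.single c 1, ?_⟩
      rw [map_smul, R.graded_eps, smul_eq_mul, monomial_mul, tsub_add_cancel_of_le hc, one_mul]

namespace MGFrame

variable {K : Type} [Field K] {σ : Type} {I : Ideal (MvPolynomial σ K)} (F : MGFrame K σ I)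

lemma min_lemma (t : ℕ) (b : F.B (t + 1)) (g : F.B (t + 1) → K)
    (hg : ∀ b', g b' ≠ 0 → F.deg (t + 1) b' < F.deg (t + 1) b)
    (h : ∀ c, ∑ b', g b' * F.k t b' c = F.k t b c) : False := by
  classical
  have hgb : g b = 0 := by
    by_contra h'
    exact lt_irrefl _ (hg b h')
  obtain ⟨g2, h1, h2⟩ := F.ex t (F.deg (t + 1) b) (fun b' => (Pi.single b 1 : F.B (t + 1) → K) b' - g b')
    (by
      intro c hc
      by_cases hcb : c = b
      · rw [hcb]
      · rw [Pi.single_eq_of_ne hcb, zero_sub, neg_ne_zero] at hc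
        exact (hg c hc).le)
    (by
      intro c
      simp only [sub_mul, Finset.sum_sub_distrib, h]
      simp [Pi.single_apply])
  have h3 := h2 b
  simp only [Pi.single_eq_same, hgb, sub_zero] at h3
  have h4 : ∑ b', g2 b' * F.k (t + 1) b' b ≠ 0 := by rw [h3]; exact one_ne_zero
  obtain ⟨b2, _, hb2⟩ := Finset.exists_ne_zero_of_sum_ne_zero h4
  exact absurd (h1 _ (left_ne_zero_of_mul hb2))
    (F.kdeg _ _ _ (right_ne_zero_of_mul hb2)).not_ge

lemma diff0 (c c' : F.B 0) (hne : c ≠ c') (a : σ →₀ ℕ) (hc : F.deg 0 c ≤ a)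
    (hc' : F.deg 0 c' ≤ a) : ∃ g : F.B 1 → K, (∀ b, g b ≠ 0 → F.deg 1 b ≤ a) ∧
      (∀ e, ∑ b, g b * F.k 0 b e = (open Classical in (Pi.single c 1 - Pi.single c' 1 : F.B 0 → K)) e) ∧
      ∃ b, g b ≠ 0 ∧ F.k 0 b c ≠ 0 := by
  classical
  obtain ⟨g, h1, h2⟩ := F.ex0 a (Pi.single c 1 - Pi.single c' 1 : F.B 0 → K)
    (by
      intro e he
      by_cases h : e = c
      · rwa [h]
      by_cases h' : e = c'
      · rwa [h']
      · simp [h, h'] at he)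
    (by simp)
  refine ⟨g, h1, fun e => by convert h2 e, ?_⟩
  have h3 := h2 c
  simp only [Pi.sub_apply, Pi.single_eq_same, Pi.single_eq_of_ne hne, sub_zero] at h3
  have h4 : ∑ b', g b' * F.k 0 b' c ≠ 0 := by rw [h3]; exact one_ne_zero
  obtain ⟨b2, _, hb2⟩ := Finset.exists_ne_zero_of_sum_ne_zero h4
  exact ⟨b2, left_ne_zero_of_mul hb2, right_ne_zero_of_mul hb2⟩

lemma uniq0 (c c' : F.B 0) (h : F.deg 0 c' ≤ F.deg 0 c) : c = c' := by
  by_contra hne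
  obtain ⟨g, h1, -, b, hb, hb'⟩ := F.diff0 c c' hne (F.deg 0 c) le_rfl h
  exact (F.kdeg _ _ _ hb').not_ge (h1 b hb)

lemma exists_face (t : ℕ) (b : F.B (t + 1)) : ∃ c, F.k t b c ≠ 0 := by
  by_contra! h
  exact F.min_lemma t b 0 (by simp) (by simp [h])

lemma exists_face_ne (b : F.B 1) (c : F.B 0) (hc : F.k 0 b c ≠ 0) :
    ∃ c', c' ≠ c ∧ F.k 0 b c' ≠ 0 := by
  classical
  by_contra! h
  have := F.sum0 b
  rw [Finset.sum_eq_single c (fun c' _ h' => h c' h') (by simp)] at this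
  exact hc this

/-- Mayer-Vietoris, step 0 to 1. -/
lemma mv1 (a q r : σ →₀ ℕ)
    (h0 : ∀ c, F.deg 0 c ≤ a → F.deg 0 c ≤ q ∨ F.deg 0 c ≤ r)
    (h1 : ∀ c c', F.deg 0 c ≤ a → F.deg 0 c' ≤ a → F.deg 0 c ≤ q → F.deg 0 c' ≤ r →
      ∃ c'', F.deg 0 c'' ≤ q ∧ F.deg 0 c'' ≤ r ∧ F.deg 0 c'' ≤ F.deg 0 c ⊔ F.deg 0 c')
    (b : F.B 1) (hb : F.deg 1 b ≤ a) : F.deg 1 b ≤ q ∨ F.deg 1 b ≤ r := by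
  classical
  by_contra! hcon
  obtain ⟨hq, hr⟩ := hcon
  set z1 : F.B 0 → K := fun c => if F.deg 0 c ≤ q then F.k 0 b c else 0 with hz1
  set z2 : F.B 0 → K := fun c => if F.deg 0 c ≤ q then 0 else F.k 0 b c with hz2
  have hz : ∀ c, z1 c + z2 c = F.k 0 b c := by
    intro c
    by_cases h : F.deg 0 c ≤ q <;> simp [hz1, hz2, h]
  have s1 : ∀ c, z1 c ≠ 0 → F.deg 0 c ≤ q ∧ F.deg 0 c ≤ F.deg 1 b := by
    intro c hc
    by_cases h : F.deg 0 c ≤ q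
    · simp only [hz1, h, if_true] at hc
      exact ⟨h, (F.kdeg _ _ _ hc).le⟩
    · simp [hz1, h] at hc
  have s2 : ∀ c, z2 c ≠ 0 → F.deg 0 c ≤ r ∧ F.deg 0 c ≤ F.deg 1 b := by
    intro c hc
    by_cases h : F.deg 0 c ≤ q
    · simp [hz2, h] at hc
    · simp only [hz2, h, if_false] at hc
      have := (F.kdeg _ _ _ hc).le
      exact ⟨(h0 c (this.trans hb)).resolve_left h, this⟩
  have hsum : ∑ c, z1 c + ∑ c, z2 c = 0 := by
    rw [← Finset.sum_add_distrib, ← F.sum0 b]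
    exact Finset.sum_congr rfl fun c _ => hz c
  obtain ⟨y, hy1, hy2⟩ : ∃ y : F.B 0 → K,
      (∀ c, y c ≠ 0 → F.deg 0 c ≤ q ∧ F.deg 0 c ≤ r ∧ F.deg 0 c ≤ F.deg 1 b) ∧
      ∑ c, y c = ∑ c, z1 c := by
    by_cases hs : ∑ c, z1 c = 0
    · exact ⟨0, by simp, by simp [hs]⟩
    · have hs2 : ∑ c, z2 c ≠ 0 := by
        intro h
        rw [h, add_zero] at hsum
        exact hs hsum
      obtain ⟨c, _, hc⟩ := Finset.exists_ne_zero_of_sum_ne_zero hs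
      obtain ⟨c', _, hc'⟩ := Finset.exists_ne_zero_of_sum_ne_zero hs2
      obtain ⟨c'', t1, t2, t3⟩ := h1 c c' ((s1 c hc).2.trans hb) ((s2 c' hc').2.trans hb)
        (s1 c hc).1 (s2 c' hc').1
      refine ⟨Pi.single c'' (∑ c, z1 c), ?_, by simp⟩
      intro e he
      by_cases h : e = c''
      · rw [h]
        exact ⟨t1, t2, t3.trans (sup_le (s1 c hc).2 (s2 c' hc').2)⟩
      · simp [h] at he
  have key : ∀ (p : σ →₀ ℕ) (f : F.B 0 → K),
      (∀ c, f c ≠ 0 → F.deg 0 c ≤ p ∧ F.deg 0 c ≤ F.deg 1 b) → ¬ F.deg 1 b ≤ p →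
      ∑ c, f c = 0 → ∃ g : F.B 1 → K, (∀ b', g b' ≠ 0 → F.deg 1 b' < F.deg 1 b) ∧
        ∀ c, ∑ b, g b * F.k 0 b c = f c := by
    intro p f hf hp hs
    obtain ⟨g, hg, hg'⟩ := F.ex0 (p ⊓ F.deg 1 b) f (fun c hc => le_inf (hf c hc).1 (hf c hc).2) hs
    refine ⟨g, fun b' hb' => ?_, hg'⟩
    have := hg b' hb'
    refine lt_of_le_not_ge (this.trans inf_le_right) fun h => hp ?_
    exact h.trans (this.trans inf_le_left)
  obtain ⟨g1, u1, v1⟩ := key q (z1 - y)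
    (by
      intro c hc
      by_cases h : z1 c = 0
      · have : y c ≠ 0 := by
          intro h'
          simp [h, h'] at hc
        exact ⟨(hy1 c this).1, (hy1 c this).2.2⟩
      · exact s1 c h) hq (by simp [Finset.sum_sub_distrib, hy2])
  obtain ⟨g2, u2, v2⟩ := key r (z2 + y)
    (by
      intro c hc
      by_cases h : z2 c = 0
      · have : y c ≠ 0 := by
          intro h'
          simp [h, h'] at hc
        exact (hy1 c this).2
      · exact s2 c h) hr (by
        simp only [Pi.add_apply, Finset.sum_add_distrib]
        rw [hy2, add_comm, hsum])
  refine F.min_lemma 0 b (g1 + g2) ?_ ?_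
  · intro b' hb'
    by_cases h : g1 b' = 0
    · exact u2 b' (fun h' => hb' (by simp [h, h']))
    · exact u1 b' h
  · intro c
    simp only [Pi.add_apply, add_mul, Finset.sum_add_distrib, v1, v2, Pi.sub_apply]
    rw [← hz c]
    ring

/-- Mayer-Vietoris, step 1 to 2. -/
lemma mv2 (a q r : σ →₀ ℕ)
    (h0 : ∀ c, F.deg 1 c ≤ a → F.deg 1 c ≤ q ∨ F.deg 1 c ≤ r)
    (b : F.B 2) (hb : F.deg 2 b ≤ a) : F.deg 2 b ≤ q ∨ F.deg 2 b ≤ r := by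
  classical
  by_contra! hcon
  obtain ⟨hq, hr⟩ := hcon
  set z1 : F.B 1 → K := fun c => if F.deg 1 c ≤ q then F.k 1 b c else 0 with hz1
  set z2 : F.B 1 → K := fun c => if F.deg 1 c ≤ q then 0 else F.k 1 b c with hz2
  have hz : ∀ c, z1 c + z2 c = F.k 1 b c := by
    intro c
    by_cases h : F.deg 1 c ≤ q <;> simp [hz1, hz2, h]
  have s1 : ∀ c, z1 c ≠ 0 → F.deg 1 c ≤ q ∧ F.deg 1 c ≤ F.deg 2 b := by
    intro c hc
    by_cases h : F.deg 1 c ≤ q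
    · simp only [hz1, h, if_true] at hc
      exact ⟨h, (F.kdeg _ _ _ hc).le⟩
    · simp [hz1, h] at hc
  have s2 : ∀ c, z2 c ≠ 0 → F.deg 1 c ≤ r ∧ F.deg 1 c ≤ F.deg 2 b := by
    intro c hc
    by_cases h : F.deg 1 c ≤ q
    · simp [hz2, h] at hc
    · simp only [hz2, h, if_false] at hc
      have := (F.kdeg _ _ _ hc).le
      exact ⟨(h0 c (this.trans hb)).resolve_left h, this⟩
  have hsum : ∀ e, ∑ c, z1 c * F.k 0 c e + ∑ c, z2 c * F.k 0 c e = 0 := by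
    intro e
    rw [← Finset.sum_add_distrib, ← F.sq 0 b e]
    exact Finset.sum_congr rfl fun c _ => by rw [← hz c]; ring
  have hle : ∀ (z : F.B 1 → K) (p : σ →₀ ℕ), (∀ c, z c ≠ 0 → F.deg 1 c ≤ p ∧ F.deg 1 c ≤ F.deg 2 b) →
      ∀ e, ∑ c, z c * F.k 0 c e ≠ 0 → F.deg 0 e ≤ p ∧ F.deg 0 e ≤ F.deg 2 b := by
    intro z p hzp e he
    obtain ⟨c, _, hc⟩ := Finset.exists_ne_zero_of_sum_ne_zero he
    have h1 := hzp c (left_ne_zero_of_mul hc)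
    have h2 := (F.kdeg _ _ _ (right_ne_zero_of_mul hc)).le
    exact ⟨h2.trans h1.1, h2.trans h1.2⟩
  obtain ⟨y, hy1, hy2⟩ := F.ex0 (q ⊓ r ⊓ F.deg 2 b) (fun e => ∑ c, z1 c * F.k 0 c e)
    (by
      intro e he
      have t1 := hle z1 q s1 e he
      have t2 := hle z2 r s2 e (by
        intro h
        have := hsum e
        rw [h, add_zero] at this
        exact he this)
      exact le_inf (le_inf t1.1 t2.1) t1.2)
    (by
      rw [Finset.sum_comm]
      refine Finset.sum_eq_zero fun c _ => ?_
      rw [← Finset.mul_sum, F.sum0, mul_zero])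
  have hy1' : ∀ c, y c ≠ 0 → F.deg 1 c ≤ q ∧ F.deg 1 c ≤ r ∧ F.deg 1 c ≤ F.deg 2 b := by
    intro c hc
    have := hy1 c hc
    exact ⟨this.trans (inf_le_left.trans inf_le_left), this.trans (inf_le_left.trans inf_le_right),
      this.trans inf_le_right⟩
  have key : ∀ (p : σ →₀ ℕ) (f : F.B 1 → K),
      (∀ c, f c ≠ 0 → F.deg 1 c ≤ p ∧ F.deg 1 c ≤ F.deg 2 b) → ¬ F.deg 2 b ≤ p →
      (∀ e, ∑ c, f c * F.k 0 c e = 0) →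
      ∃ g : F.B 2 → K, (∀ b', g b' ≠ 0 → F.deg 2 b' < F.deg 2 b) ∧
        ∀ c, ∑ b, g b * F.k 1 b c = f c := by
    intro p f hf hp hs
    obtain ⟨g, hg, hg'⟩ := F.ex 0 (p ⊓ F.deg 2 b) f (fun c hc => le_inf (hf c hc).1 (hf c hc).2) hs
    refine ⟨g, fun b' hb' => ?_, hg'⟩
    have := hg b' hb'
    refine lt_of_le_not_ge (this.trans inf_le_right) fun h => hp ?_
    exact h.trans (this.trans inf_le_left)
  obtain ⟨g1, u1, v1⟩ := key q (z1 - y)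
    (by
      intro c hc
      by_cases h : z1 c = 0
      · have : y c ≠ 0 := by
          intro h'
          simp [h, h'] at hc
        exact ⟨(hy1' c this).1, (hy1' c this).2.2⟩
      · exact s1 c h) hq (by
        intro e
        simp only [Pi.sub_apply, sub_mul, Finset.sum_sub_distrib]
        rw [hy2, sub_self])
  obtain ⟨g2, u2, v2⟩ := key r (z2 + y)
    (by
      intro c hc
      by_cases h : z2 c = 0
      · have : y c ≠ 0 := by
          intro h'
          simp [h, h'] at hc
        exact (hy1' c this).2
      · exact s2 c h) hr (by
        intro e
        simp only [Pi.add_apply, add_mul, Finset.sum_add_distrib]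
        rw [hy2, add_comm, hsum])
  refine F.min_lemma 1 b (g1 + g2) ?_ ?_
  · intro b' hb'
    by_cases h : g1 b' = 0
    · exact u2 b' (fun h' => hb' (by simp [h, h']))
    · exact u1 b' h
  · intro c
    simp only [Pi.add_apply, add_mul, Finset.sum_add_distrib, v1, v2, Pi.sub_apply]
    rw [← hz c]
    ring

lemma mv (a q r : σ →₀ ℕ)
    (h0 : ∀ c, F.deg 0 c ≤ a → F.deg 0 c ≤ q ∨ F.deg 0 c ≤ r)
    (h1 : ∀ c c', F.deg 0 c ≤ a → F.deg 0 c' ≤ a → F.deg 0 c ≤ q → F.deg 0 c' ≤ r →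
      ∃ c'', F.deg 0 c'' ≤ q ∧ F.deg 0 c'' ≤ r ∧ F.deg 0 c'' ≤ F.deg 0 c ⊔ F.deg 0 c')
    (b : F.B 2) (hb : F.deg 2 b ≤ a) : F.deg 2 b ≤ q ∨ F.deg 2 b ≤ r :=
  F.mv2 a q r (F.mv1 a q r h0 h1) b hb

lemma lcm2 (a q : σ →₀ ℕ) (h0 : ∀ c, F.deg 0 c ≤ a → F.deg 0 c ≤ q)
    (b : F.B 2) (hb : F.deg 2 b ≤ a) : F.deg 2 b ≤ q := by
  have := F.mv a q q (fun c hc => Or.inl (h0 c hc))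
    (fun c c' _ _ hc _ => ⟨c, hc, hc, le_sup_left⟩) b hb
  simpa using this

/-- Below a second syzygy there are at least three generators. -/
lemma three (b : F.B 2) : ∃ c1 c2 c3 : F.B 0, c1 ≠ c2 ∧ c1 ≠ c3 ∧ c2 ≠ c3 ∧
    F.deg 0 c1 ≤ F.deg 2 b ∧ F.deg 0 c2 ≤ F.deg 2 b ∧ F.deg 0 c3 ≤ F.deg 2 b := by
  obtain ⟨e, he⟩ := F.exists_face 1 b
  obtain ⟨c1, h1⟩ := F.exists_face 0 e
  obtain ⟨c2, h12, h2⟩ := F.exists_face_ne e c1 h1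
  have ke := F.kdeg _ _ _ he
  have k1 := F.kdeg _ _ _ h1
  have k2 := F.kdeg _ _ _ h2
  have : ∃ c3, F.deg 0 c3 ≤ F.deg 2 b ∧ ¬ F.deg 0 c3 ≤ F.deg 0 c1 ⊔ F.deg 0 c2 := by
    by_contra! h
    have := F.lcm2 (F.deg 2 b) _ h b le_rfl
    exact absurd (this.trans (sup_le k1.le k2.le)) ke.not_ge
  obtain ⟨c3, h3, h3'⟩ := this
  refine ⟨c1, c2, c3, h12.symm, ?_, ?_, k1.le.trans ke.le, k2.le.trans ke.le, h3⟩
  · rintro rfl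
    exact h3' le_sup_left
  · rintro rfl
    exact h3' le_sup_right

lemma triple (c1 c2 c3 : F.B 0) (h12 : c1 ≠ c2) (h13 : c1 ≠ c3) (h23 : c2 ≠ c3)
    (m13 : F.deg 0 c1 ⊓ F.deg 0 c3 ≤ F.deg 0 c2) (m23 : F.deg 0 c2 ⊓ F.deg 0 c3 ≤ F.deg 0 c1)
    (a : σ →₀ ℕ) (ha1 : F.deg 0 c1 ≤ a) (ha2 : F.deg 0 c2 ≤ a) (ha3 : F.deg 0 c3 ≤ a) :
    ∃ b, F.deg 2 b ≤ a := by
  classical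
  by_contra! hcon
  obtain ⟨w12, p1, q1, b, hb, hb'⟩ := F.diff0 c1 c2 h12 _ le_sup_left le_sup_right
  obtain ⟨w23, p2, q2, -⟩ := F.diff0 c2 c3 h23 _ le_sup_left le_sup_right
  obtain ⟨w31, p3, q3, -⟩ := F.diff0 c3 c1 h13.symm _ le_sup_left le_sup_right
  obtain ⟨g, hg, hg'⟩ := F.ex 0 a (w12 + w23 + w31)
    (by
      intro c hc
      by_cases h1 : w12 c = 0
      · by_cases h2 : w23 c = 0
        · have h3 : w31 c ≠ 0 := by
            intro h3
            simp [h1, h2, h3] at hc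
          exact (p3 c h3).trans (sup_le ha3 ha1)
        · exact (p2 c h2).trans (sup_le ha2 ha3)
      · exact (p1 c h1).trans (sup_le ha1 ha2))
    (by
      intro c
      simp only [Pi.add_apply, add_mul, Finset.sum_add_distrib]
      rw [q1, q2, q3]
      simp only [Pi.sub_apply]
      ring)
  have hg0 : ∀ b, g b = 0 := by
    intro b
    by_contra h
    exact hcon b (hg b h)
  have hz := hg' b
  simp only [hg0, zero_mul, Finset.sum_const_zero, Pi.add_apply] at hz
  have k1 := F.kdeg _ _ _ hb'
  have d1 := p1 b hb
  by_cases h2 : w23 b = 0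
  · have h3 : w31 b ≠ 0 := by
      intro h3
      simp only [h2, h3, add_zero] at hz
      exact hb hz.symm
    refine k1.not_ge fun x => ?_
    have e1 := d1 x
    have e2 := p3 b h3 x
    have e3 := m23 x
    simp only [Finsupp.sup_apply, Finsupp.inf_apply] at e1 e2 e3
    show F.deg 1 b x ≤ F.deg 0 c1 x
    omega
  · have : F.deg 1 b ≤ F.deg 0 c2 := by
      intro x
      have e1 := d1 x
      have e2 := p2 b h2 x
      have e3 := m13 x
      simp only [Finsupp.sup_apply, Finsupp.inf_apply] at e1 e2 e3
      omega
    exact h12 (F.uniq0 c2 c1 (k1.le.trans this)).symm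

end MGFrame

section final

variable {K : Type} [Field K] {σ : Type}

lemma mem_span_mon (D : Set (σ →₀ ℕ)) (a : σ →₀ ℕ) :
    monomial a (1 : K) ∈ Ideal.span {p : MvPolynomial σ K | ∃ e, e ∈ D ∧ p = monomial e (1 : K)} ↔
      ∃ e ∈ D, e ≤ a := by
  classical
  have : {p : MvPolynomial σ K | ∃ e, e ∈ D ∧ p = monomial e (1 : K)} =
      (fun s => monomial s (1 : K)) '' D := by
    ext p
    simp [eq_comm]
  rw [this, mem_ideal_span_monomial_image]
  simp [support_monomial]

theorem not_quasiLinear [Finite σ] (J : Ideal (MvPolynomial σ K)) (D : Set (σ →₀ ℕ))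
    (hJ : ∀ a, monomial a (1 : K) ∈ J ↔ ∃ e ∈ D, e ≤ a) (u v : σ →₀ ℕ) (hu : u ∈ D)
    (hv : ∃ e ∈ D, e ≤ v) (huv : ¬ u ≤ v) (hx : ∃ x, u x < v x)
    (HB : ∀ e ∈ D, ∀ x, u x < v x → e ≤ u + Finsupp.single x 1 → e = u) :
    ¬ QuasiLinear J := by
  classical
  intro hQ
  have hmin : IsMinGen J u := by
    refine ⟨(hJ u).2 ⟨u, hu, le_rfl⟩, fun d' hd' hm => ?_⟩
    obtain ⟨e, he, hed⟩ := (hJ d').1 hm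
    obtain ⟨x, hx⟩ := hx
    have := HB e he x hx ((hed.trans hd').trans le_self_add)
    exact le_antisymm hd' (this ▸ hed)
  obtain ⟨S, hS⟩ := hQ u hmin
  have hset : {p : MvPolynomial σ K | ∃ e : σ →₀ ℕ, IsMinGen J e ∧ e ≠ u ∧ p = monomial e (1 : K)}
      = {p | ∃ e, e ∈ {e : σ →₀ ℕ | IsMinGen J e ∧ e ≠ u} ∧ p = monomial e (1 : K)} := by
    ext p
    simp [and_assoc]
  have hcol : ∀ c : σ →₀ ℕ, monomial c (1 : K) ∈ Ideal.span ((fun s : σ => (X s : MvPolynomial σ K)) '' S) ↔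
      ∃ e, (IsMinGen J e ∧ e ≠ u) ∧ e ≤ c + u := by
    intro c
    rw [← hS, hset, Submodule.mem_colon]
    constructor
    · intro h
      have := h (monomial u 1) (Ideal.subset_span rfl)
      rw [smul_eq_mul, monomial_mul, one_mul, mem_span_mon] at this
      exact this
    · intro h p hp
      obtain ⟨r, rfl⟩ := Ideal.mem_span_singleton'.1 hp
      rw [smul_eq_mul, mul_left_comm, monomial_mul, one_mul]
      exact Ideal.mul_mem_left _ _ ((mem_span_mon _ _).2 h)
  have h1 : monomial (v - u) (1 : K) ∈ Ideal.span ((fun s : σ => (X s : MvPolynomial σ K)) '' S) := by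
    rw [hcol]
    obtain ⟨d, hd, hdm⟩ := exists_minimal_le_of_wellFoundedLT
      (fun d => monomial d (1 : K) ∈ J) v ((hJ v).2 hv)
    refine ⟨d, ⟨⟨hdm.1, fun d' h h' => le_antisymm h (hdm.2 h' h)⟩, ?_⟩, hd.trans le_tsub_add⟩
    rintro rfl
    exact huv hd
  rw [mem_ideal_span_X_image] at h1
  obtain ⟨s, hs, hsv⟩ := h1 (v - u) (by simp [support_monomial])
  have hlt : u s < v s := by
    simp only [Finsupp.coe_tsub, Pi.sub_apply] at hsv
    omega
  have h2 : monomial (Finsupp.single s 1) (1 : K) ∈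
      Ideal.span ((fun s : σ => (X s : MvPolynomial σ K)) '' S) := Ideal.subset_span ⟨s, hs, rfl⟩
  rw [hcol] at h2
  obtain ⟨e, ⟨he, hne⟩, hle⟩ := h2
  obtain ⟨e', he', hee⟩ := (hJ e).1 he.1
  have h3 := HB e' he' s hlt (hee.trans (by rwa [add_comm]))
  have h4 := he.2 e' hee ((hJ e').2 ⟨e', he', le_rfl⟩)
  exact hne (h4.symm.trans h3)

lemma eq_of_le_of_sum [Finite σ] (a b : σ →₀ ℕ) (h : a ≤ b)
    (hs : (b.sum fun _ e => e) ≤ a.sum fun _ e => e) : a = b := by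
  classical
  obtain ⟨c, rfl⟩ := exists_add_of_le h
  rw [Finsupp.sum_add_index' (by simp) (by simp)] at hs
  have : (c.sum fun _ e => e) = 0 := by omega
  have hc : c = 0 := by
    ext x
    by_contra hx
    have hx' : x ∈ c.support := by simpa using hx
    have := Finset.sum_eq_zero_iff.1 this x hx'
    exact hx this
  simp [hc]

theorem not_linear [Finite σ] (J : Ideal (MvPolynomial σ K)) (D : Set (σ →₀ ℕ))
    (hJ : ∀ a, monomial a (1 : K) ∈ J ↔ ∃ e ∈ D, e ≤ a) (u v : σ →₀ ℕ) (hu : u ∈ D)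
    (hv : ∃ e ∈ D, e ≤ v) (huv : ¬ u ≤ v) (hx : ∃ x, u x < v x)
    (HB : ∀ e ∈ D, ∀ x, u x < v x → e ≤ u + Finsupp.single x 1 → e = u)
    (F : MGFrame K σ J) (N : ℕ) (hl0 : ∀ b, ((F.deg 0 b).sum fun _ e => e) = N)
    (hl1 : ∀ b, ((F.deg 1 b).sum fun _ e => e) = N + 1) : False := by
  classical
  have hD : ∀ c, ∃ e ∈ D, e ≤ F.deg 0 c := fun c => (hJ _).1 ((F.mem _).2 ⟨c, le_rfl⟩)
  obtain ⟨cu, hcu⟩ := (F.mem u).1 ((hJ u).2 ⟨u, hu, le_rfl⟩)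
  obtain ⟨cv, hcv⟩ := (F.mem v).1 ((hJ v).2 hv)
  have hcu' : F.deg 0 cu = u := by
    obtain ⟨x, hx⟩ := hx
    obtain ⟨e, he, hle⟩ := hD cu
    have := HB e he x hx ((hle.trans hcu).trans le_self_add)
    exact le_antisymm hcu (this ▸ hle)
  have hne : cu ≠ cv := by
    rintro rfl
    exact huv (hcu' ▸ hcv)
  obtain ⟨g, hg, -, b, hb, hb'⟩ := F.diff0 cu cv hne (u ⊔ v) (hcu.trans le_sup_left)
    (hcv.trans le_sup_right)
  have hble := hg b hb
  have hlt := F.kdeg _ _ _ hb'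
  rw [hcu'] at hlt
  obtain ⟨x, hx⟩ : ∃ x, u x < F.deg 1 b x := by
    by_contra! h
    exact hlt.not_ge h
  have hxv : u x < v x := by
    have := hble x
    simp only [Finsupp.sup_apply] at this
    omega
  have hbeq : u + Finsupp.single x 1 = F.deg 1 b := by
    refine eq_of_le_of_sum _ _ ?_ ?_
    · intro y
      have := hlt.le y
      by_cases hy : x = y
      · subst hy
        simp only [Finsupp.add_apply, Finsupp.single_eq_same]
        omega
      · simpa [Finsupp.single_apply, hy] using this
    · rw [hl1, Finsupp.sum_add_index' (by simp) (by simp), ← hcu', hl0]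
      simp
  obtain ⟨c, hc, hkc⟩ := F.exists_face_ne b cu hb'
  have hcb := F.kdeg _ _ _ hkc
  obtain ⟨e, he, hle⟩ := hD c
  have heu := HB e he x hxv (by rw [hbeq]; exact hle.trans hcb.le)
  exact hc (F.uniq0 c cu (by rw [hcu', ← heu]; exact hle))

end final

section comb

variable {m n : ℕ}

/-- exponent vector of `∏ i, X (i, f i)`. -/
noncomputable def expU (f : Fin m → Fin n) : Fin m × Fin n →₀ ℕ :=
  Finsupp.equivFunOnFinite.symm fun x => if f x.1 = x.2 then 1 else 0

open Classical in
/-- exponent vector of a squarefree monomial. -/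
noncomputable def expI (A : ℕ → ℕ → Prop) : Fin m × Fin n →₀ ℕ :=
  Finsupp.equivFunOnFinite.symm fun x => if A x.1.val x.2.val then 1 else 0

lemma expU_apply (f : Fin m → Fin n) (x) : expU f x = if f x.1 = x.2 then 1 else 0 := rfl

open Classical in
lemma expI_apply (A : ℕ → ℕ → Prop) (x : Fin m × Fin n) :
    expI A x = if A x.1.val x.2.val then 1 else 0 := rfl

lemma expU_le (f : Fin m → Fin n) (a : Fin m × Fin n →₀ ℕ) :
    expU f ≤ a ↔ ∀ i, 1 ≤ a (i, f i) := by
  constructor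
  · intro h i
    simpa [expU_apply] using h (i, f i)
  · rintro h ⟨i, j⟩
    rw [expU_apply]
    by_cases hij : f i = j
    · subst hij
      simpa using h i
    · simp [hij]

lemma expU_le_expI (f : Fin m → Fin n) (A : ℕ → ℕ → Prop) :
    expU f ≤ expI A ↔ ∀ i, A i.val (f i).val := by
  rw [expU_le]
  refine forall_congr' fun i => ?_
  rw [expI_apply]
  by_cases h : A i.val (f i).val <;> simp [h]

lemma prod_X_eq {K : Type} [Field K] (f : Fin m → Fin n) :
    ∏ i : Fin m, (X (i, f i) : MvPolynomial (Fin m × Fin n) K) = monomial (expU f) 1 := by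
  classical
  have : expU f = ∑ i : Fin m, Finsupp.single (i, f i) 1 := by
    ext ⟨i, j⟩
    rw [Finsupp.finsetSum_apply, expU_apply, Finset.sum_eq_single i]
    · simp [Finsupp.single_apply]
    · intro b _ hb
      simp [Finsupp.single_apply, hb]
    · simp
  rw [this, monomial_sum_one]
  rfl

lemma expU_inj_le (f g : Fin m → Fin n) (h : expU f ≤ expU g) : f = g := by
  rw [expU_le] at h
  funext i
  have := h i
  rw [expU_apply] at this
  by_contra hne
  simp [Ne.symm hne] at this

/-- the set of `u`. -/
def setU (i j : ℕ) : Prop := (i = 0 ∧ j ≤ 2) ∨ j = 2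

/-- the set of `v`. -/
def setV (i j : ℕ) : Prop := (i < 2 ∧ j = 0) ∨ (i = 2 ∧ j ≤ 2) ∨ (2 < i ∧ j = 2)

/-- the auxiliary set. -/
def setQ (i j : ℕ) : Prop := (i ≤ 1 ∧ j = 0) ∨ (1 ≤ i ∧ j = 2)

/-- generators are monotone maps. -/
structure GenFrame {K : Type} [Field K] {I : Ideal (MvPolynomial (Fin m × Fin n) K)}
    (F : MGFrame K (Fin m × Fin n) I) : Prop where
  gen : ∀ c, ∃ f : Fin m → Fin n, Monotone f ∧ F.deg 0 c = expU f
  cell : ∀ f : Fin m → Fin n, Monotone f → ∃ c, F.deg 0 c = expU f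

lemma genFrame {K : Type} [Field K] (F : MGFrame K (Fin m × Fin n)
      (Ideal.span {p : MvPolynomial (Fin m × Fin n) K |
        ∃ f : Fin m → Fin n, Monotone f ∧ p = ∏ i : Fin m, X (i, f i)})) : GenFrame F := by
  have hmem : ∀ a, (∃ c, F.deg 0 c ≤ a) ↔ ∃ f : Fin m → Fin n, Monotone f ∧ expU f ≤ a := by
    intro a
    rw [← F.mem]
    have : {p : MvPolynomial (Fin m × Fin n) K |
        ∃ f : Fin m → Fin n, Monotone f ∧ p = ∏ i : Fin m, X (i, f i)} =
        {p | ∃ e, e ∈ {e | ∃ f : Fin m → Fin n, Monotone f ∧ e = expU f} ∧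
          p = monomial e (1 : K)} := by
      ext p
      simp only [prod_X_eq, Set.mem_ofPred_eq]
      constructor
      · rintro ⟨f, hf, rfl⟩
        exact ⟨_, ⟨f, hf, rfl⟩, rfl⟩
      · rintro ⟨_, ⟨f, hf, rfl⟩, rfl⟩
        exact ⟨f, hf, rfl⟩
    rw [this, mem_span_mon]
    constructor
    · rintro ⟨_, ⟨f, hf, rfl⟩, h⟩
      exact ⟨f, hf, h⟩
    · rintro ⟨f, hf, h⟩
      exact ⟨_, ⟨f, hf, rfl⟩, h⟩
  have gen : ∀ c, ∃ f : Fin m → Fin n, Monotone f ∧ F.deg 0 c = expU f := by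
    intro c
    obtain ⟨f, hf, hfc⟩ := (hmem (F.deg 0 c)).1 ⟨c, le_rfl⟩
    obtain ⟨c', hc'⟩ := (hmem (expU f)).2 ⟨f, hf, le_rfl⟩
    have := F.uniq0 c c' (hc'.trans hfc)
    subst this
    exact ⟨f, hf, le_antisymm hc' hfc⟩
  refine ⟨gen, fun f hf => ?_⟩
  obtain ⟨c, hc⟩ := (hmem (expU f)).2 ⟨f, hf, le_rfl⟩
  obtain ⟨g, hg, hgc⟩ := gen c
  rw [hgc] at hc
  rw [expU_inj_le g f hc] at hgc
  exact ⟨c, hgc⟩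

/-- existence of a second syzygy from a row -/
lemma exists_row {K : Type} [Field K] {I : Ideal (MvPolynomial (Fin m × Fin n) K)}
    (F : MGFrame K (Fin m × Fin n) I) (hF : GenFrame F) (hn : 3 ≤ n) (r : ℕ) (hr : r < m)
    (A : ℕ → ℕ → Prop)
    (hA : ∀ i j, A i j ↔ (i < r ∧ j = 0) ∨ (i = r ∧ j ≤ 2) ∨ (r < i ∧ j = 2)) :
    ∃ b, F.deg 2 b ≤ expI A := by
  let f : Fin 3 → Fin m → Fin n := fun s i =>
    if i.val < r then ⟨0, by omega⟩ else if i.val = r then ⟨s.val, by omega⟩ else ⟨2, by omega⟩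
  have hf : ∀ s i, (f s i).val = if i.val < r then 0 else if i.val = r then s.val else 2 := by
    intro s i
    simp only [f]
    split_ifs <;> rfl
  have hmono : ∀ s, Monotone (f s) := by
    intro s i j hij
    rw [Fin.le_def, hf, hf]
    have : i.val ≤ j.val := hij
    have := s.2
    split_ifs <;> omega
  have hle : ∀ s, expU (f s) ≤ expI A := by
    intro s
    rw [expU_le_expI]
    intro i
    rw [hA, hf]
    have := s.2
    split_ifs <;> omega
  have hinf : ∀ s1 s2 s3, s1 ≠ s2 → expU (f s1) ⊓ expU (f s2) ≤ expU (f s3) := by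
    intro s1 s2 s3 hne x
    rw [Finsupp.inf_apply, expU_apply, expU_apply, expU_apply]
    have hne' : s1.val ≠ s2.val := fun h => hne (Fin.ext h)
    by_cases h1 : f s1 x.1 = x.2
    · by_cases h2 : f s2 x.1 = x.2
      · have h3 : f s3 x.1 = x.2 := by
          rw [Fin.ext_iff, hf] at h1 h2 ⊢
          split_ifs at * <;> omega
        simp [h1, h2, h3]
      · simp [h2]
    · simp [h1]
  have hdist : ∀ s1 s2, s1 ≠ s2 → expU (f s1) ≠ expU (f s2) := by
    intro s1 s2 hne h
    have h1 := congrFun (expU_inj_le _ _ h.le) ⟨r, hr⟩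
    rw [Fin.ext_iff, hf, hf] at h1
    simp only [lt_irrefl, if_false, if_true] at h1
    exact hne (Fin.ext h1)
  choose c hc using fun s => hF.cell (f s) (hmono s)
  have hcd : ∀ s1 s2, s1 ≠ s2 → c s1 ≠ c s2 := by
    intro s1 s2 hne h
    apply hdist s1 s2 hne
    rw [← hc, ← hc, h]
  refine F.triple (c 0) (c 1) (c 2) (hcd _ _ (by decide)) (hcd _ _ (by decide))
    (hcd _ _ (by decide)) ?_ ?_ _ ?_ ?_ ?_
  · rw [hc, hc, hc]; exact hinf _ _ _ (by decide)
  · rw [hc, hc, hc]; exact hinf _ _ _ (by decide)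
  all_goals rw [hc]; exact hle _

/-- second syzygies dividing `u` equal `u` -/
lemma le_u {K : Type} [Field K] {I : Ideal (MvPolynomial (Fin m × Fin n) K)}
    (F : MGFrame K (Fin m × Fin n) I) (hF : GenFrame F) (hm : 3 ≤ m)
    (b : F.B 2) (hb : F.deg 2 b ≤ expI setU) : F.deg 2 b = expI setU := by
  refine le_antisymm hb ?_
  obtain ⟨c1, c2, c3, h12, h13, h23, l1, l2, l3⟩ := F.three b
  have main : ∀ c, F.deg 0 c ≤ F.deg 2 b → ∃ f : Fin m → Fin n, F.deg 0 c = expU f ∧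
      ((f ⟨0, by omega⟩).val ≤ 2) ∧ (∀ i, 1 ≤ i.val → (f i).val = 2) ∧
      ∀ i, 1 ≤ F.deg 2 b (i, f i) := by
    intro c hc
    obtain ⟨f, hf, hcf⟩ := hF.gen c
    have h1 := hc.trans hb
    rw [hcf, expU_le_expI] at h1
    rw [hcf, expU_le] at hc
    refine ⟨f, hcf, ?_, ?_, hc⟩
    · have := h1 ⟨0, by omega⟩
      simp only [setU] at this
      omega
    · intro i hi
      have := h1 i
      simp only [setU] at this
      omega
  obtain ⟨f1, e1, a1, b1, d1⟩ := main c1 l1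
  obtain ⟨f2, e2, a2, b2, d2⟩ := main c2 l2
  obtain ⟨f3, e3, a3, b3, d3⟩ := main c3 l3
  have hdist : ∀ (c c' : F.B 0) (f f' : Fin m → Fin n), c ≠ c' → F.deg 0 c = expU f →
      F.deg 0 c' = expU f' → (∀ i, 1 ≤ i.val → (f i).val = 2) →
      (∀ i, 1 ≤ i.val → (f' i).val = 2) →
      (f ⟨0, by omega⟩).val ≠ (f' ⟨0, by omega⟩).val := by
    intro c c' f f' hne h h' hf hf' heq
    apply hne
    apply F.uniq0
    have : f = f' := by
      funext i
      by_cases hi : 1 ≤ i.val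
      · rw [Fin.ext_iff, hf i hi, hf' i hi]
      · have : i = ⟨0, by omega⟩ := Fin.ext (by simp; omega)
        rw [this, Fin.ext_iff, heq]
    rw [h, h', this]
  have n12 := hdist _ _ _ _ h12 e1 e2 b1 b2
  have n13 := hdist _ _ _ _ h13 e1 e3 b1 b3
  have n23 := hdist _ _ _ _ h23 e2 e3 b2 b3
  rintro ⟨i, j⟩
  rw [expI_apply]
  split_ifs with h
  · by_cases hi : 1 ≤ i.val
    · have : f1 i = j := by
        rw [Fin.ext_iff, b1 i hi]
        simp only [setU] at h
        omega
      rw [← this]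
      exact d1 i
    · have hi0 : i = ⟨0, by omega⟩ := Fin.ext (by simp; omega)
      have hj : j.val ≤ 2 := by
        simp only [setU] at h
        omega
      have : (f1 ⟨0, by omega⟩).val = j.val ∨ (f2 ⟨0, by omega⟩).val = j.val ∨
        (f3 ⟨0, by omega⟩).val = j.val := by omega
      rw [← hi0, ← Fin.ext_iff, ← Fin.ext_iff, ← Fin.ext_iff] at this
      rcases this with h | h | h
      · rw [← h]; exact d1 i
      · rw [← h]; exact d2 i
      · rw [← h]; exact d3 i
  · exact Nat.zero_le _

/-- no second syzygies divide the auxiliary monomial -/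
lemma not_le_q {K : Type} [Field K] {I : Ideal (MvPolynomial (Fin m × Fin n) K)}
    (F : MGFrame K (Fin m × Fin n) I) (hF : GenFrame F) (hm : 3 ≤ m)
    (b : F.B 2) (hb : F.deg 2 b ≤ expI setQ) : False := by
  obtain ⟨c1, c2, c3, h12, h13, h23, l1, l2, l3⟩ := F.three b
  have main : ∀ c, F.deg 0 c ≤ F.deg 2 b → ∃ f : Fin m → Fin n, F.deg 0 c = expU f ∧
      ∀ i, setQ i.val (f i).val := by
    intro c hc
    obtain ⟨f, hf, hcf⟩ := hF.gen c
    have h1 := hc.trans hb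
    rw [hcf, expU_le_expI] at h1
    exact ⟨f, hcf, h1⟩
  obtain ⟨f1, e1, a1⟩ := main c1 l1
  obtain ⟨f2, e2, a2⟩ := main c2 l2
  obtain ⟨f3, e3, a3⟩ := main c3 l3
  have hdist : ∀ (c c' : F.B 0) (f f' : Fin m → Fin n), c ≠ c' → F.deg 0 c = expU f →
      F.deg 0 c' = expU f' → (∀ i, setQ i.val (f i).val) → (∀ i, setQ i.val (f' i).val) →
      (f ⟨1, by omega⟩).val ≠ (f' ⟨1, by omega⟩).val := by
    intro c c' f f' hne h h' hf hf' heq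
    apply hne
    apply F.uniq0
    have : f = f' := by
      funext i
      by_cases hi : i.val = 1
      · have : i = ⟨1, by omega⟩ := Fin.ext hi
        rw [this, Fin.ext_iff, heq]
      · have t1 := hf i
        have t2 := hf' i
        simp only [setQ] at t1 t2
        rw [Fin.ext_iff]
        omega
    rw [h, h', this]
  have n12 := hdist _ _ _ _ h12 e1 e2 a1 a2
  have n13 := hdist _ _ _ _ h13 e1 e3 a1 a3
  have n23 := hdist _ _ _ _ h23 e2 e3 a2 a3
  have t1 := a1 ⟨1, by omega⟩
  have t2 := a2 ⟨1, by omega⟩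
  have t3 := a3 ⟨1, by omega⟩
  simp only [setQ] at t1 t2 t3
  omega

lemma main_B {K : Type} [Field K] {I : Ideal (MvPolynomial (Fin m × Fin n) K)}
    (F : MGFrame K (Fin m × Fin n) I) (hF : GenFrame F) (hm : 3 ≤ m) (hn : 3 ≤ n)
    (b : F.B 2) (x : Fin m × Fin n) (hx : (expI setU : Fin m × Fin n →₀ ℕ) x < expI setV x)
    (hb : F.deg 2 b ≤ expI setU + Finsupp.single x 1) : F.deg 2 b = expI setU := by
  classical
  apply le_u F hF hm
  have hxs : setV x.1.val x.2.val ∧ ¬ setU x.1.val x.2.val := by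
    rw [expI_apply, expI_apply] at hx
    by_cases h1 : setU x.1.val x.2.val <;> by_cases h2 : setV x.1.val x.2.val <;> simp_all
  have hgen : ∀ f : Fin m → Fin n, expU f ≤ expI setU + Finsupp.single x 1 →
      ∀ i, setU i.val (f i).val ∨ (i = x.1 ∧ f i = x.2) := by
    intro f hf i
    have := (expU_le f _).1 hf i
    by_contra! h
    have hne : x ≠ (i, f i) := by
      rintro rfl
      exact h.2 rfl rfl
    simp [expI_apply, h.1, Finsupp.single_apply, hne] at this
  by_cases hx1 : x.1.val = 1
  · have hx2 : x.2.val = 0 := by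
      have := hxs.1
      simp only [setV] at this
      omega
    have hor := F.mv (expI setU + Finsupp.single x 1) (expI setQ) (expI setU) (by
        intro c hc
        obtain ⟨f, hf, hcf⟩ := hF.gen c
        rw [hcf] at hc ⊢
        rw [expU_le_expI, expU_le_expI]
        have h := hgen f hc
        by_cases h1 : (f ⟨1, by omega⟩).val = 0
        · left
          intro i
          have hi := h i
          rw [Fin.ext_iff, Fin.ext_iff] at hi
          simp only [setU, setQ] at hi ⊢
          by_cases hi0 : i.val = 0
          · have : i ≤ ⟨1, by omega⟩ := by
              rw [Fin.le_def]; simp only; omega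
            have := hf this
            rw [Fin.le_def] at this
            omega
          · omega
        · right
          intro i
          rcases h i with h | h
          · exact h
          · exfalso
            have : i = ⟨1, by omega⟩ := by rw [h.1]; exact Fin.ext hx1
            rw [← this, h.2] at h1
            exact h1 hx2)
      (by
        intro c c' _ _ hc hc'
        obtain ⟨f, hf, hcf⟩ := hF.gen c
        obtain ⟨f', hf', hcf'⟩ := hF.gen c'
        rw [hcf] at hc
        rw [hcf'] at hc'
        rw [hcf, hcf']
        rw [expU_le_expI] at hc hc'
        let g : Fin m → Fin n := fun i => if i.val = 0 then ⟨0, by omega⟩ else ⟨2, by omega⟩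
        have hg : ∀ i, (g i).val = if i.val = 0 then 0 else 2 := by
          intro i
          simp only [g]
          split_ifs <;> rfl
        obtain ⟨c'', hc''⟩ := hF.cell g (by
          intro i j hij
          rw [Fin.le_def, hg, hg]
          have : i.val ≤ j.val := hij
          split_ifs <;> omega)
        refine ⟨c'', ?_, ?_, ?_⟩
        · rw [hc'', expU_le_expI]
          intro i
          rw [hg]
          simp only [setQ]
          split_ifs <;> omega
        · rw [hc'', expU_le_expI]
          intro i
          rw [hg]
          simp only [setU]
          split_ifs <;> omega
        · rw [hc'', expU_le]
          intro i
          rw [Finsupp.sup_apply, expU_apply, expU_apply]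
          by_cases hi : i.val = 0
          · have : f i = g i := by
              rw [Fin.ext_iff, hg, if_pos hi]
              have := hc i
              simp only [setQ] at this
              omega
            simp [this]
          · have : f' i = g i := by
              rw [Fin.ext_iff, hg, if_neg hi]
              have := hc' i
              simp only [setU] at this
              omega
            simp [this]) b hb
    exact hor.resolve_left fun h => not_le_q F hF hm b h
  · refine F.lcm2 _ _ ?_ b hb
    intro c hc
    obtain ⟨f, hf, hcf⟩ := hF.gen c
    rw [hcf] at hc ⊢
    rw [expU_le_expI]
    have h := hgen f hc
    intro i
    rcases h i with h' | h'
    · exact h'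
    · exfalso
      have hv := hxs.1
      have hu := hxs.2
      simp only [setV, setU] at hv hu
      have h1 := h ⟨1, by omega⟩
      have h1' : (f ⟨1, by omega⟩).val = 2 := by
        rcases h1 with h1 | h1
        · simp only [setU] at h1
          omega
        · exact absurd (congrArg Fin.val h1.1).symm hx1
      have hle : (⟨1, by omega⟩ : Fin m) ≤ i := by
        rw [h'.1, Fin.le_def]
        simp only
        omega
      have := hf hle
      rw [Fin.le_def, h1', h'.2] at this
      omega

end comb

/-- for `m, n ≥ 3` and `P = [m]` a chain, the second homological
shift ideal `HS₂(L(P,n))` of the co-letterplace ideal `L(P,n)` (generated by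
`∏ᵢ X_{i,f(i)}` over weakly increasing `f : [m] → [n]`) is not quasi-linear;
in particular it has no linear resolution (every minimal multigraded free
resolution of it has some shift of total degree different from `(m+2)+t`). -/
theorem stmt5 (K : Type) [Field K] (m n : ℕ) (hm : 3 ≤ m) (hn : 3 ≤ n)
    (Res : MinMGFreeRes K (Fin m × Fin n)
      (Ideal.span {p : MvPolynomial (Fin m × Fin n) K |
        ∃ f : Fin m → Fin n, Monotone f ∧ p = ∏ i : Fin m, X (i, f i)})) :
    ¬ QuasiLinear (Ideal.span {p : MvPolynomial (Fin m × Fin n) K |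
        ∃ b : Res.B 2, p = monomial (Res.deg 2 b) (1 : K)}) ∧
    ∀ Res2 : MinMGFreeRes K (Fin m × Fin n)
      (Ideal.span {p : MvPolynomial (Fin m × Fin n) K |
        ∃ b : Res.B 2, p = monomial (Res.deg 2 b) (1 : K)}),
      ¬ (∀ (t : ℕ) (b : Res2.B t),
          ((Res2.deg t b).sum fun _ e => e) = (m + 2) + t) := by
  classical
  obtain ⟨F, hFR⟩ := exists_frame Res
  have hF := genFrame F
  set D : Set (Fin m × Fin n →₀ ℕ) := {e | ∃ b : Res.B 2, Res.deg 2 b = e} with hD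
  have hJ : ∀ a, monomial a (1 : K) ∈ Ideal.span {p : MvPolynomial (Fin m × Fin n) K |
      ∃ b : Res.B 2, p = monomial (Res.deg 2 b) (1 : K)} ↔ ∃ e ∈ D, e ≤ a := by
    intro a
    rw [← mem_span_mon (K := K)]
    have : {p : MvPolynomial (Fin m × Fin n) K |
        ∃ b : Res.B 2, p = monomial (Res.deg 2 b) (1 : K)} =
        {p | ∃ e, e ∈ D ∧ p = monomial e (1 : K)} := by
      ext p
      constructor
      · rintro ⟨b, hb⟩
        exact ⟨_, ⟨b, rfl⟩, hb⟩
      · rintro ⟨_, ⟨b, rfl⟩, hb⟩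
        exact ⟨b, hb⟩
    rw [this]
  have hDF : ∀ b, F.deg 2 b ∈ D := fun b => (hFR 2 _).1 ⟨b, rfl⟩
  have hx : ∃ x, (expI setU : Fin m × Fin n →₀ ℕ) x < expI setV x := by
    refine ⟨(⟨1, by omega⟩, ⟨0, by omega⟩), ?_⟩
    simp [expI_apply, setU, setV]
  have HB : ∀ e ∈ D, ∀ x, (expI setU : Fin m × Fin n →₀ ℕ) x < expI setV x →
      e ≤ expI setU + Finsupp.single x 1 → e = expI setU := by
    intro e he x hx hle
    obtain ⟨b, rfl⟩ := (hFR 2 e).2 he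
    exact main_B F hF hm hn b x hx hle
  have hu : (expI setU : Fin m × Fin n →₀ ℕ) ∈ D := by
    obtain ⟨b, hb⟩ := exists_row F hF hn 0 (by omega) setU (by
      intro i j
      simp only [setU]
      omega)
    rw [← le_u F hF hm b hb]
    exact hDF b
  have hv : ∃ e ∈ D, e ≤ expI setV := by
    obtain ⟨b, hb⟩ := exists_row F hF hn 2 (by omega) setV (by
      intro i j
      simp only [setV])
    exact ⟨_, hDF b, hb⟩
  have huv : ¬ (expI setU : Fin m × Fin n →₀ ℕ) ≤ expI setV := by
    intro h
    have := h (⟨0, by omega⟩, ⟨1, by omega⟩)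
    simp [expI_apply, setU, setV] at this
  refine ⟨not_quasiLinear _ D hJ _ _ hu hv huv hx HB, ?_⟩
  intro Res2 hlin
  obtain ⟨F2, hF2⟩ := exists_frame Res2
  have hl : ∀ t b, ((F2.deg t b).sum fun _ e => e) = (m + 2) + t := by
    intro t b
    obtain ⟨b', hb'⟩ := (hF2 t _).1 ⟨b, rfl⟩
    rw [← hb']
    exact hlin t b'
  exact not_linear _ D hJ _ _ hu hv huv hx HB F2 (m + 2) (hl 0) (hl 1)
end

section
/- Under the standing conventions, the complex F of Construction 4.1 (free modules F_t with basis the symbols [K_1,...,K_m] satisfying: ∅ ≠ K_i ⊆ A_i, |K_1|+⋯+|K_m| = m + t, max(K_i) ≤ min(K_j) for p_i < p_j, (max K_1,...,max K_m) ∈ 𝔄; differentials as in the construction) is a minimal multigraded free resolution of the generalized co-letterplace ideal L(𝔄). -/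
open MvPolynomial

noncomputable section

variable (K : Type) [Field K] (m n : ℕ)

/-- Ambient free module with basis all symbols `[K₁,…,Kₘ]`. -/
abbrev SymbMod := (Fin m → Finset (Fin n)) →₀ MvPolynomial (Fin m × Fin n) K

/-- Sign count for the differential. -/
def sgn (Kf : Fin m → Finset (Fin n)) (i : Fin m) (a : Fin n) : ℕ :=
  (∑ j ∈ Finset.univ.filter (fun j : Fin m => j < i), (Kf j).card) +
    ((Kf i).filter (fun b => b < a)).card

/-- The differential of Construction 4.1, on the ambient free module. -/
def Dmap : SymbMod K m n →ₗ[MvPolynomial (Fin m × Fin n) K] SymbMod K m n :=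
  Finsupp.linearCombination (MvPolynomial (Fin m × Fin n) K)
    (fun Kf : Fin m → Finset (Fin n) =>
      ∑ i : Fin m, ∑ a ∈ Kf i,
        if 2 ≤ (Kf i).card then
          ((-1 : MvPolynomial (Fin m × Fin n) K) ^ (sgn m n Kf i a) *
              X (i, a)) •
            Finsupp.single (Function.update Kf i ((Kf i).erase a))
              (1 : MvPolynomial (Fin m × Fin n) K)
        else 0)

/-- Augmentation `d₀ : [K₁,…,Kₘ] ↦ X_{p₁,K₁}⋯X_{pₘ,Kₘ}`. -/
def Emap : SymbMod K m n →ₗ[MvPolynomial (Fin m × Fin n) K]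
    MvPolynomial (Fin m × Fin n) K :=
  Finsupp.linearCombination (MvPolynomial (Fin m × Fin n) K)
    (fun Kf : Fin m → Finset (Fin n) =>
      ∏ i : Fin m, ∏ a ∈ Kf i, (X (i, a) : MvPolynomial (Fin m × Fin n) K))

/-- The four conditions on a basis symbol `[K₁,…,Kₘ]` at homological degree `t`. -/
def Cond (r : Fin m → Fin m → Prop) (A : Fin m → Finset (Fin n))
    (𝔄 : Set (Fin m → Fin n)) (t : ℕ) (Kf : Fin m → Finset (Fin n)) : Prop :=
  (∀ i, Kf i ⊆ A i) ∧ (∀ i, (Kf i).Nonempty) ∧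
    (∑ i, (Kf i).card) = m + t ∧
    (∀ i j, r i j → i ≠ j → ∀ a ∈ Kf i, ∀ b ∈ Kf j, a ≤ b) ∧
    (∃ g ∈ 𝔄, ∀ i, g i ∈ Kf i ∧ ∀ a ∈ Kf i, a ≤ g i)

/-- `F t`: the free direct summand spanned by the admissible symbols at degree `t`. -/
def FMod (r : Fin m → Fin m → Prop) (A : Fin m → Finset (Fin n))
    (𝔄 : Set (Fin m → Fin n)) (t : ℕ) :
    Submodule (MvPolynomial (Fin m × Fin n) K) (SymbMod K m n) :=
  Submodule.span _ {x | ∃ Kf, Cond m n r A 𝔄 t Kf ∧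
    x = Finsupp.single Kf (1 : MvPolynomial (Fin m × Fin n) K)}

section helpers

/-- Symbols. -/
abbrev Symb (m n : ℕ) := Fin m → Finset (Fin n)

theorem sgn_update_self (Kf : Symb m n) (i : Fin m) (L : Finset (Fin n)) (a : Fin n) :
    sgn m n (Function.update Kf i L) i a =
      (∑ j ∈ Finset.univ.filter (fun j : Fin m => j < i), (Kf j).card) +
        (L.filter (fun b => b < a)).card := by
  unfold sgn
  rw [Function.update_self]
  congr 1
  apply Finset.sum_congr rfl
  intro j hj
  rw [Function.update_of_ne (by simp at hj; exact hj.ne)]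

theorem sgn_update_ne (Kf : Symb m n) (i j : Fin m) (hij : j ≠ i) (L : Finset (Fin n))
    (a : Fin n) :
    sgn m n (Function.update Kf i L) j a + (if i < j then (Kf i).card else 0) =
      sgn m n Kf j a + (if i < j then L.card else 0) := by
  unfold sgn
  rw [Function.update_of_ne hij]
  split_ifs with h
  · have hm : i ∈ Finset.univ.filter (fun l : Fin m => l < j) := by simpa using h
    rw [← Finset.add_sum_erase _ _ hm, ← Finset.add_sum_erase _ (fun l => (Kf l).card) hm,
      Function.update_self]
    have : ∑ l ∈ (Finset.univ.filter (fun l : Fin m => l < j)).erase i,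
        (Function.update Kf i L l).card =
        ∑ l ∈ (Finset.univ.filter (fun l : Fin m => l < j)).erase i, (Kf l).card := by
      apply Finset.sum_congr rfl
      intro l hl
      rw [Function.update_of_ne (Finset.ne_of_mem_erase hl)]
    rw [this]
    omega
  · congr 2
    apply Finset.sum_congr rfl
    intro l hl
    rw [Function.update_of_ne]
    rintro rfl
    simp at hl
    exact h hl

/-- i-th component of the dehomogenised differential on a basis symbol. -/
def dB (j : Fin m) (Kf : Symb m n) : Symb m n →₀ K :=
  ∑ a ∈ Kf j, if 2 ≤ (Kf j).card then
    Finsupp.single (Function.update Kf j ((Kf j).erase a)) ((-1 : K) ^ (sgn m n Kf j a)) else 0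

/-- Component of the dehomogenised differential. -/
def dC (j : Fin m) : (Symb m n →₀ K) →ₗ[K] (Symb m n →₀ K) :=
  Finsupp.linearCombination K (dB K m n j)

/-- Dehomogenised differential. -/
def dD : (Symb m n →₀ K) →ₗ[K] (Symb m n →₀ K) := ∑ j, dC K m n j

/-- projection on a basis symbol -/
def eB (i : Fin m) (c : Fin n) (Kf : Symb m n) : Symb m n →₀ K :=
  if (Kf i).card = 1 then Finsupp.single (Function.update Kf i {c}) 1 else 0

/-- projection -/
def eC (i : Fin m) (c : Fin n) : (Symb m n →₀ K) →ₗ[K] (Symb m n →₀ K) :=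
  Finsupp.linearCombination K (eB K m n i c)

/-- homotopy on a basis symbol -/
def hB (i : Fin m) (c : Fin n) (Kf : Symb m n) : Symb m n →₀ K :=
  if c ∈ Kf i then 0 else
    Finsupp.single (Function.update Kf i (insert c (Kf i))) ((-1 : K) ^ (sgn m n Kf i c))

/-- homotopy -/
def hC (i : Fin m) (c : Fin n) : (Symb m n →₀ K) →ₗ[K] (Symb m n →₀ K) :=
  Finsupp.linearCombination K (hB K m n i c)

@[simp] theorem dC_single (j : Fin m) (Kf : Symb m n) (a : K) :
    dC K m n j (Finsupp.single Kf a) = a • dB K m n j Kf := by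
  simp [dC, Finsupp.linearCombination_single]

@[simp] theorem eC_single (i : Fin m) (c : Fin n) (Kf : Symb m n) (a : K) :
    eC K m n i c (Finsupp.single Kf a) = a • eB K m n i c Kf := by
  simp [eC, Finsupp.linearCombination_single]

@[simp] theorem hC_single (i : Fin m) (c : Fin n) (Kf : Symb m n) (a : K) :
    hC K m n i c (Finsupp.single Kf a) = a • hB K m n i c Kf := by
  simp [hC, Finsupp.linearCombination_single]

theorem de_ne (i j : Fin m) (hij : j ≠ i) (c : Fin n) (Kf : Symb m n) :
    dC K m n j (eB K m n i c Kf) = eC K m n i c (dB K m n j Kf) := by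
  unfold eB dB
  by_cases h1 : (Kf i).card = 1
  · rw [if_pos h1]
    simp only [map_sum, dC_single, one_smul, dB, Function.update_of_ne hij]
    apply Finset.sum_congr rfl
    intro a ha
    split_ifs with h2
    · rw [eC_single, eB, Function.update_of_ne hij.symm, if_pos h1, Finsupp.smul_single,
        Function.update_comm hij]
      have := sgn_update_ne m n Kf i j hij {c} a
      simp only [h1, Finset.card_singleton, add_left_inj] at this
      rw [this]; simp
    · simp
  · rw [if_neg h1, map_zero, map_sum]
    symm
    apply Finset.sum_eq_zero
    intro a ha
    split_ifs with h2
    · rw [eC_single, eB, Function.update_of_ne hij.symm, if_neg h1, smul_zero]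
    · simp

theorem de_eq (i : Fin m) (c : Fin n) (Kf : Symb m n) :
    dC K m n i (eB K m n i c Kf) = eC K m n i c (dB K m n i Kf) := by
  have hl : dC K m n i (eB K m n i c Kf) = 0 := by
    unfold eB
    split_ifs with h
    · simp [dB]
    · simp
  rw [hl, dB, map_sum]
  symm
  by_cases h2 : (Kf i).card = 2
  · obtain ⟨x, y, hxy, hx⟩ := Finset.card_eq_two.1 h2
    rw [hx, Finset.sum_pair hxy]
    have e1 : ({x, y} : Finset (Fin n)).erase x = {y} := by
      ext z; simp; grind
    have e2 : ({x, y} : Finset (Fin n)).erase y = {x} := by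
      ext z; simp; grind
    rw [if_pos (by rw [Finset.card_pair hxy]), if_pos (by rw [Finset.card_pair hxy]), eC_single,
      eC_single, e1, e2]
    simp only [eB, Function.update_self, Finset.card_singleton, if_true, Function.update_idem]
    rw [← add_smul]
    convert zero_smul K _
    unfold sgn
    rw [hx]
    rcases lt_or_gt_of_ne hxy with h | h
    · have f1 : (({x, y} : Finset (Fin n)).filter (fun b => b < x)) = ∅ := by
        ext z; simp; grind
      have f2 : (({x, y} : Finset (Fin n)).filter (fun b => b < y)) = {x} := by
        ext z; simp; grind
      rw [f1, f2]; simp [pow_succ]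
    · have f1 : (({x, y} : Finset (Fin n)).filter (fun b => b < x)) = {y} := by
        ext z; simp; grind
      have f2 : (({x, y} : Finset (Fin n)).filter (fun b => b < y)) = ∅ := by
        ext z; simp; grind
      rw [f1, f2]; simp [pow_succ]
  · apply Finset.sum_eq_zero
    intro a ha
    split_ifs with h
    · rw [eC_single, eB, Function.update_self, Finset.card_erase_of_mem ha, if_neg (by omega),
        smul_zero]
    · simp

theorem de_comm (i : Fin m) (c : Fin n) (x : Symb m n →₀ K) :
    dD K m n (eC K m n i c x) = eC K m n i c (dD K m n x) := by
  induction x using Finsupp.induction_linear with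
  | zero => simp
  | add x y hx hy => simp [hx, hy]
  | single Kf a =>
    simp only [dD, LinearMap.sum_apply, map_sum]
    apply Finset.sum_congr rfl
    intro j _
    by_cases h : j = i
    · subst h; simp [de_eq]
    · simp [de_ne K m n i j h]

theorem dh_ne (i j : Fin m) (hij : j ≠ i) (c : Fin n) (Kf : Symb m n) :
    dC K m n j (hB K m n i c Kf) + hC K m n i c (dB K m n j Kf) = 0 := by
  unfold hB dB
  by_cases h1 : c ∈ Kf i
  · rw [if_pos h1, map_zero, map_sum, zero_add]
    apply Finset.sum_eq_zero
    intro a ha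
    split_ifs with h2
    · rw [hC_single, hB, Function.update_of_ne hij.symm, if_pos h1, smul_zero]
    · simp
  · rw [if_neg h1]
    simp only [map_sum, dC_single, dB, Function.update_of_ne hij, Finset.smul_sum]
    rw [← Finset.sum_add_distrib]
    apply Finset.sum_eq_zero
    intro a ha
    split_ifs with h2
    · rw [hC_single, hB, Function.update_of_ne hij.symm, if_neg h1, Finsupp.smul_single,
        Finsupp.smul_single, Function.update_comm hij, ← Finsupp.single_add]
      rw [Finsupp.single_eq_zero]
      have s1 := sgn_update_ne m n Kf i j hij (insert c (Kf i)) a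
      have s2 := sgn_update_ne m n Kf j i hij.symm ((Kf j).erase a) c
      rw [Finset.card_insert_of_notMem h1] at s1
      rw [Finset.card_erase_of_mem ha] at s2
      rw [smul_eq_mul, smul_eq_mul, ← pow_add, ← pow_add]
      rcases lt_or_gt_of_ne hij with h | h
      · rw [if_neg (by exact not_lt.2 h.le), if_neg (by exact not_lt.2 h.le)] at s1
        rw [if_pos h, if_pos h] at s2
        have : sgn m n Kf i c = sgn m n (Function.update Kf j ((Kf j).erase a)) i c + 1 := by
          omega
        rw [this, show sgn m n (Function.update Kf i (insert c (Kf i))) j a = sgn m n Kf j a by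
          omega, pow_add, pow_add, pow_add]
        ring
      · rw [if_neg (by exact not_lt.2 h.le), if_neg (by exact not_lt.2 h.le)] at s2
        rw [if_pos h, if_pos h] at s1
        have : sgn m n (Function.update Kf i (insert c (Kf i))) j a = sgn m n Kf j a + 1 := by
          omega
        rw [this, show sgn m n (Function.update Kf j ((Kf j).erase a)) i c = sgn m n Kf i c by
          omega, pow_add, pow_add, pow_add]
        ring
    · simp

theorem dh_eq (i : Fin m) (c : Fin n) (Kf : Symb m n) (hne : (Kf i).Nonempty) :
    dC K m n i (hB K m n i c Kf) + hC K m n i c (dB K m n i Kf) =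
      Finsupp.single Kf 1 - eB K m n i c Kf := by
  set p := ∑ j ∈ Finset.univ.filter (fun j : Fin m => j < i), (Kf j).card with hp
  by_cases h1 : c ∈ Kf i
  · rw [hB, if_pos h1, map_zero, zero_add, dB, map_sum, Finset.sum_eq_single_of_mem c h1]
    · by_cases h2 : 2 ≤ (Kf i).card
      · rw [if_pos h2, hC_single, hB, Function.update_self, if_neg (Finset.notMem_erase _ _),
          eB, if_neg (by omega), sub_zero, Finset.insert_erase h1, Function.update_idem,
          Function.update_eq_self, Finsupp.smul_single, sgn_update_self, sgn, smul_eq_mul,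
          ← pow_add]
        congr 1
        have : ((Kf i).erase c).filter (fun b => b < c) = (Kf i).filter (fun b => b < c) := by
          ext z; simp; grind
        rw [this]
        exact Even.neg_one_pow ⟨_, rfl⟩
      · have h3 : (Kf i).card = 1 := by have := hne.card_pos; omega
        rw [if_neg h2, map_zero, eB, if_pos h3]
        have : Kf i = {c} := by
          obtain ⟨b, hb⟩ := Finset.card_eq_one.1 h3
          rw [hb] at h1 ⊢; simp at h1; rw [h1]
        rw [← this, Function.update_eq_self, sub_self]
    · intro b hb hbc
      split_ifs
      · rw [hC_single, hB, Function.update_self, if_pos, smul_zero]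
        exact Finset.mem_erase.2 ⟨hbc.symm, h1⟩
      · simp
  · have hcard : 2 ≤ (insert c (Kf i)).card := by
      rw [Finset.card_insert_of_notMem h1]; have := hne.card_pos; omega
    have key : ∀ a ∈ Kf i,
        (-1 : K) ^ (sgn m n Kf i c) * (-1) ^ (p + ((insert c (Kf i)).filter (· < a)).card) =
        - ((-1 : K) ^ (sgn m n Kf i a) * (-1) ^ (p + (((Kf i).erase a).filter (· < c)).card)) := by
      intro a ha
      have hac : a ≠ c := by rintro rfl; exact h1 ha
      unfold sgn
      rw [← hp]
      rcases lt_or_gt_of_ne hac with h | h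
      · have f1 : (insert c (Kf i)).filter (· < a) = (Kf i).filter (· < a) := by
          ext z; simp; grind
        have f2 : (Kf i).filter (· < c) = insert a (((Kf i).erase a).filter (· < c)) := by
          ext z; simp; grind
        rw [f1, f2, Finset.card_insert_of_notMem (by simp)]
        ring
      · have f1 : (insert c (Kf i)).filter (· < a) = insert c ((Kf i).filter (· < a)) := by
          ext z; simp; grind
        have f2 : (Kf i).filter (· < c) = (((Kf i).erase a).filter (· < c)) := by
          ext z; simp; grind
        rw [f1, f2, Finset.card_insert_of_notMem (by simp [h1])]
        ring
    have hd : dC K m n i (hB K m n i c Kf) = Finsupp.single Kf 1 + ∑ a ∈ Kf i,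
        Finsupp.single (Function.update Kf i ((insert c (Kf i)).erase a))
        (- ((-1 : K) ^ (sgn m n Kf i a) * (-1) ^ (p + (((Kf i).erase a).filter (· < c)).card))) := by
      rw [hB, if_neg h1, dC_single, dB, Function.update_self, Finset.sum_insert h1, smul_add,
        if_pos hcard, Function.update_idem, Finset.erase_insert h1, Function.update_eq_self,
        Finsupp.smul_single, sgn_update_self]
      congr 1
      · congr 1
        have : (insert c (Kf i)).filter (· < c) = (Kf i).filter (· < c) := by
          ext z; simp; grind
        rw [this, sgn, smul_eq_mul, ← pow_add]
        exact Even.neg_one_pow ⟨_, rfl⟩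
      · rw [Finset.smul_sum]
        apply Finset.sum_congr rfl
        intro a ha
        rw [if_pos hcard, Function.update_idem, Finsupp.smul_single, sgn_update_self, ← key a ha,
          smul_eq_mul]
    rw [hd]
    by_cases h2 : 2 ≤ (Kf i).card
    · rw [eB, if_neg (by omega), sub_zero, dB, map_sum, add_assoc, ← Finset.sum_add_distrib]
      convert add_zero _
      apply Finset.sum_eq_zero
      intro a ha
      have hac : a ≠ c := by rintro rfl; exact h1 ha
      rw [if_pos h2, hC_single, hB, Function.update_self, if_neg (by simp [h1]),
        Function.update_idem, Finsupp.smul_single, sgn_update_self,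
        Finset.erase_insert_of_ne hac.symm, ← Finsupp.single_add]
      simp [hp]
    · have h3 : (Kf i).card = 1 := by have := hne.card_pos; omega
      obtain ⟨b, hb⟩ := Finset.card_eq_one.1 h3
      have hbc : b ≠ c := by rintro rfl; rw [hb] at h1; simp at h1
      rw [eB, if_pos h3, dB]
      simp only [if_neg h2, Finset.sum_const_zero, map_zero, add_zero]
      rw [sub_eq_add_neg, hb, Finset.sum_singleton, ← Finsupp.single_neg]
      have e1 : (insert c {b} : Finset (Fin n)).erase b = {c} := by
        ext z; simp; grind
      rw [e1]
      congr 2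
      have e2 : (({b} : Finset (Fin n)).erase b).filter (· < c) = ∅ := by
        ext z; simp
      have e3 : ({b} : Finset (Fin n)).filter (· < b) = ∅ := by
        ext z; simp; grind
      rw [sgn, hb, e2, e3, ← hp, Finset.card_empty, ← pow_add]
      rw [Even.neg_one_pow ⟨_, rfl⟩]

theorem dh_all (i : Fin m) (c : Fin n) (x : Symb m n →₀ K)
    (hx : ∀ Kf ∈ x.support, (Kf i).Nonempty) :
    dD K m n (hC K m n i c x) + hC K m n i c (dD K m n x) = x - eC K m n i c x := by
  have hB' : ∀ Kf : Symb m n, (Kf i).Nonempty → ∀ a : K,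
      dD K m n (hC K m n i c (Finsupp.single Kf a)) + hC K m n i c (dD K m n (Finsupp.single Kf a))
        = Finsupp.single Kf a - eC K m n i c (Finsupp.single Kf a) := by
    intro Kf hKf a
    simp only [dD, LinearMap.sum_apply, map_sum]
    rw [← Finset.sum_add_distrib, Finset.sum_eq_single i]
    · have := congrArg (fun z => a • z) (dh_eq K m n i c Kf hKf)
      simpa [smul_add, smul_sub] using this
    · intro j _ hj
      have := congrArg (fun z => a • z) (dh_ne K m n i j hj c Kf)
      simpa [smul_add, smul_sub] using this
    · simp
  conv_lhs => rw [← Finsupp.sum_single x]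
  conv_rhs => rw [← Finsupp.sum_single x]
  unfold Finsupp.sum
  simp only [map_sum]
  rw [← Finset.sum_add_distrib, ← Finset.sum_sub_distrib]
  apply Finset.sum_congr rfl
  intro Kf hKf
  exact hB' Kf (hx Kf hKf) _

end helpers

section core

/-- sum of coefficients -/
def epsC : (Symb m n →₀ K) →ₗ[K] K := Finsupp.linearCombination K (fun _ => (1 : K))

variable {m n}

theorem exists_max_mem {r : Fin m → Fin m → Prop} {A : Fin m → Finset (Fin n)}
    {𝔄 : Set (Fin m → Fin n)}
    (hdown : ∀ f ∈ 𝔄, ∀ g : Fin m → Fin n, (∀ i, g i ∈ A i) →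
      (∀ i j, r i j → g i ≤ g j) → (∀ i, g i ≤ f i) → g ∈ 𝔄)
    {Kf : Symb m n} (hKA : ∀ i, Kf i ⊆ A i) (hne : ∀ i, (Kf i).Nonempty)
    (hord : ∀ i j, r i j → i ≠ j → ∀ a ∈ Kf i, ∀ b ∈ Kf j, a ≤ b)
    {g : Fin m → Fin n} (hg : g ∈ 𝔄) (hgK : ∀ i, ∀ a ∈ Kf i, a ≤ g i) :
    ∃ g ∈ 𝔄, ∀ i, g i ∈ Kf i ∧ ∀ a ∈ Kf i, a ≤ g i := by
  refine ⟨fun i => (Kf i).max' (hne i), ?_, fun i => ⟨Finset.max'_mem _ _, fun a ha =>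
    Finset.le_max' _ _ ha⟩⟩
  apply hdown g hg
  · exact fun i => hKA i (Finset.max'_mem _ _)
  · intro i j hij
    by_cases h : i = j
    · subst h; exact le_rfl
    · exact hord i j hij h _ (Finset.max'_mem _ _) _ (Finset.max'_mem _ _)
  · exact fun i => hgK i _ (Finset.max'_mem _ _)

theorem exists_f0 {r : Fin m → Fin m → Prop} {A U : Fin m → Finset (Fin n)}
    {𝔄 : Set (Fin m → Fin n)} (hUA : ∀ i, U i ⊆ A i)
    (hsub : ∀ f ∈ 𝔄, (∀ i, f i ∈ A i) ∧ (∀ i j, r i j → f i ≤ f j))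
    (hdown : ∀ f ∈ 𝔄, ∀ g : Fin m → Fin n, (∀ i, g i ∈ A i) →
      (∀ i j, r i j → g i ≤ g j) → (∀ i, g i ≤ f i) → g ∈ 𝔄)
    {t : ℕ} {K0 : Symb m n} (hK0 : Cond m n r U 𝔄 t K0) :
    ∃ f0 ∈ 𝔄, (∀ i, f0 i ∈ U i) ∧ ∀ t Kf, Cond m n r U 𝔄 t Kf → ∀ i, ∀ a ∈ Kf i, f0 i ≤ a := by
  classical
  let T : Finset (Fin m → Fin n) := Finset.univ.filter (fun f => f ∈ 𝔄 ∧ ∀ i, f i ∈ U i)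
  have hT : T.Nonempty := by
    obtain ⟨h1, h2, h3, h4, g, hg, hg'⟩ := hK0
    exact ⟨g, by simp only [T, Finset.mem_filter, Finset.mem_univ, true_and]; exact
      ⟨hg, fun i => h1 i (hg' i).1⟩⟩
  have hmT : ∀ f, f ∈ T ↔ f ∈ 𝔄 ∧ ∀ i, f i ∈ U i := by intro f; simp [T]
  have hatt : ∀ i, ∃ f ∈ T, T.inf' hT (fun f => f i) = f i := fun i =>
    Finset.exists_mem_eq_inf' hT (fun f => f i)
  have hle : ∀ i, ∀ f ∈ T, T.inf' hT (fun f => f i) ≤ f i := fun i f hf =>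
    Finset.inf'_le (fun f : Fin m → Fin n => f i) hf
  have hU : ∀ i, T.inf' hT (fun f => f i) ∈ U i := by
    intro i
    obtain ⟨f, hf, he⟩ := hatt i
    rw [he]; exact ((hmT f).1 hf).2 i
  refine ⟨fun i => T.inf' hT (fun f => f i), ?_, hU, ?_⟩
  · obtain ⟨f, hf⟩ := hT
    apply hdown f ((hmT f).1 hf).1
    · exact fun i => hUA i (hU i)
    · intro i j hij
      obtain ⟨f, hf, he⟩ := hatt j
      simp only [he]
      exact (hle i f hf).trans ((hsub f ((hmT f).1 hf).1).2 i j hij)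
    · exact fun i => hle i f hf
  · intro t Kf ⟨h1, h2, h3, h4, g, hg, hg'⟩ i a ha
    have : Function.update g i a ∈ T := by
      rw [hmT]
      have hU' : ∀ j, Function.update g i a j ∈ U j := by
        intro j
        by_cases h : j = i
        · subst h; simpa using h1 j ha
        · rw [Function.update_of_ne h]; exact h1 j (hg' j).1
      refine ⟨hdown g hg _ (fun j => hUA j (hU' j)) ?_ ?_, hU'⟩
      · intro j k hjk
        by_cases hj : j = i
        · by_cases hk : k = i
          · subst hj; subst hk; exact le_rfl
          · subst hj
            rw [Function.update_self, Function.update_of_ne hk]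
            exact h4 j k hjk (Ne.symm hk) a ha _ (hg' k).1
        · by_cases hk : k = i
          · subst hk
            rw [Function.update_self, Function.update_of_ne hj]
            exact h4 j k hjk hj _ (hg' j).1 a ha
          · rw [Function.update_of_ne hj, Function.update_of_ne hk]
            exact (hsub g hg).2 j k hjk
      · intro j
        by_cases hj : j = i
        · subst hj; rw [Function.update_self]; exact (hg' j).2 a ha
        · rw [Function.update_of_ne hj]
    have := hle i _ this
    rwa [Function.update_self] at this

theorem card_update (Kf : Symb m n) (i : Fin m) (L : Finset (Fin n)) :
    ∑ j, (Function.update Kf i L j).card + (Kf i).card = ∑ j, (Kf j).card + L.card := by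
  rw [← Finset.add_sum_erase _ _ (Finset.mem_univ i),
    ← Finset.add_sum_erase _ (fun l => (Kf l).card) (Finset.mem_univ i), Function.update_self]
  have : ∑ l ∈ Finset.univ.erase i, (Function.update Kf i L l).card =
      ∑ l ∈ Finset.univ.erase i, (Kf l).card := by
    apply Finset.sum_congr rfl
    intro l hl
    rw [Function.update_of_ne (Finset.ne_of_mem_erase hl)]
  rw [this]; omega

/-- Replacing one slot by a smaller-bounded set keeps the admissibility conditions. -/
theorem cond_update {r : Fin m → Fin m → Prop} {A U : Fin m → Finset (Fin n)}
    {𝔄 : Set (Fin m → Fin n)} (hUA : ∀ i, U i ⊆ A i)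
    (hdown : ∀ f ∈ 𝔄, ∀ g : Fin m → Fin n, (∀ i, g i ∈ A i) →
      (∀ i j, r i j → g i ≤ g j) → (∀ i, g i ≤ f i) → g ∈ 𝔄)
    {t s : ℕ} {Kf : Symb m n} (hK : Cond m n r U 𝔄 t Kf) (i : Fin m) (L : Finset (Fin n))
    (hLU : L ⊆ U i) (hLne : L.Nonempty) (hcard : t + L.card = s + (Kf i).card)
    (hlo : ∀ j, r j i → j ≠ i → ∀ a ∈ Kf j, ∀ b ∈ L, a ≤ b)
    (hup : ∀ b ∈ L, ∃ a ∈ Kf i, b ≤ a) :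
    Cond m n r U 𝔄 s (Function.update Kf i L) := by
  obtain ⟨h1, h2, h3, h4, g, hg, hg'⟩ := hK
  have h1' : ∀ j, Function.update Kf i L j ⊆ U j := by
    intro j
    by_cases h : j = i
    · subst h; simpa using hLU
    · rw [Function.update_of_ne h]; exact h1 j
  have h2' : ∀ j, (Function.update Kf i L j).Nonempty := by
    intro j
    by_cases h : j = i
    · subst h; simpa using hLne
    · rw [Function.update_of_ne h]; exact h2 j
  have h4' : ∀ j k, r j k → j ≠ k → ∀ a ∈ Function.update Kf i L j,
      ∀ b ∈ Function.update Kf i L k, a ≤ b := by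
    intro j k hjk hne a ha b hb
    by_cases hj : j = i
    · subst hj
      rw [Function.update_self] at ha
      rw [Function.update_of_ne hne.symm] at hb
      obtain ⟨c, hc, hac⟩ := hup a ha
      exact hac.trans (h4 j k hjk hne c hc b hb)
    · rw [Function.update_of_ne hj] at ha
      by_cases hk : k = i
      · subst hk
        rw [Function.update_self] at hb
        exact hlo j hjk hne a ha b hb
      · rw [Function.update_of_ne hk] at hb
        exact h4 j k hjk hne a ha b hb
  refine ⟨h1', h2', ?_, h4', ?_⟩
  · have := card_update Kf i L
    omega
  · refine exists_max_mem hdown (fun j => (h1' j).trans (hUA j)) h2' h4' hg ?_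
    intro j a ha
    by_cases h : j = i
    · subst h
      rw [Function.update_self] at ha
      obtain ⟨c, hc, hac⟩ := hup a ha
      exact hac.trans ((hg' j).2 c hc)
    · rw [Function.update_of_ne h] at ha; exact (hg' j).2 a ha

theorem lc_mem (S T : Set (Symb m n)) (F : Symb m n → (Symb m n →₀ K))
    (hF : ∀ Kf ∈ S, F Kf ∈ Finsupp.supported K K T) (x : Symb m n →₀ K)
    (hx : x ∈ Finsupp.supported K K S) :
    Finsupp.linearCombination K F x ∈ Finsupp.supported K K T := by
  rw [Finsupp.linearCombination_apply]
  apply Submodule.sum_mem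
  intro Kf hKf
  exact Submodule.smul_mem _ _ (hF Kf (hx hKf))

theorem card_one_of_cond_zero {r : Fin m → Fin m → Prop} {U : Fin m → Finset (Fin n)}
    {𝔄 : Set (Fin m → Fin n)} {Kf : Symb m n} (h : Cond m n r U 𝔄 0 Kf) (i : Fin m) :
    (Kf i).card = 1 := by
  obtain ⟨h1, h2, h3, -⟩ := h
  have hs : ∑ i : Fin m, 1 = ∑ i, (Kf i).card := by simp [h3]
  exact ((Finset.sum_eq_sum_iff_of_le (fun j _ => (h2 j).card_pos)).1 hs i (Finset.mem_univ _)).symm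

theorem core_step {r : Fin m → Fin m → Prop}
    (hcompat : ∀ i j, r i j → i ≤ j) {A U : Fin m → Finset (Fin n)}
    {𝔄 : Set (Fin m → Fin n)} (hUA : ∀ i, U i ⊆ A i)
    (hsub : ∀ f ∈ 𝔄, (∀ i, f i ∈ A i) ∧ (∀ i j, r i j → f i ≤ f j))
    (hdown : ∀ f ∈ 𝔄, ∀ g : Fin m → Fin n, (∀ i, g i ∈ A i) →
      (∀ i j, r i j → g i ≤ g j) → (∀ i, g i ≤ f i) → g ∈ 𝔄)
    (t : ℕ) (f0 : Fin m → Fin n) (hf0 : f0 ∈ 𝔄) (hf0U : ∀ i, f0 i ∈ U i)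
    (hf0le : ∀ t Kf, Cond m n r U 𝔄 t Kf → ∀ i, ∀ a ∈ Kf i, f0 i ≤ a)
    (d k : ℕ) (hdk : d + k = m) : ∀ x : Symb m n →₀ K,
    x ∈ Finsupp.supported K K {Kf | Cond m n r U 𝔄 t Kf ∧ ∀ j : Fin m, j.val < k → Kf j = {f0 j}} →
    dD K m n x = 0 → (t = 0 → epsC K m n x = 0) →
    ∃ y ∈ Finsupp.supported K K {Kf | Cond m n r U 𝔄 (t + 1) Kf}, dD K m n y = x := by
  induction d generalizing k with
  | zero =>
    intro x hx hdx hex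
    refine ⟨0, Submodule.zero_mem _, ?_⟩
    rw [map_zero]
    have hall : ∀ Kf ∈ x.support, Cond m n r U 𝔄 t Kf ∧ Kf = fun j => {f0 j} := by
      intro Kf hKf
      exact ⟨(hx hKf).1, funext fun j => (hx hKf).2 j (by omega)⟩
    have hxs : x = Finsupp.single (fun j => {f0 j}) (x (fun j => {f0 j})) := by
      rw [Finsupp.eq_single_iff]
      refine ⟨fun Kf hKf => ?_, rfl⟩
      simpa using (hall Kf hKf).2
    by_cases ht : t = 0
    · have := hex ht
      rw [hxs] at this
      simp only [epsC, Finsupp.linearCombination_single, smul_eq_mul, mul_one] at this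
      rw [hxs, this, Finsupp.single_zero]
    · symm
      rw [← Finsupp.support_eq_empty, Finset.eq_empty_iff_forall_notMem]
      intro Kf hKf
      obtain ⟨⟨-, -, h3, -⟩, rfl⟩ := hall Kf hKf
      simp at h3
      exact ht h3
  | succ d ih =>
    intro x hx hdx hex
    let i : Fin m := ⟨k, by omega⟩
    have hne : ∀ Kf ∈ x.support, (Kf i).Nonempty := fun Kf hKf => (hx hKf).1.2.1 i
    have hh := dh_all K m n i (f0 i) x hne
    rw [hdx, map_zero, add_zero] at hh
    have hlo : ∀ Kf : Symb m n, (∀ j : Fin m, j.val < k → Kf j = {f0 j}) →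
        ∀ j, r j i → j ≠ i → ∀ a ∈ Kf j, a ≤ f0 i := by
      intro Kf hK j hj hji a ha
      have hlt : j < i := lt_of_le_of_ne (hcompat j i hj) hji
      rw [hK j hlt] at ha
      rw [Finset.mem_singleton.1 ha]
      exact (hsub f0 hf0).2 j i hj
    have h1 : eC K m n i (f0 i) x ∈ Finsupp.supported K K
        {Kf | Cond m n r U 𝔄 t Kf ∧ ∀ j : Fin m, j.val < k + 1 → Kf j = {f0 j}} := by
      apply lc_mem K _ _ _ _ x hx
      rintro Kf ⟨hK, hK'⟩
      unfold eB
      split_ifs with h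
      · apply Finsupp.single_mem_supported
        refine ⟨cond_update hUA hdown hK i {f0 i} (by simpa using hf0U i) (by simp) (by simp [h])
          ?_ ?_, ?_⟩
        · intro j hj hji a ha b hb
          rw [Finset.mem_singleton.1 hb]
          exact hlo Kf hK' j hj hji a ha
        · intro b hb
          rw [Finset.mem_singleton.1 hb]
          obtain ⟨a, ha⟩ := hK.2.1 i
          exact ⟨a, ha, hf0le t Kf hK i a ha⟩
        · intro j hj
          by_cases hji : j = i
          · subst hji; simp
          · rw [Function.update_of_ne hji]
            apply hK'
            have : j.val ≠ k := fun h => hji (Fin.ext h)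
            omega
      · exact Submodule.zero_mem _
    have h2 : hC K m n i (f0 i) x ∈ Finsupp.supported K K {Kf | Cond m n r U 𝔄 (t + 1) Kf} := by
      apply lc_mem K _ _ _ _ x hx
      rintro Kf ⟨hK, hK'⟩
      unfold hB
      split_ifs with h
      · exact Submodule.zero_mem _
      · apply Finsupp.single_mem_supported
        refine cond_update hUA hdown hK i _ ?_ (by simp) ?_ ?_ ?_
        · exact Finset.insert_subset (hf0U i) (hK.1 i)
        · rw [Finset.card_insert_of_notMem h]; omega
        · intro j hj hji a ha b hb
          rcases Finset.mem_insert.1 hb with rfl | hb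
          · exact hlo Kf hK' j hj hji a ha
          · exact hK.2.2.2.1 j i hj hji a ha b hb
        · intro b hb
          rcases Finset.mem_insert.1 hb with rfl | hb
          · obtain ⟨a, ha⟩ := hK.2.1 i
            exact ⟨a, ha, hf0le t Kf hK i a ha⟩
          · exact ⟨b, hb, le_rfl⟩
    have h3 : dD K m n (eC K m n i (f0 i) x) = 0 := by
      rw [de_comm, hdx, map_zero]
    have h4 : t = 0 → epsC K m n (eC K m n i (f0 i) x) = 0 := by
      intro ht
      subst ht
      rw [← hex rfl]
      conv_lhs => rw [← Finsupp.sum_single x]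
      conv_rhs => rw [← Finsupp.sum_single x]
      unfold Finsupp.sum
      simp only [map_sum]
      apply Finset.sum_congr rfl
      intro Kf hKf
      rw [eC_single, eB, if_pos (card_one_of_cond_zero (hx hKf).1 i)]
      simp [epsC]
    obtain ⟨y, hy, hyd⟩ := ih (k + 1) (by omega) _ h1 h3 h4
    refine ⟨hC K m n i (f0 i) x + y, Submodule.add_mem _ h2 hy, ?_⟩
    rw [map_add, hh, hyd]; abel

theorem core {r : Fin m → Fin m → Prop}
    (hcompat : ∀ i j, r i j → i ≤ j) {A U : Fin m → Finset (Fin n)}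
    {𝔄 : Set (Fin m → Fin n)} (hUA : ∀ i, U i ⊆ A i)
    (hsub : ∀ f ∈ 𝔄, (∀ i, f i ∈ A i) ∧ (∀ i j, r i j → f i ≤ f j))
    (hdown : ∀ f ∈ 𝔄, ∀ g : Fin m → Fin n, (∀ i, g i ∈ A i) →
      (∀ i j, r i j → g i ≤ g j) → (∀ i, g i ≤ f i) → g ∈ 𝔄)
    (t : ℕ) (x : Symb m n →₀ K)
    (hx : x ∈ Finsupp.supported K K {Kf | Cond m n r U 𝔄 t Kf})
    (hd : dD K m n x = 0) (he : t = 0 → epsC K m n x = 0) :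
    ∃ y ∈ Finsupp.supported K K {Kf | Cond m n r U 𝔄 (t + 1) Kf}, dD K m n y = x := by
  by_cases hx0 : x = 0
  · exact ⟨0, Submodule.zero_mem _, by rw [hx0, map_zero]⟩
  · obtain ⟨K0, hK0⟩ := Finsupp.support_nonempty_iff.2 hx0
    obtain ⟨f0, h1, h2, h3⟩ := exists_f0 hUA hsub hdown (hx hK0)
    refine core_step K hcompat hUA hsub hdown t f0 h1 h2 h3 m 0 rfl x ?_ hd he
    intro Kf hKf
    exact ⟨hx hKf, fun j hj => absurd hj (Nat.not_lt_zero _)⟩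

end core

section homog

/-- multidegree of a symbol -/
def dg {m n : ℕ} (Kf : Symb m n) : Fin m × Fin n →₀ ℕ :=
  ∑ i, ∑ a ∈ Kf i, Finsupp.single (i, a) 1

variable {m n}

theorem dg_apply (Kf : Symb m n) (i : Fin m) (a : Fin n) :
    dg Kf (i, a) = if a ∈ Kf i then 1 else 0 := by
  classical
  unfold dg
  rw [Finsupp.finsetSum_apply, Finset.sum_eq_single i]
  · rw [Finsupp.finsetSum_apply]
    simp [Finsupp.single_apply]
  · intro j _ hj
    rw [Finsupp.finsetSum_apply]
    apply Finset.sum_eq_zero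
    intro b _
    simp [Finsupp.single_apply, hj]
  · simp

theorem dg_erase (Kf : Symb m n) (i : Fin m) (a : Fin n) (ha : a ∈ Kf i) :
    Finsupp.single (i, a) 1 + dg (Function.update Kf i ((Kf i).erase a)) = dg Kf := by
  ext ⟨j, b⟩
  rw [Finsupp.add_apply, dg_apply, dg_apply, Finsupp.single_apply]
  by_cases hj : j = i
  · subst hj
    rw [Function.update_self]
    by_cases hb : b = a
    · subst hb; simp [ha]
    · simp [hb, Ne.symm hb]
  · rw [Function.update_of_ne hj]
    simp [Ne.symm hj]

/-- dehomogenisation at multidegree `u` -/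
def deh (u : Fin m × Fin n →₀ ℕ) : SymbMod K m n →ₗ[K] (Symb m n →₀ K) :=
  Finsupp.lsum K (fun Kf : Symb m n => (Finsupp.lsingle Kf) ∘ₗ
    (open Classical in if dg Kf ≤ u then MvPolynomial.lcoeff K (u - dg Kf) else 0))

/-- homogenisation at multidegree `u` -/
def hom (u : Fin m × Fin n →₀ ℕ) : (Symb m n →₀ K) →ₗ[K] SymbMod K m n :=
  Finsupp.lsum K (fun Kf : Symb m n =>
    (Finsupp.lsingle Kf) ∘ₗ (MvPolynomial.monomial (u - dg Kf)))

open Classical in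
theorem deh_single (u v : Fin m × Fin n →₀ ℕ) (Kf : Symb m n) (c : K) :
    deh K u (Finsupp.single Kf (monomial v c)) =
      if v + dg Kf = u then Finsupp.single Kf c else 0 := by
  unfold deh
  rw [Finsupp.lsum_single]
  by_cases h : v + dg Kf = u
  · subst h
    simp
  · rw [if_neg h]
    split_ifs with h2
    · have : v ≠ u - dg Kf := by
        rintro rfl
        exact h (tsub_add_cancel_of_le h2)
      simp [MvPolynomial.coeff_monomial, this]
    · simp

theorem hom_single (u : Fin m × Fin n →₀ ℕ) (Kf : Symb m n) (c : K) :
    hom K u (Finsupp.single Kf c) = Finsupp.single Kf (monomial (u - dg Kf) c) := by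
  simp [hom]

theorem neg_one_pow_smul_monomial (s : ℕ) (p : Fin m × Fin n) (v : Fin m × Fin n →₀ ℕ) (c : K) :
    monomial v c * ((-1 : MvPolynomial (Fin m × Fin n) K) ^ s * X p) =
      monomial (v + Finsupp.single p 1) (c * (-1) ^ s) := by
  have : (-1 : MvPolynomial (Fin m × Fin n) K) ^ s = C ((-1) ^ s) := by simp
  rw [this, X, C_mul_monomial, monomial_mul, mul_one]

theorem Dmap_single (v : Fin m × Fin n →₀ ℕ) (Kf : Symb m n) (c : K) :
    Dmap K m n (Finsupp.single Kf (monomial v c)) =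
      ∑ i, ∑ a ∈ Kf i, if 2 ≤ (Kf i).card then
        Finsupp.single (Function.update Kf i ((Kf i).erase a))
          (monomial (v + Finsupp.single (i, a) 1) (c * (-1) ^ (sgn m n Kf i a))) else 0 := by
  unfold Dmap
  rw [Finsupp.linearCombination_single, Finset.smul_sum]
  apply Finset.sum_congr rfl; intro i _
  rw [Finset.smul_sum]
  apply Finset.sum_congr rfl; intro a _
  split_ifs
  · rw [smul_smul, Finsupp.smul_single, smul_eq_mul, mul_one, neg_one_pow_smul_monomial]
  · simp

theorem dD_single (Kf : Symb m n) (c : K) :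
    dD K m n (Finsupp.single Kf c) = ∑ i, ∑ a ∈ Kf i, if 2 ≤ (Kf i).card then
        Finsupp.single (Function.update Kf i ((Kf i).erase a)) (c * (-1) ^ (sgn m n Kf i a))
        else 0 := by
  simp only [dD, LinearMap.sum_apply, dC_single, dB, Finset.smul_sum]
  apply Finset.sum_congr rfl; intro i _
  apply Finset.sum_congr rfl; intro a _
  split_ifs <;> simp

theorem symb_induction {p : SymbMod K m n → Prop} (x : SymbMod K m n)
    (h0 : p 0) (hadd : ∀ x y, p x → p y → p (x + y))
    (hs : ∀ Kf v c, p (Finsupp.single Kf (monomial v c))) : p x := by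
  induction x using Finsupp.induction_linear with
  | zero => exact h0
  | add x y hx hy => exact hadd x y hx hy
  | single Kf q =>
    induction q using MvPolynomial.induction_on' with
    | monomial v c => exact hs Kf v c
    | add q q' h h' => rw [Finsupp.single_add]; exact hadd _ _ h h'

theorem deh_D (u : Fin m × Fin n →₀ ℕ) (x : SymbMod K m n) :
    deh K u (Dmap K m n x) = dD K m n (deh K u x) := by
  classical
  induction x using symb_induction with
  | h0 => simp
  | hadd x y hx hy => simp [hx, hy]
  | hs Kf v c =>
    rw [Dmap_single, deh_single]
    simp only [map_sum]
    have key : ∀ i, ∀ a ∈ Kf i, (v + Finsupp.single (i, a) 1 +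
        dg (Function.update Kf i ((Kf i).erase a)) = u ↔ v + dg Kf = u) := by
      intro i a ha
      rw [add_assoc, dg_erase Kf i a ha]
    by_cases h : v + dg Kf = u
    · rw [if_pos h, dD_single]
      apply Finset.sum_congr rfl; intro i _
      apply Finset.sum_congr rfl; intro a ha
      split_ifs
      · rw [deh_single, if_pos ((key i a ha).2 h)]
      · simp
    · rw [if_neg h, map_zero]
      apply Finset.sum_eq_zero; intro i _
      apply Finset.sum_eq_zero; intro a ha
      split_ifs
      · rw [deh_single, if_neg (fun h' => h ((key i a ha).1 h'))]
      · simp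

theorem hom_D (u : Fin m × Fin n →₀ ℕ) (z : Symb m n →₀ K)
    (hz : ∀ Kf ∈ z.support, dg Kf ≤ u) :
    Dmap K m n (hom K u z) = hom K u (dD K m n z) := by
  conv_lhs => rw [← Finsupp.sum_single z]
  conv_rhs => rw [← Finsupp.sum_single z]
  unfold Finsupp.sum
  simp only [map_sum]
  apply Finset.sum_congr rfl
  intro Kf hKf
  rw [hom_single, Dmap_single, dD_single]
  simp only [map_sum]
  apply Finset.sum_congr rfl; intro i _
  apply Finset.sum_congr rfl; intro a ha
  split_ifs
  · rw [hom_single]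
    have h1 := hz Kf hKf
    have h2 := dg_erase Kf i a ha
    suffices hs : u - dg Kf + Finsupp.single (i, a) 1 =
        u - dg (Function.update Kf i ((Kf i).erase a)) by rw [hs]
    ext q
    have h1q := h1 q
    have h2q := DFunLike.congr_fun h2 q
    simp only [Finsupp.add_apply, Finsupp.tsub_apply] at h2q ⊢
    omega
  · simp

theorem hom_deh (x : SymbMod K m n) : ∃ W : Finset (Fin m × Fin n →₀ ℕ), ∀ W', W ⊆ W' →
    ∑ u ∈ W', hom K u (deh K u x) = x := by
  classical
  induction x using symb_induction with
  | h0 => exact ⟨∅, by simp⟩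
  | hadd x y hx hy =>
    obtain ⟨W1, h1⟩ := hx
    obtain ⟨W2, h2⟩ := hy
    refine ⟨W1 ∪ W2, fun W' hW => ?_⟩
    simp only [map_add, Finset.sum_add_distrib]
    rw [h1 W' (Finset.union_subset_left hW), h2 W' (Finset.union_subset_right hW)]
  | hs Kf v c =>
    refine ⟨{v + dg Kf}, fun W' hW => ?_⟩
    rw [Finset.sum_eq_single_of_mem (v + dg Kf) (hW (Finset.mem_singleton_self _))]
    · rw [deh_single, if_pos rfl, hom_single, add_tsub_cancel_right]
    · intro u _ hu
      rw [deh_single, if_neg (Ne.symm hu), map_zero]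

theorem dg_monomial (Kf : Symb m n) :
    (∏ i : Fin m, ∏ a ∈ Kf i, (X (i, a) : MvPolynomial (Fin m × Fin n) K)) =
      monomial (dg Kf) 1 := by
  unfold dg
  rw [monomial_sum_one]
  apply Finset.prod_congr rfl; intro i _
  rw [monomial_sum_one]
  rfl

theorem eps_deh (u : Fin m × Fin n →₀ ℕ) (x : SymbMod K m n) :
    epsC K m n (deh K u x) = coeff u (Emap K m n x) := by
  classical
  induction x using symb_induction with
  | h0 => simp
  | hadd x y hx hy => simp [hx, hy]
  | hs Kf v c =>
    rw [deh_single, Emap, Finsupp.linearCombination_single, dg_monomial, smul_eq_mul,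
      monomial_mul, mul_one, coeff_monomial]
    split_ifs <;> simp [epsC]

theorem mem_FMod {r : Fin m → Fin m → Prop} {A : Fin m → Finset (Fin n)}
    {𝔄 : Set (Fin m → Fin n)} {t : ℕ} {x : SymbMod K m n} :
    x ∈ FMod K m n r A 𝔄 t ↔ ∀ Kf, x Kf ≠ 0 → Cond m n r A 𝔄 t Kf := by
  have : FMod K m n r A 𝔄 t = Finsupp.supported (MvPolynomial (Fin m × Fin n) K)
      (MvPolynomial (Fin m × Fin n) K) {Kf | Cond m n r A 𝔄 t Kf} := by
    rw [Finsupp.supported_eq_span_single, FMod]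
    congr 1
    ext x
    simp [eq_comm]
  rw [this, Finsupp.mem_supported]
  constructor
  · intro h Kf hKf
    exact h (by simpa using hKf)
  · intro h Kf hKf
    exact h Kf (by simpa using hKf)

open Classical in
theorem deh_apply (u : Fin m × Fin n →₀ ℕ) (x : SymbMod K m n) (Kf : Symb m n) :
    deh K u x Kf = if dg Kf ≤ u then coeff (u - dg Kf) (x Kf) else 0 := by
  induction x using Finsupp.induction_linear with
  | zero => simp
  | add x y hx hy => rw [map_add, Finsupp.add_apply, hx, hy]; split_ifs <;> simp
  | single Kg q =>
    unfold deh
    rw [Finsupp.lsum_single]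
    by_cases h : Kg = Kf
    · subst h
      split_ifs <;> simp
    · simp [Finsupp.single_apply, h]

theorem exactness {r : Fin m → Fin m → Prop}
    (hcompat : ∀ i j, r i j → i ≤ j) {A : Fin m → Finset (Fin n)}
    {𝔄 : Set (Fin m → Fin n)}
    (hsub : ∀ f ∈ 𝔄, (∀ i, f i ∈ A i) ∧ (∀ i j, r i j → f i ≤ f j))
    (hdown : ∀ f ∈ 𝔄, ∀ g : Fin m → Fin n, (∀ i, g i ∈ A i) →
      (∀ i j, r i j → g i ≤ g j) → (∀ i, g i ≤ f i) → g ∈ 𝔄)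
    (t : ℕ) (x : SymbMod K m n) (hx : x ∈ FMod K m n r A 𝔄 t)
    (hd : t ≠ 0 → Dmap K m n x = 0) (he : t = 0 → Emap K m n x = 0) :
    ∃ y ∈ FMod K m n r A 𝔄 (t + 1), Dmap K m n y = x := by
  classical
  have hd' : Dmap K m n x = 0 := by
    by_cases ht : t = 0
    · subst ht
      rw [Dmap, Finsupp.linearCombination_apply]
      apply Finset.sum_eq_zero
      intro Kf hKf
      have hc := (mem_FMod K).1 hx Kf (by simpa using hKf)
      convert smul_zero _
      apply Finset.sum_eq_zero; intro i _
      apply Finset.sum_eq_zero; intro a _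
      rw [if_neg]
      rw [card_one_of_cond_zero hc i]; omega
    · exact hd ht
  rw [mem_FMod] at hx
  have main : ∀ u : Fin m × Fin n →₀ ℕ, ∃ y ∈ FMod K m n r A 𝔄 (t + 1),
      Dmap K m n y = hom K u (deh K u x) := by
    intro u
    let U : Fin m → Finset (Fin n) := fun i => (A i).filter (fun a => u (i, a) ≠ 0)
    have hUA : ∀ i, U i ⊆ A i := fun i => Finset.filter_subset _ _
    obtain ⟨z, hz, hzd⟩ := core K hcompat hUA hsub hdown t (deh K u x) (by
      intro Kf hKf
      rw [Finset.mem_coe, Finsupp.mem_support_iff, deh_apply] at hKf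
      have hle : dg Kf ≤ u := by
        by_contra h
        exact hKf (if_neg h)
      have hxK : x Kf ≠ 0 := by
        intro h
        apply hKf
        rw [h]; simp
      obtain ⟨h1, h2⟩ := hx Kf hxK
      refine ⟨fun i a ha => Finset.mem_filter.2 ⟨h1 i ha, ?_⟩, h2⟩
      have := hle (i, a)
      rw [dg_apply, if_pos ha] at this
      omega)
      (by rw [← deh_D, hd', map_zero])
      (by intro ht; rw [eps_deh, he ht]; simp)
    have hzle : ∀ Kf ∈ z.support, dg Kf ≤ u := by
      intro Kf hKf
      obtain ⟨h1, -⟩ := hz hKf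
      rintro ⟨i, a⟩
      rw [dg_apply]
      split_ifs with h
      · have := (Finset.mem_filter.1 (h1 i h)).2
        omega
      · exact Nat.zero_le _
    refine ⟨hom K u z, ?_, by rw [hom_D K u z hzle, hzd]⟩
    rw [← Finsupp.sum_single z]
    unfold Finsupp.sum
    rw [map_sum]
    apply Submodule.sum_mem
    intro Kf hKf
    rw [hom_single, mem_FMod]
    intro Kg hKg
    have : Kf = Kg := by
      by_contra h
      exact hKg (by simp [Finsupp.single_apply, h])
    subst this
    obtain ⟨h1, h2⟩ := hz hKf
    exact ⟨fun i => (h1 i).trans (hUA i), h2⟩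
  choose y hy hyd using main
  obtain ⟨W, hW⟩ := hom_deh K x
  refine ⟨∑ u ∈ W, y u, Submodule.sum_mem _ (fun u _ => hy u), ?_⟩
  rw [map_sum]
  exact (Finset.sum_congr rfl (fun u _ => hyd u)).trans (hW W (subset_refl _))

end homog

/-- the complex of Construction 4.1 is a minimal multigraded free
resolution of `L(𝔄)`: the differential maps `F (t+1)` into `F t`, the
augmentation maps `F 0` onto `L(𝔄)`, the sequence is exact at every `F t`,
and it is minimal (all entries of the differential have zero constant term). -/
theorem stmt7 (r : Fin m → Fin m → Prop)
    (hrefl : ∀ i, r i i) (htrans : ∀ i j k, r i j → r j k → r i k)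
    (hcompat : ∀ i j, r i j → i ≤ j)
    (A : Fin m → Finset (Fin n)) (hA : ∀ i, (A i).Nonempty)
    (𝔄 : Set (Fin m → Fin n)) (h𝔄ne : 𝔄.Nonempty)
    (hsub : ∀ f ∈ 𝔄, (∀ i, f i ∈ A i) ∧ (∀ i j, r i j → f i ≤ f j))
    (hdown : ∀ f ∈ 𝔄, ∀ g : Fin m → Fin n, (∀ i, g i ∈ A i) →
      (∀ i j, r i j → g i ≤ g j) → (∀ i, g i ≤ f i) → g ∈ 𝔄) :
    -- the differential respects the admissible spans
    (∀ t : ℕ, ∀ x ∈ FMod K m n r A 𝔄 (t + 1), Dmap K m n x ∈ FMod K m n r A 𝔄 t) ∧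
    -- the augmentation maps `F 0` onto `L(𝔄)`
    (Submodule.map (Emap K m n) (FMod K m n r A 𝔄 0) =
      Ideal.span ((fun f : Fin m → Fin n =>
        ∏ i : Fin m, (X (i, f i) : MvPolynomial (Fin m × Fin n) K)) '' 𝔄)) ∧
    -- exactness at `F 0`
    (∀ x ∈ FMod K m n r A 𝔄 0, Emap K m n x = 0 →
      ∃ y ∈ FMod K m n r A 𝔄 1, Dmap K m n y = x) ∧
    -- exactness at `F (t+1)` (including injectivity at the top)
    (∀ t : ℕ, ∀ x ∈ FMod K m n r A 𝔄 (t + 1), Dmap K m n x = 0 →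
      ∃ y ∈ FMod K m n r A 𝔄 (t + 2), Dmap K m n y = x) ∧
    -- minimality
    (∀ Kf Kg : Fin m → Finset (Fin n),
      constantCoeff ((Dmap K m n
        (Finsupp.single Kf (1 : MvPolynomial (Fin m × Fin n) K))) Kg) = 0) := by
  refine ⟨?_, ?_, ?_, ?_, ?_⟩
  · intro t x hx
    unfold FMod at hx
    induction hx using Submodule.span_induction with
    | zero => simp
    | add x y _ _ hx hy => rw [map_add]; exact Submodule.add_mem _ hx hy
    | smul a x _ hx => rw [map_smul]; exact Submodule.smul_mem _ _ hx
    | mem x hx =>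
      obtain ⟨Kf, hK, rfl⟩ := hx
      rw [Dmap, Finsupp.linearCombination_single, one_smul]
      apply Submodule.sum_mem; intro i _
      apply Submodule.sum_mem; intro a ha
      split_ifs with h2
      · apply Submodule.smul_mem
        apply Submodule.subset_span
        refine ⟨_, ?_, rfl⟩
        have hc := Finset.card_erase_of_mem ha
        refine cond_update (fun _ => subset_refl _) hdown hK i _
          ((Finset.erase_subset _ _).trans (hK.1 i)) ?_ ?_ ?_ ?_
        · rw [← Finset.card_pos]; omega
        · omega
        · intro j hj hji c hc b hb
          exact hK.2.2.2.1 j i hj hji c hc b (Finset.mem_of_mem_erase hb)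
        · intro b hb
          exact ⟨b, Finset.mem_of_mem_erase hb, le_rfl⟩
      · exact Submodule.zero_mem _
  · rw [FMod, Submodule.map_span, Ideal.span]
    congr 1
    ext q
    simp only [Set.mem_image, Set.mem_ofPred_eq]
    constructor
    · rintro ⟨_, ⟨Kf, hK, rfl⟩, rfl⟩
      obtain ⟨g, hg, hg'⟩ := hK.2.2.2.2
      refine ⟨g, hg, ?_⟩
      rw [Emap, Finsupp.linearCombination_single, one_smul]
      apply Finset.prod_congr rfl; intro i _
      have : Kf i = {g i} := by
        obtain ⟨b, hb⟩ := Finset.card_eq_one.1 (card_one_of_cond_zero hK i)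
        have := (hg' i).1
        rw [hb, Finset.mem_singleton] at this
        rw [hb, this]
      rw [this, Finset.prod_singleton]
    · rintro ⟨f, hf, rfl⟩
      refine ⟨_, ⟨fun i => {f i}, ⟨?_, ?_, ?_, ?_, f, hf, ?_⟩, rfl⟩, ?_⟩
      · intro i; simpa using (hsub f hf).1 i
      · intro i; simp
      · simp
      · intro i j hij _ a ha b hb
        rw [Finset.mem_singleton.1 ha, Finset.mem_singleton.1 hb]
        exact (hsub f hf).2 i j hij
      · intro i; simp
      · simp [Emap]
  · intro x hx he
    exact exactness K hcompat hsub hdown 0 x hx (fun h => absurd rfl h) (fun _ => he)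
  · intro t x hx hd
    exact exactness K hcompat hsub hdown (t + 1) x hx (fun _ => hd)
      (fun h => absurd h (Nat.succ_ne_zero t))
  · intro Kf Kg
    rw [Dmap, Finsupp.linearCombination_single, one_smul, Finsupp.finsetSum_apply, map_sum]
    apply Finset.sum_eq_zero; intro i _
    rw [Finsupp.finsetSum_apply, map_sum]
    apply Finset.sum_eq_zero; intro a _
    split_ifs
    · rw [Finsupp.smul_apply, smul_eq_mul, map_mul, map_mul, constantCoeff_X, mul_zero, zero_mul]
    · simp

end
end
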